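/- arXiv:1008.2368 — 3 statements merged into one kernel-verified Lean document; each statement's English description precedes it below -/
import Mathlib

section
/- Let q be a prime power, d a positive integer, and f ∈ F_q[x,y,z] a nonzero homogeneous polynomial of degree d that is not a product of d linear forms with coefficients in F_q (i.e., the plane curve C = V(f) is not a union of d F_q-rational lines). Then the number of points [a:b:c] ∈ P²(F_q) with f(a,b,c) = 0 is at most (d-1)q + 2. -/
open MvPolynomial

noncomputable section

/-!
Write `q` for the cardinality of the field. Peeling off linear factors, one reduces to a form `f`
of degree `d` without linear factor; the induction carries along that a curve with exactly
`(d - 1) q + 2` points meets every rational line, so that adjoining a line adds at most `q` points.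

If the curve has a rational singular point, one counts points along the lines through it. Suppose
there is none.

If `d < q`, one may take `f` irreducible. Let `y` be a formal parametrization of the branch at a
rational point `p`. Since `y ^ q` and `p` agree to order `q`, the coefficients of `f(y + T y ^ q)`
behave like those of `f(y + T p)`: if they vanish on the curve below order `r`, the next one
vanishes to order `r + 1` at `p`. As the curve contains no rational line, the first coefficient
which is not a multiple of `f` has some order `0 < r < d`, and Bézout's inequality bounds the number
`N` of points by `N (r + 1) ≤ d (d - r + q r)`, which implies `N ≤ (d - 1) q + 1`.

If `d ≥ q`, one counts incidences between points and lines, a tangent line counting twice at its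
point of contact: every line contributes at most `d`, every point at least `q + 2`.
-/

namespace PlaneCurve

section Pencil

variable {σ F R S : Type*} [CommRing F] [CommRing R] [Algebra F R] [CommRing S] [Algebra F S]

/-- `f(x + T y)` as a polynomial in `T`: the restriction of the form `f` to the line joining the
points `x` and `y`, whose coordinates may lie in any algebra `R` over the base ring. -/
def pencil (x y : σ → R) : MvPolynomial σ F →ₐ[F] Polynomial R :=
  aeval fun i => Polynomial.C (x i) + Polynomial.X * Polynomial.C (y i)

/-- The `k`-th polar form of `f` at the pair `(x, y)`: the coefficient of `T ^ k` in
`f(x + T y)`. -/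
def polar (f : MvPolynomial σ F) (x y : σ → R) (k : ℕ) : R :=
  (pencil x y f).coeff k

lemma map_pencil (φ : R →ₐ[F] S) (x y : σ → R) (f : MvPolynomial σ F) :
    (pencil x y f).map φ = pencil (φ ∘ x) (φ ∘ y) f := by
  change ((Polynomial.mapAlgHom φ).comp (pencil x y)) f = _
  congr 1
  ext i : 1
  simp [pencil]

lemma map_polar (φ : R →ₐ[F] S) (f : MvPolynomial σ F) (x y : σ → R) (k : ℕ) :
    φ (polar f x y k) = polar f (φ ∘ x) (φ ∘ y) k := by
  simp [polar, ← map_pencil]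

lemma eval_pencil (t : R) (x y : σ → R) (f : MvPolynomial σ F) :
    (pencil x y f).eval t = aeval (x + t • y) f := by
  change (((Polynomial.aeval t).restrictScalars F).comp (pencil x y)) f = _
  congr 1
  ext i : 1
  simp [pencil, mul_comm t]

lemma pencil_comp_X_add_C (t : R) (x y : σ → R) (f : MvPolynomial σ F) :
    (pencil x y f).comp (Polynomial.X + Polynomial.C t) = pencil (x + t • y) y f := by
  change (((Polynomial.aeval (Polynomial.X + Polynomial.C t)).restrictScalars F).comp
    (pencil x y)) f = _
  congr 1
  ext i : 1
  simp only [pencil, AlgHom.coe_comp, AlgHom.coe_restrictScalars', Function.comp_apply, aeval_X,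
    map_add, map_mul, Polynomial.aeval_C, Polynomial.aeval_X, Pi.add_apply, Pi.smul_apply,
    smul_eq_mul, Polynomial.algebraMap_eq]
  ring

lemma polar_zero (f : MvPolynomial σ F) (x y : σ → R) : polar f x y 0 = aeval x f := by
  rw [polar, Polynomial.coeff_zero_eq_eval_zero, eval_pencil, zero_smul, add_zero]

/-- The binary form `f(S x + T y)` in the variables `T = X 0` and `S = X 1`, the convention of
`Polynomial.homogenize`. -/
def binaryForm (x y : σ → R) : MvPolynomial σ F →ₐ[F] MvPolynomial (Fin 2) R :=
  aeval fun i => X 1 * C (x i) + X 0 * C (y i)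

lemma aeval_binaryForm [Algebra R S] [IsScalarTower F R S] (a b : S) (x y : σ → R)
    (f : MvPolynomial σ F) :
    aeval ![b, a] (binaryForm x y f) =
      aeval (fun i => a * algebraMap R S (x i) + b * algebraMap R S (y i)) f := by
  change (((aeval ![b, a] : MvPolynomial (Fin 2) R →ₐ[R] S).restrictScalars F).comp
    (binaryForm x y)) f = _
  congr 1
  ext i : 1
  simp [binaryForm]

end Pencil

section Homogeneous

open Finset.HasAntidiagonal (antidiagonal mem_antidiagonal)

variable {σ F R S : Type*} [CommRing F] [CommRing R] [Algebra F R] [CommRing S] [Algebra R S]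
  [Algebra F S] [IsScalarTower F R S] {f : MvPolynomial σ F} {d : ℕ}

lemma isHomogeneous_binaryForm (hf : f.IsHomogeneous d) (x y : σ → R) :
    (binaryForm x y f).IsHomogeneous d := by
  rw [← one_mul d]
  refine hf.aeval _ fun i => IsHomogeneous.add ?_ ?_ <;>
  exact (isHomogeneous_X R _).mul (isHomogeneous_C _ _)

lemma homogenize_pencil (hf : f.IsHomogeneous d) (x y : σ → R) :
    (pencil x y f).homogenize d = binaryForm x y f := by
  refine Polynomial.homogenize_eq_of_isHomogeneous (isHomogeneous_binaryForm hf x y) ?_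
  simp [aeval_binaryForm, pencil]

lemma aeval_add_eq_sum_polar (hf : f.IsHomogeneous d) (x y : σ → R) (a b : S) :
    aeval (fun i => a * algebraMap R S (x i) + b * algebraMap R S (y i)) f =
      ∑ k ∈ antidiagonal d, b ^ k.1 * a ^ k.2 * algebraMap R S (polar f x y k.1) := by
  rw [← aeval_binaryForm, ← homogenize_pencil hf, Polynomial.homogenize, map_sum]
  refine Finset.sum_congr rfl fun k _ => ?_
  simp [aeval_monomial, Finsupp.prod_fintype, polar, mul_comm, Finsupp.update_apply]

lemma natDegree_pencil_le (hf : f.IsHomogeneous d) (x y : σ → R) :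
    (pencil x y f).natDegree ≤ d := by
  have pencil_eq_sum := aeval_add_eq_sum_polar hf x y (1 : Polynomial R) Polynomial.X
  simp only [one_mul, one_pow, mul_one, Polynomial.algebraMap_eq] at pencil_eq_sum
  rw [pencil, pencil_eq_sum]
  refine Polynomial.natDegree_sum_le_of_forall_le _ _ fun k hk => ?_
  rw [mul_comm]
  exact (Polynomial.natDegree_C_mul_X_pow_le _ _).trans
    (Finset.HasAntidiagonal.antidiagonal.fst_le hk)

lemma polar_smul_smul (hf : f.IsHomogeneous d) (a b : R) (x y : σ → R) {k l : ℕ}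
    (hkl : k + l = d) : polar f (a • x) (b • y) k = a ^ l * b ^ k * polar f x y k := by
  have expansion := aeval_add_eq_sum_polar hf x y (Polynomial.C a) (Polynomial.X * Polynomial.C b)
  simp only [Polynomial.algebraMap_eq, mul_pow, ← map_pow, ← map_mul, mul_assoc] at expansion
  rw [polar, pencil]
  simp only [Pi.smul_apply, smul_eq_mul]
  rw [expansion, Polynomial.finsetSum_coeff, Finset.sum_eq_single_of_mem (k, l) (by simpa)]
  · simp only [Polynomial.coeff_mul_C, Polynomial.coeff_X_pow_self]
    ring
  · simp only [mem_antidiagonal, ne_eq, Prod.forall, Prod.mk.injEq, Polynomial.coeff_mul_C,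
      Polynomial.coeff_X_pow]
    intro i j hij hne
    rw [if_neg (by omega), zero_mul]

lemma polar_swap (hf : f.IsHomogeneous d) (x y : σ → R) {k l : ℕ} (hkl : k + l = d) :
    polar f y x l = polar f x y k := by
  have expansion := aeval_add_eq_sum_polar hf x y Polynomial.X (1 : Polynomial R)
  simp only [one_mul, one_pow, Polynomial.algebraMap_eq, add_comm (Polynomial.X * _)] at expansion
  rw [polar, pencil, expansion, Polynomial.finsetSum_coeff,
    Finset.sum_eq_single_of_mem (k, l) (by simpa)]
  · simp
  · simp only [mem_antidiagonal, ne_eq, Prod.forall, Prod.mk.injEq, Polynomial.coeff_mul_C,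
      Polynomial.coeff_X_pow]
    intro i j hij hne
    rw [if_neg (by omega), zero_mul]

lemma polar_eq_aeval (hf : f.IsHomogeneous d) (x y : σ → R) : polar f x y d = aeval y f := by
  rw [← polar_swap hf x y (add_zero d), polar_zero]

end Homogeneous

section Factors

variable {σ F : Type*} [CommRing F] {f g : MvPolynomial σ F} {d : ℕ}

lemma polar_zero_X_of_isHomogeneous (hf : f.IsHomogeneous d) (k : ℕ) :
    polar f (0 : σ → MvPolynomial σ F) X k = if d = k then f else 0 := by
  obtain hk | hk | hk := lt_trichotomy k d
  · have h := polar_smul_smul hf (0 : MvPolynomial σ F) 1 0 X (Nat.add_sub_of_le hk.le)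
    rw [smul_zero, one_smul, zero_pow (by omega), zero_mul, zero_mul] at h
    rw [h, if_neg hk.ne']
  · rw [hk, polar_eq_aeval hf, aeval_X_left_apply, if_pos rfl]
  · rw [if_neg hk.ne]
    exact Polynomial.coeff_eq_zero_of_natDegree_lt ((natDegree_pencil_le hf _ _).trans_lt hk)

lemma polar_zero_X (f : MvPolynomial σ F) (k : ℕ) :
    polar f (0 : σ → MvPolynomial σ F) X k = homogeneousComponent k f := by
  conv_lhs => rw [← sum_homogeneousComponent f]
  rw [polar, map_sum, Polynomial.finsetSum_coeff]
  simp only [← polar.eq_def, polar_zero_X_of_isHomogeneous (homogeneousComponent_isHomogeneous _ f),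
    Finset.sum_ite_eq', Finset.mem_range, ite_eq_left_iff]
  exact fun hk => (homogeneousComponent_eq_zero k f (by omega)).symm

lemma isHomogeneous_iff_polar_zero_X :
    f.IsHomogeneous d ↔ ∀ k ≠ d, polar f (0 : σ → MvPolynomial σ F) X k = 0 := by
  refine ⟨fun hf k hk => by rw [polar_zero_X_of_isHomogeneous hf, if_neg hk.symm],
    fun h s hs => ?_⟩
  by_contra hsd
  refine hs ?_
  replace hsd : s.degree ≠ d := by rwa [Finsupp.degree_eq_weight_one]
  have := congr_arg (coeff s) (h _ hsd)
  rwa [polar_zero_X, coeff_homogeneousComponent, if_pos rfl, coeff_zero] at this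

/-- In `f(T x) g(T x) = T ^ d (f g)(x)` both factors on the left are monomials in `T`. -/
lemma exists_isHomogeneous_of_mul [IsDomain F] (hfg : (f * g).IsHomogeneous d) (h0 : f * g ≠ 0) :
    ∃ m n, m + n = d ∧ f.IsHomogeneous m ∧ g.IsHomogeneous n := by
  let scale : MvPolynomial σ F →ₐ[F] Polynomial (MvPolynomial σ F) := pencil 0 X
  have scale_mul : scale f * scale g = Polynomial.monomial d (f * g) := by
    ext1 k
    rw [← map_mul, Polynomial.coeff_monomial]
    exact polar_zero_X_of_isHomogeneous hfg k
  have hne : scale f * scale g ≠ 0 := by rwa [scale_mul, Ne, Polynomial.monomial_eq_zero_iff]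
  have degree_add := Polynomial.natDegree_mul (left_ne_zero_of_mul hne) (right_ne_zero_of_mul hne)
  have trailing_add :=
    Polynomial.natTrailingDegree_mul (left_ne_zero_of_mul hne) (right_ne_zero_of_mul hne)
  rw [scale_mul, Polynomial.natDegree_monomial_eq _ h0] at degree_add
  rw [scale_mul, Polynomial.natTrailingDegree_monomial h0] at trailing_add
  have hf := Polynomial.natTrailingDegree_le_natDegree (scale f)
  have hg := Polynomial.natTrailingDegree_le_natDegree (scale g)
  have isHomogeneous_of_le {u : MvPolynomial σ F}
      (hu : (scale u).natDegree ≤ (scale u).natTrailingDegree) :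
      u.IsHomogeneous (scale u).natDegree := by
    refine isHomogeneous_iff_polar_zero_X.2 fun k hk => ?_
    obtain hk | hk := lt_or_gt_of_ne hk
    · exact Polynomial.coeff_eq_zero_of_lt_natTrailingDegree (hk.trans_le hu)
    · exact Polynomial.coeff_eq_zero_of_natDegree_lt hk
  exact ⟨_, _, degree_add.symm, isHomogeneous_of_le (by omega), isHomogeneous_of_le (by omega)⟩

lemma isHomogeneous_of_mul_left [IsDomain F] {m n : ℕ} (hf : f.IsHomogeneous m) (hf0 : f ≠ 0)
    (hfg : (f * g).IsHomogeneous (m + n)) : g.IsHomogeneous n := by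
  obtain rfl | hg0 := eq_or_ne g 0
  · exact isHomogeneous_zero σ F n
  obtain ⟨m', n', hd, hf', hg⟩ := exists_isHomogeneous_of_mul hfg (mul_ne_zero hf0 hg0)
  rwa [← add_left_cancel ((hf.inj_right hf' hf0 ▸ hd : m + n' = m + n))]

end Factors

section LinearForms

variable {σ F R : Type*} [Fintype σ] [DecidableEq σ] [Field F] [CommRing R] [Algebra F R]

/-- A linear functional on the space of coordinate vectors, as a polynomial. -/
def linearForm (φ : Module.Dual F (σ → F)) : MvPolynomial σ F :=
  ∑ i, C (φ (Pi.single i 1)) * X i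

lemma isHomogeneous_linearForm (φ : Module.Dual F (σ → F)) : (linearForm φ).IsHomogeneous 1 :=
  IsHomogeneous.sum _ _ _ fun i _ => isHomogeneous_C_mul_X _ i

lemma eval_linearForm (φ : Module.Dual F (σ → F)) (p : σ → F) : eval p (linearForm φ) = φ p := by
  conv_rhs => rw [← (Pi.basisFun F σ).sum_repr p]
  simp [linearForm, mul_comm]

lemma exists_eq_linearForm {f : MvPolynomial σ F} (hf : f.IsHomogeneous 1) :
    ∃ φ : Module.Dual F (σ → F), f = linearForm φ := by
  rw [← mem_homogeneousSubmodule, homogeneousSubmodule_one_eq_span_X,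
    Submodule.mem_span_range_iff_exists_fun] at hf
  obtain ⟨c, rfl⟩ := hf
  refine ⟨(Pi.basisFun F σ).constr F c, Finset.sum_congr rfl fun i _ => ?_⟩
  rw [← Pi.basisFun_apply, Module.Basis.constr_basis, smul_eq_C_mul]

lemma sum_linearForm_coord_mul_C {ι : Type*} [Fintype ι] (b : Module.Basis ι F (σ → F)) (i : σ) :
    ∑ j, linearForm (b.coord j) * C (b j i) = X i := by
  have sum_repr (k : σ) : ∑ j, b.repr (Pi.single k 1) j * b j i = (Pi.single k 1 : σ → F) i := by
    simpa using congr_fun (b.sum_repr (Pi.single k 1)) i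
  simp only [linearForm, Finset.sum_mul, mul_right_comm _ (X _), ← map_mul]
  rw [Finset.sum_comm]
  simp only [← Finset.sum_mul, ← map_sum, Module.Basis.coord_apply, sum_repr, Pi.single_apply]
  simp

/-- The form `f` is not divisible by any form of degree one (in particular it is not zero): the
curve `f = 0` contains no rational line. -/
def HasNoLinearFactor (f : MvPolynomial σ F) : Prop :=
  ∀ l : MvPolynomial σ F, l.IsHomogeneous 1 → ¬ l ∣ f

end LinearForms

section Line

variable {F : Type*} [Field F] {f : MvPolynomial (Fin 3) F} {d : ℕ}

lemma linearForm_coord_dvd_of_pencil_eq_zero (hf : f.IsHomogeneous d)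
    (b : Module.Basis (Fin 3) F (Fin 3 → F)) (h : pencil (b 0) (b 1) f = 0) :
    linearForm (b.coord 2) ∣ f := by
  let mk := Ideal.Quotient.mkₐ F (Ideal.span {linearForm (b.coord 2)})
  have aeval_eq_zero : aeval (fun i => linearForm (b.coord 0) * C (b 0 i) +
      linearForm (b.coord 1) * C (b 1 i)) f = 0 := by
    simpa [polar, h] using aeval_add_eq_sum_polar hf (b 0) (b 1)
      (linearForm (b.coord 0)) (linearForm (b.coord 1))
  have mk_X (i : Fin 3) : mk (X i) = mk (linearForm (b.coord 0) * C (b 0 i) +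
      linearForm (b.coord 1) * C (b 1 i)) := by
    rw [← sum_linearForm_coord_mul_C b i, Fin.sum_univ_three, map_add, add_eq_left]
    exact Ideal.Quotient.eq_zero_iff_mem.2
      (Ideal.mul_mem_right _ _ (Ideal.mem_span_singleton_self _))
  rw [← Ideal.mem_span_singleton, ← Ideal.Quotient.eq_zero_iff_mem]
  change mk f = 0
  rw [← map_zero mk, ← aeval_eq_zero, ← AlgHom.comp_apply]
  congr 1
  ext i : 1
  rw [mk_X, AlgHom.comp_apply, aeval_X]

lemma exists_basis_of_linearIndependent {u v : Fin 3 → F} (h : LinearIndependent F ![u, v]) :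
    ∃ b : Module.Basis (Fin 3) F (Fin 3 → F), b 0 = u ∧ b 1 = v := by
  obtain ⟨w, hw⟩ := exists_linearIndependent_snoc_of_lt_finrank h (by simp)
  refine ⟨basisOfLinearIndependentOfCardEqFinrank hw (by simp), ?_, ?_⟩ <;>
  rw [coe_basisOfLinearIndependentOfCardEqFinrank]
  · exact Fin.snoc_castSucc (α := fun _ => Fin 3 → F) w ![u, v] 0
  · exact Fin.snoc_castSucc (α := fun _ => Fin 3 → F) w ![u, v] 1

lemma HasNoLinearFactor.pencil_ne_zero (hf : f.IsHomogeneous d) (hl : HasNoLinearFactor f)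
    {u v : Fin 3 → F} (huv : LinearIndependent F ![u, v]) : pencil u v f ≠ 0 := by
  obtain ⟨b, rfl, rfl⟩ := exists_basis_of_linearIndependent huv
  exact fun h => hl _ (isHomogeneous_linearForm _) (linearForm_coord_dvd_of_pencil_eq_zero hf b h)

lemma exists_dual_eq_zero_ne_zero {p p' : Fin 3 → F} (h : LinearIndependent F ![p, p']) :
    ∃ φ : Module.Dual F (Fin 3 → F), φ p = 0 ∧ φ p' = 1 := by
  obtain ⟨b, rfl, rfl⟩ := exists_basis_of_linearIndependent h
  exact ⟨b.coord 1, by simp, by simp⟩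

end Line

section Contact

variable {σ F R : Type*} [CommRing F] [CommRing R] [Algebra F R] {f : MvPolynomial σ F} {d r : ℕ}

lemma eq_zero_of_X_pow_dvd_of_X_sub_one_pow_dvd {P : Polynomial R} {m n : ℕ}
    (hdeg : P.degree < (m + n : ℕ)) (hX : Polynomial.X ^ m ∣ P)
    (hX1 : (Polynomial.X - Polynomial.C 1) ^ n ∣ P) : P = 0 := by
  nontriviality R
  have coprime :
      IsCoprime (Polynomial.X ^ m : Polynomial R) ((Polynomial.X - Polynomial.C 1) ^ n) :=
    IsCoprime.pow ⟨1, -1, by simp⟩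
  have monic : (Polynomial.X ^ m * (Polynomial.X - Polynomial.C 1) ^ n : Polynomial R).Monic :=
    (Polynomial.monic_X_pow m).mul ((Polynomial.monic_X_sub_C 1).pow n)
  by_contra hP
  refine monic.not_dvd_of_degree_lt hP ?_ (coprime.mul_dvd hX hX1)
  rwa [((Polynomial.monic_X_sub_C 1).pow n).degree_mul, Polynomial.degree_X_pow,
    Polynomial.degree_eq_natDegree ((Polynomial.monic_X_sub_C 1).pow n).ne_zero,
    (Polynomial.monic_X_sub_C 1).natDegree_pow, Polynomial.natDegree_X_sub_C, mul_one,
    ← Nat.cast_add]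

/-- The polynomial `f(t y + T p)` is divisible by `T ^ (d - r)` because `t` is nilpotent, and by
`(T - 1) ^ r` because of the vanishing polars; its leading coefficient is `f(p) = 0`. -/
lemma pencil_smul_eq_zero (hf : f.IsHomogeneous d) (hr : r ≤ d) {t : R} (ht : t ^ (r + 1) = 0)
    {p y : σ → R} (hp : aeval p f = 0) (h : ∀ k < r, polar f (t • y + p) p k = 0) :
    pencil (t • y) p f = 0 := by
  have X_pow_dvd : Polynomial.X ^ (d - r) ∣ pencil (t • y) p f := by
    refine Polynomial.X_pow_dvd_iff.2 fun k hk => ?_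
    have := polar_smul_smul hf t 1 y p (show k + (d - k) = d by omega)
    rw [one_smul, polar] at this
    rw [this, pow_eq_zero_of_le (by omega) ht, zero_mul, zero_mul]
  have X_sub_one_pow_dvd : (Polynomial.X - Polynomial.C 1) ^ r ∣ pencil (t • y) p f := by
    have comp_eq : (pencil (t • y + p) p f).comp (Polynomial.X - Polynomial.C 1) =
        pencil (t • y) p f := by
      rw [sub_eq_add_neg, ← map_neg, pencil_comp_X_add_C]
      simp
    have := Polynomial.X_pow_dvd_iff.2 h
    rw [← comp_eq]
    simpa [-map_one] using map_dvd (Polynomial.compRingHom (Polynomial.X - Polynomial.C 1)) this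
  refine eq_zero_of_X_pow_dvd_of_X_sub_one_pow_dvd ?_ X_pow_dvd X_sub_one_pow_dvd
  rw [Nat.sub_add_cancel hr, Polynomial.degree_lt_iff_coeff_zero]
  intro k hk
  obtain rfl | hk := hk.eq_or_lt
  · exact (polar_eq_aeval hf _ _).trans hp
  · exact Polynomial.coeff_eq_zero_of_natDegree_lt ((natDegree_pencil_le hf _ _).trans_lt hk)

end Contact

section Frobenius

variable {σ F R : Type*} [Field F] [Fintype F] [CommRing R] [Algebra F R] {f : MvPolynomial σ F}
  {d : ℕ}

/-- The `k`-th polar of `f` at the pair formed by the generic point and its image under the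
`q`-power Frobenius map. -/
def frobeniusPolar (f : MvPolynomial σ F) (k : ℕ) : MvPolynomial σ F :=
  polar f X (X ^ Fintype.card F) k

lemma frobeniusPolar_zero (f : MvPolynomial σ F) : frobeniusPolar f 0 = f := by
  rw [frobeniusPolar, polar_zero, aeval_X_left_apply]

lemma aeval_frobeniusPolar (f : MvPolynomial σ F) (k : ℕ) (x : σ → R) :
    aeval x (frobeniusPolar f k) = polar f x (x ^ Fintype.card F) k := by
  rw [frobeniusPolar, map_polar]
  congr 1 <;> ext i <;> simp

lemma isHomogeneous_frobeniusPolar (hf : f.IsHomogeneous d) {k l : ℕ} (hkl : k + l = d) :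
    (frobeniusPolar f k).IsHomogeneous (l + Fintype.card F * k) := by
  refine isHomogeneous_iff_polar_zero_X.2 fun m hm => ?_
  have scale_eq : pencil 0 X (frobeniusPolar f k) =
      Polynomial.X ^ (l + Fintype.card F * k) * Polynomial.C (frobeniusPolar f k) := by
    have hT := polar_smul_smul hf (Polynomial.X : Polynomial (MvPolynomial σ F))
      (Polynomial.X ^ Fintype.card F) (Polynomial.CAlgHom (R := F) ∘ X)
      (Polynomial.CAlgHom (R := F) ∘ (X ^ Fintype.card F)) hkl
    rw [← map_polar, ← pow_mul, ← pow_add, Polynomial.CAlgHom_apply] at hT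
    rw [frobeniusPolar, map_polar, ← hT]
    congr 1
    · ext1 i
      simp [pencil]
    · ext1 i
      simp [pencil, mul_pow, mul_comm (Polynomial.X ^ _)]
  rw [polar, scale_eq, Polynomial.coeff_mul_C, Polynomial.coeff_X_pow, if_neg hm, zero_mul]

lemma X_pow_card_dvd_pow_card_sub (s : PowerSeries F) :
    PowerSeries.X ^ Fintype.card F ∣
      s ^ Fintype.card F - PowerSeries.C (PowerSeries.constantCoeff s) := by
  set c := PowerSeries.constantCoeff s with hc
  obtain ⟨y, hy⟩ : PowerSeries.X ∣ s - PowerSeries.C c := by simp [PowerSeries.X_dvd_iff, hc]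
  let frobenius := FiniteField.frobeniusAlgHom F (PowerSeries F)
  have frobenius_C : frobenius (PowerSeries.C c) = PowerSeries.C c := frobenius.commutes c
  change _ ∣ frobenius s - _
  rw [← frobenius_C, ← map_sub, hy, map_mul]
  exact dvd_mul_right _ _

end Frobenius

section LocalContact

/-- The ring of `r`-jets of power series. -/
abbrev Jet (F : Type*) [Field F] (r : ℕ) : Type _ :=
  PowerSeries F ⧸ Ideal.span {(PowerSeries.X : PowerSeries F) ^ (r + 1)}

/-- The `r`-jet of a power series. -/
abbrev jet (F : Type*) [Field F] (r : ℕ) : PowerSeries F →ₐ[F] Jet F r :=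
  Ideal.Quotient.mkₐ F _

lemma jet_eq_zero_iff {F : Type*} [Field F] {r : ℕ} {s : PowerSeries F} :
    jet F r s = 0 ↔ PowerSeries.X ^ (r + 1) ∣ s := by
  rw [Ideal.Quotient.mkₐ_eq_mk, Ideal.Quotient.eq_zero_iff_mem, Ideal.mem_span_singleton]

/-- The value at the closed point, as a homomorphism of algebras over the coefficient field. -/
def constCoeff (F : Type*) [Field F] : PowerSeries F →ₐ[F] F :=
  { PowerSeries.constantCoeff with commutes' := fun c => PowerSeries.constantCoeff_C c }

lemma constCoeff_eq_zero_iff {F : Type*} [Field F] {s : PowerSeries F} :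
    constCoeff F s = 0 ↔ PowerSeries.X ∣ s :=
  PowerSeries.X_dvd_iff.symm

lemma constCoeff_comp_algebraMap {σ F : Type*} [Field F] (p : σ → F) :
    constCoeff F ∘ (algebraMap F (PowerSeries F) ∘ p) = p := by
  ext1 i
  exact (constCoeff F).commutes (p i)

lemma constCoeff_comp_X_smul_add {σ F : Type*} [Field F] (y x : σ → PowerSeries F) :
    constCoeff F ∘ ((PowerSeries.X : PowerSeries F) • y + x) = constCoeff F ∘ x := by
  ext1 i
  simp [(constCoeff_eq_zero_iff (F := F)).2 dvd_rfl]

lemma constCoeff_aeval {σ F : Type*} [Field F] (x : σ → PowerSeries F) (g : MvPolynomial σ F) :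
    constCoeff F (aeval x g) = eval (constCoeff F ∘ x) g := by
  rw [← aeval_eq_eval, ← AlgHom.comp_apply]
  congr 1
  ext i : 1
  simp

lemma jet_comp_eq {σ F : Type*} [Field F] {r : ℕ} {p : σ → F} {x y : σ → PowerSeries F}
    (hx : x = (PowerSeries.X : PowerSeries F) • y + algebraMap F _ ∘ p) :
    jet F r ∘ x = jet F r PowerSeries.X • (jet F r ∘ y) + algebraMap F (Jet F r) ∘ p := by
  ext1 i
  simp [hx, ← (jet F r).commutes]

variable {σ F : Type*} [Field F] [Fintype F] {f : MvPolynomial σ F} {d r : ℕ} {p : σ → F}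
  {x y : σ → PowerSeries F}

lemma jet_comp_pow_card (hr : r < Fintype.card F)
    (hx : x = (PowerSeries.X : PowerSeries F) • y + algebraMap F _ ∘ p) :
    jet F r ∘ (x ^ Fintype.card F) = algebraMap F (Jet F r) ∘ p := by
  ext1 i
  have constantCoeff_x : PowerSeries.constantCoeff (x i) = p i := by simp [hx]
  rw [← sub_eq_zero, Function.comp_apply, Function.comp_apply, ← (jet F r).commutes, ← map_sub,
    jet_eq_zero_iff, Pi.pow_apply, ← constantCoeff_x]
  exact (pow_dvd_pow _ hr).trans (X_pow_card_dvd_pow_card_sub (x i))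

lemma pencil_jet_smul_eq_zero (hf : f.IsHomogeneous d) (hrd : r ≤ d) (hrq : r < Fintype.card F)
    (hx : x = (PowerSeries.X : PowerSeries F) • y + algebraMap F _ ∘ p) (hp : eval p f = 0)
    (h : ∀ k < r, aeval x (frobeniusPolar f k) = 0) :
    pencil (jet F r PowerSeries.X • (jet F r ∘ y)) (algebraMap F (Jet F r) ∘ p) f = 0 := by
  refine pencil_smul_eq_zero hf hrd ?_ ?_ fun k hk => ?_
  · rw [← map_pow, jet_eq_zero_iff]
  · rw [aeval_algebraMap_apply, aeval_eq_eval, hp, map_zero]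
  · rw [← jet_comp_eq hx, ← jet_comp_pow_card hrq hx, ← map_polar, ← aeval_frobeniusPolar, h k hk,
      map_zero]

lemma X_pow_dvd_aeval_frobeniusPolar (hf : f.IsHomogeneous d) (hrd : r ≤ d)
    (hrq : r < Fintype.card F)
    (hx : x = (PowerSeries.X : PowerSeries F) • y + algebraMap F _ ∘ p)
    (hp : eval p f = 0) (h : ∀ k < r, aeval x (frobeniusPolar f k) = 0) (k : ℕ) :
    PowerSeries.X ^ (r + 1) ∣ aeval x (frobeniusPolar f k) := by
  have pencil_eq := pencil_comp_X_add_C 1 (jet F r PowerSeries.X • (jet F r ∘ y))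
    (algebraMap F (Jet F r) ∘ p) f
  rw [pencil_jet_smul_eq_zero hf hrd hrq hx hp h, Polynomial.zero_comp, one_smul,
    ← jet_comp_eq hx] at pencil_eq
  rw [← jet_eq_zero_iff, aeval_frobeniusPolar, map_polar, jet_comp_pow_card hrq hx, polar,
    ← pencil_eq, Polynomial.coeff_zero]

lemma pencil_constCoeff_eq_zero (hf : f.IsHomogeneous d) (hdq : d < Fintype.card F)
    (hx : x = (PowerSeries.X : PowerSeries F) • y + algebraMap F _ ∘ p) (hp : eval p f = 0)
    (h : ∀ k < d, aeval x (frobeniusPolar f k) = 0) :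
    pencil (constCoeff F ∘ y) p f = 0 := by
  set ζ := algebraMap F (PowerSeries F) ∘ p
  have const_ζ : constCoeff F ∘ ζ = p := constCoeff_comp_algebraMap p
  have jet_ζ : jet F d ∘ ζ = algebraMap F (Jet F d) ∘ p := by
    ext1 i
    exact (jet F d).commutes (p i)
  rw [← const_ζ, ← map_pencil]
  ext k
  rw [Polynomial.coeff_map, Polynomial.coeff_zero]
  change constCoeff F (polar f y ζ k) = 0
  obtain hk | hk := le_or_gt k d
  · have X_pow_dvd : PowerSeries.X ^ (d + 1) ∣ PowerSeries.X ^ (d - k) * polar f y ζ k := by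
      have scaled := polar_smul_smul hf (PowerSeries.X : PowerSeries F) 1 y ζ (Nat.add_sub_of_le hk)
      rw [one_smul, one_pow, mul_one] at scaled
      have jet_smul : jet F d ∘ ((PowerSeries.X : PowerSeries F) • y) =
          jet F d PowerSeries.X • (jet F d ∘ y) := by
        ext1 i
        simp
      rw [← scaled, ← jet_eq_zero_iff, map_polar, jet_smul, jet_ζ, polar,
        pencil_jet_smul_eq_zero hf le_rfl hdq hx hp h, Polynomial.coeff_zero]
    rw [constCoeff_eq_zero_iff]
    rw [show d + 1 = d - k + (k + 1) by omega, pow_add] at X_pow_dvd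
    exact (dvd_pow_self _ k.succ_ne_zero).trans
      ((mul_dvd_mul_iff_left (pow_ne_zero _ PowerSeries.X_ne_zero)).1 X_pow_dvd)
  · rw [polar, Polynomial.coeff_eq_zero_of_natDegree_lt ((natDegree_pencil_le hf _ _).trans_lt hk),
      map_zero]

end LocalContact

section Tangent

variable {σ F : Type*} [Fintype σ] [Field F] {f : MvPolynomial σ F} {d : ℕ}

/-- The functional `u ↦ ∑ i, u i ∂f/∂xᵢ(p)`. -/
def differential (f : MvPolynomial σ F) (p : σ → F) : Module.Dual F (σ → F) :=
  ∑ i, eval p (pderiv i f) • LinearMap.proj i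

lemma polar_one (f : MvPolynomial σ F) (p u : σ → F) : polar f p u 1 = differential f p u := by
  classical
  have polar_X (i : σ) : polar (X i : MvPolynomial σ F) p u 1 = u i := by simp [polar, pencil]
  induction f using MvPolynomial.induction_on with
  | C a => simp [polar, pencil, differential]
  | add g h hg hh =>
    simp_all [polar, differential, add_mul, Finset.sum_add_distrib]
  | mul_X g i hg =>
    rw [polar, map_mul, Polynomial.mul_coeff_one]
    change polar g p u 0 * polar (X i) p u 1 + polar g p u 1 * polar (X i) p u 0 = _
    rw [hg, polar_X, polar_zero, polar_zero]
    simp [differential, Derivation.leibniz, pderiv_X, Pi.single_apply, aeval_eq_eval,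
      apply_ite (eval p), mul_add, Finset.sum_add_distrib, Finset.mul_sum, mul_comm, mul_left_comm]

lemma exists_isRoot_X_mul_of_isUnit_coeff {G : Polynomial (PowerSeries F)}
    {d : ℕ} (hdeg : G.natDegree ≤ d) (hunit : IsUnit (G.coeff d))
    (h0 : PowerSeries.X ∣ G.coeff 0) (h1 : ¬ PowerSeries.X ∣ G.coeff 1) :
    ∃ a : PowerSeries F, G.IsRoot (PowerSeries.X * a) := by
  obtain ⟨u, hu⟩ := hunit.exists_left_inv
  have isUnit_u : IsUnit u := IsUnit.of_mul_eq_one _ hu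
  have monic : (Polynomial.C u * G).Monic :=
    Polynomial.monic_of_natDegree_le_of_coeff_eq_one d
      (Polynomial.natDegree_C_mul_le _ _ |>.trans hdeg) (by rw [Polynomial.coeff_C_mul, hu])
  have eval_zero : (Polynomial.C u * G).eval 0 ∈ Ideal.span {(PowerSeries.X : PowerSeries F)} := by
    rw [← Polynomial.coeff_zero_eq_eval_zero, Polynomial.coeff_C_mul, Ideal.mem_span_singleton]
    exact h0.mul_left u
  have derivative_eval_zero : IsUnit ((Polynomial.C u * G).derivative.eval 0) := by
    rw [← Polynomial.coeff_zero_eq_eval_zero, Polynomial.coeff_derivative, Polynomial.coeff_C_mul,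
      Nat.cast_zero, zero_add, zero_add, mul_one]
    refine isUnit_u.mul ?_
    rwa [PowerSeries.isUnit_iff_constantCoeff, isUnit_iff_ne_zero, ne_eq, ← PowerSeries.X_dvd_iff]
  obtain ⟨a, ha, ha0⟩ :=
    HenselianRing.is_henselian _ monic 0 eval_zero (derivative_eval_zero.map _)
  rw [sub_zero, Ideal.mem_span_singleton] at ha0
  obtain ⟨b, rfl⟩ := ha0
  rw [Polynomial.IsRoot, Polynomial.eval_mul, Polynomial.eval_C] at ha
  exact ⟨b, isUnit_u.mul_right_eq_zero.1 ha⟩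

lemma exists_isRoot_pencil (hf : f.IsHomogeneous d) {x n : σ → PowerSeries F}
    (hx : eval (constCoeff F ∘ x) f = 0) (hn : eval (constCoeff F ∘ n) f ≠ 0)
    (hxn : differential f (constCoeff F ∘ x) (constCoeff F ∘ n) ≠ 0) :
    ∃ a : PowerSeries F, (pencil x n f).IsRoot (PowerSeries.X * a) := by
  refine exists_isRoot_X_mul_of_isUnit_coeff (natDegree_pencil_le hf _ _) ?_ ?_ ?_
  · rw [← polar, polar_eq_aeval hf, PowerSeries.isUnit_iff_constantCoeff, isUnit_iff_ne_zero]
    exact (constCoeff_aeval n f).trans_ne hn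
  · rw [← polar, ← constCoeff_eq_zero_iff, polar_zero, constCoeff_aeval, hx]
  · rwa [← polar, ← constCoeff_eq_zero_iff, map_polar, polar_one]

end Tangent

section Branch

variable {σ F : Type*} [Fintype σ] [DecidableEq σ] [Field F]

lemma aeval_linearForm_sum_smul {ι R : Type*} [Fintype ι] [CommRing R] [Algebra F R]
    (φ : Module.Dual F (σ → F)) (s : ι → R) (u : ι → σ → F) :
    aeval (∑ j, s j • (algebraMap F R ∘ u j)) (linearForm φ) =
      ∑ j, s j * algebraMap F R (φ (u j)) := by
  simp_rw [← eval_linearForm]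
  simp only [linearForm, map_sum, map_mul, eval_X, eval_C, aeval_X, algHom_C,
    Finset.sum_apply, Pi.smul_apply, smul_eq_mul, Function.comp_apply, Finset.mul_sum]
  rw [Finset.sum_comm]
  exact Finset.sum_congr rfl fun j _ => Finset.sum_congr rfl fun i _ => mul_left_comm _ _ _

/-- A formal parametrization `t ↦ p + t y(t)` of a smooth branch of the curve `f = 0` at `p`.
The parameter `t` is the quotient of the linear forms `uniformizer` and `unit`. -/
structure Branch (f : MvPolynomial σ F) (p : σ → F) where
  /-- The coordinates of the moving point. -/
  coords : σ → PowerSeries F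
  /-- The difference quotient `y` of the moving point. -/
  slope : σ → PowerSeries F
  /-- The linear functional pulling back to the parameter. -/
  uniformizer : Module.Dual F (σ → F)
  /-- The linear functional pulling back to `1`. -/
  unit : Module.Dual F (σ → F)
  coords_eq : coords = (PowerSeries.X : PowerSeries F) • slope + algebraMap F _ ∘ p
  aeval_coords : aeval coords f = 0
  aeval_uniformizer : aeval coords (linearForm uniformizer) = PowerSeries.X
  aeval_unit : aeval coords (linearForm unit) = 1

lemma Branch.constCoeff_aeval_coords {f : MvPolynomial σ F} {p : σ → F} (B : Branch f p)
    (g : MvPolynomial σ F) : constCoeff F (aeval B.coords g) = eval p g := by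
  rw [constCoeff_aeval, B.coords_eq, constCoeff_comp_X_smul_add, constCoeff_comp_algebraMap]

end Branch

section BranchExistence

variable {F : Type*} [Field F] {f : MvPolynomial (Fin 3) F} {d : ℕ} {p n : Fin 3 → F}

lemma nonempty_branch_of_isRoot (b : Module.Basis (Fin 3) F (Fin 3 → F)) {a : PowerSeries F}
    (ha : (pencil ((PowerSeries.X : PowerSeries F) • (algebraMap F (PowerSeries F) ∘ b 2) +
      algebraMap F (PowerSeries F) ∘ b 0)
      (algebraMap F (PowerSeries F) ∘ b 1) f).IsRoot (PowerSeries.X * a)) :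
    Nonempty (Branch f (b 0)) := by
  let ζ (i : Fin 3) := algebraMap F (PowerSeries F) ∘ b i
  let s : Fin 3 → PowerSeries F := ![1, PowerSeries.X * a, PowerSeries.X]
  have sum_eq : ∑ j, s j • ζ j = ζ 0 + (PowerSeries.X * a) • ζ 1 +
      (PowerSeries.X : PowerSeries F) • ζ 2 := by
    rw [Fin.sum_univ_three]
    exact congrArg (· + _ + _) (one_smul _ _)
  have aeval_coord (i : Fin 3) : aeval (∑ j, s j • ζ j) (linearForm (b.coord i)) = s i := by
    rw [aeval_linearForm_sum_smul]
    simp [Finsupp.single_apply]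
  exact ⟨{
    coords := ∑ j, s j • ζ j
    slope := ζ 2 + a • ζ 1
    uniformizer := b.coord 2
    unit := b.coord 0
    coords_eq := by
      rw [sum_eq, smul_add, mul_smul]
      abel
    aeval_coords := by
      rw [sum_eq, add_right_comm, add_comm (ζ 0), ← eval_pencil, ha]
    aeval_uniformizer := aeval_coord 2
    aeval_unit := aeval_coord 0 }⟩

lemma nonempty_branch_of_differential_ne_zero (hf : f.IsHomogeneous d) (hp : eval p f = 0)
    (hn : eval n f ≠ 0) (hpn : differential f p n ≠ 0) (hlin : LinearIndependent F ![p, n]) :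
    Nonempty (Branch f p) := by
  obtain ⟨b, rfl, rfl⟩ := exists_basis_of_linearIndependent hlin
  obtain ⟨a, root⟩ := exists_isRoot_pencil hf
    (x := (PowerSeries.X : PowerSeries F) • (algebraMap F (PowerSeries F) ∘ b 2) +
      algebraMap F (PowerSeries F) ∘ b 0) (n := algebraMap F (PowerSeries F) ∘ b 1)
    (by rwa [constCoeff_comp_X_smul_add, constCoeff_comp_algebraMap])
    (by rwa [constCoeff_comp_algebraMap])
    (by rwa [constCoeff_comp_X_smul_add, constCoeff_comp_algebraMap, constCoeff_comp_algebraMap])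
  exact nonempty_branch_of_isRoot b root

end BranchExistence

section Interpolation

variable {σ F : Type*} [Fintype σ] [DecidableEq σ] [Field F] {f : MvPolynomial σ F} {p : σ → F}

lemma Branch.exists_X_pow_dvd_aeval_sub (B : Branch f p) (s : PowerSeries F) {w n : ℕ}
    (hwn : w ≤ n) : ∃ g : MvPolynomial σ F, g.IsHomogeneous n ∧
      PowerSeries.X ^ w ∣ aeval B.coords g - s := by
  refine ⟨∑ i ∈ Finset.range w, C (PowerSeries.coeff i s) *
    (linearForm B.uniformizer ^ i * linearForm B.unit ^ (n - i)),
    IsHomogeneous.sum _ _ _ fun i hi => ?_, ?_⟩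
  · have hin : i + (n - i) = n := by grind
    have := ((isHomogeneous_linearForm B.uniformizer).pow i).mul
      ((isHomogeneous_linearForm B.unit).pow (n - i))
    rw [one_mul, one_mul, hin] at this
    exact this.C_mul _
  · rw [PowerSeries.X_pow_dvd_iff]
    intro m hm
    simp [B.aeval_uniformizer, B.aeval_unit, PowerSeries.coeff_X_pow, hm]

lemma Branch.unit_apply (B : Branch f p) : B.unit p = 1 := by
  rw [← eval_linearForm, ← B.constCoeff_aeval_coords, B.aeval_unit, map_one]

lemma Branch.uniformizer_apply (B : Branch f p) : B.uniformizer p = 0 := by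
  rw [← eval_linearForm, ← B.constCoeff_aeval_coords, B.aeval_uniformizer,
    constCoeff_eq_zero_iff]

variable {ι : Type*} [Fintype ι] {P : ι → Fin 3 → F} {f : MvPolynomial (Fin 3) F}

lemma exists_isHomogeneous_X_pow_dvd (B : ∀ i, Branch f (P i))
    (hP : Pairwise fun i j => LinearIndependent F ![P i, P j]) (w : ℕ) (i : ι) :
    ∃ e : MvPolynomial (Fin 3) F, e.IsHomogeneous ((Fintype.card ι - 1) * w) ∧
      eval (P i) e ≠ 0 ∧ ∀ j ≠ i, PowerSeries.X ^ w ∣ aeval (B j).coords e := by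
  classical
  have separating (j : ι) :
      ∃ φ : Module.Dual F (Fin 3 → F), φ (P i) ≠ 0 ∧ (j ≠ i → φ (P j) = 0) := by
    obtain rfl | hji := eq_or_ne j i
    · exact ⟨(B j).unit, (B j).unit_apply.trans_ne one_ne_zero, fun h => absurd rfl h⟩
    · obtain ⟨φ, hj, hi⟩ := exists_dual_eq_zero_ne_zero (hP hji)
      exact ⟨φ, hi.trans_ne one_ne_zero, fun _ => hj⟩
  choose φ φ_ne_zero φ_eq_zero using separating
  refine ⟨∏ j ∈ Finset.univ.erase i, linearForm (φ j) ^ w, ?_, ?_, fun j hj => ?_⟩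
  · have := IsHomogeneous.prod (Finset.univ.erase i) (fun j => linearForm (φ j) ^ w)
      (fun _ => 1 * w) fun j _ => (isHomogeneous_linearForm (φ j)).pow w
    simpa using this
  · simp [Finset.prod_ne_zero_iff, eval_linearForm, φ_ne_zero]
  · rw [map_prod]
    refine dvd_trans ?_ (Finset.dvd_prod_of_mem _ (Finset.mem_erase.2 ⟨hj, Finset.mem_univ j⟩))
    rw [map_pow]
    refine pow_dvd_pow_of_dvd ?_ w
    rw [← constCoeff_eq_zero_iff, Branch.constCoeff_aeval_coords, eval_linearForm, φ_eq_zero j hj]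

lemma exists_isHomogeneous_forall_X_pow_dvd_aeval_sub (B : ∀ i, Branch f (P i))
    (hP : Pairwise fun i j => LinearIndependent F ![P i, P j]) (s : ι → PowerSeries F) {w n : ℕ}
    (hn : Fintype.card ι * w ≤ n) : ∃ g : MvPolynomial (Fin 3) F, g.IsHomogeneous n ∧
      ∀ i, PowerSeries.X ^ w ∣ aeval (B i).coords g - s i := by
  choose e e_hom e_ne_zero e_dvd using exists_isHomogeneous_X_pow_dvd B hP w
  have isUnit_e (i : ι) : IsUnit (aeval (B i).coords (e i)) := by
    rw [PowerSeries.isUnit_iff_constantCoeff, isUnit_iff_ne_zero]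
    exact ((B i).constCoeff_aeval_coords _).trans_ne (e_ne_zero i)
  choose u hu using fun i => (isUnit_e i).exists_left_inv
  have degree_eq : (Fintype.card ι - 1) * w + (n - (Fintype.card ι - 1) * w) = n :=
    Nat.add_sub_of_le ((Nat.mul_le_mul_right w (Nat.sub_le _ _)).trans hn)
  have le_degree (i : ι) : w ≤ n - (Fintype.card ι - 1) * w := by
    have : 0 < Fintype.card ι := Fintype.card_pos_iff.2 ⟨i⟩
    rw [← Nat.sub_one_add_one this.ne', add_mul] at hn
    omega
  choose g g_hom g_dvd using fun i =>
    (B i).exists_X_pow_dvd_aeval_sub (u i * s i) (le_degree i)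
  refine ⟨∑ i, e i * g i, IsHomogeneous.sum _ _ _ fun i _ => ?_, fun i => ?_⟩
  · rw [← degree_eq]
    exact (e_hom i).mul (g_hom i)
  · classical
    have diagonal : PowerSeries.X ^ w ∣ aeval (B i).coords (e i * g i) - s i := by
      have := (g_dvd i).mul_left (aeval (B i).coords (e i))
      rwa [mul_sub, ← mul_assoc, mul_comm _ (u i), hu, one_mul, ← map_mul] at this
    rw [map_sum, ← Finset.add_sum_erase _ _ (Finset.mem_univ i), add_sub_right_comm]
    refine dvd_add diagonal (Finset.dvd_sum fun j hj => ?_)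
    rw [map_mul]
    exact (e_dvd j i (Finset.ne_of_mem_erase hj).symm).mul_right _

end Interpolation

section Bezout

variable {σ F : Type*} [Field F]

lemma finrank_homogeneousSubmodule [Fintype σ] (n : ℕ) :
    Module.finrank F (homogeneousSubmodule σ F n) = (Fintype.card σ + n - 1).choose n := by
  classical
  have degree_set : {m : σ →₀ ℕ | m.degree = n} =
      (Finset.univ.finsuppAntidiag n : Finset (σ →₀ ℕ)) := by
    ext m
    simp [Finset.mem_finsuppAntidiag, Finsupp.degree_eq_sum]
  rw [homogeneousSubmodule_eq_finsupp_supported, degree_set,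
    (AddMonoidAlgebra.supportedEquivFinsupp _).finrank_eq, Module.finrank_finsupp_self,
    ← Nat.card_eq_fintype_card, Nat.card_coe_set_eq, Set.ncard_coe_finset,
    Finset.card_finsuppAntidiag_nat_eq_choose, Finset.card_univ]

lemma two_mul_finrank_homogeneousSubmodule_fin_three (n : ℕ) :
    2 * Module.finrank F (homogeneousSubmodule (Fin 3) F n) = (n + 1) * (n + 2) := by
  rw [finrank_homogeneousSubmodule, Fintype.card_fin, show 3 + n - 1 = n + 2 by omega,
    Nat.choose_symm_add, Nat.choose_two_right,
    Nat.mul_div_cancel' (Nat.even_mul_pred_self (n + 2)).two_dvd, Nat.add_succ_sub_one, mul_comm]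

instance finiteDimensional_homogeneousSubmodule [Finite σ] (n : ℕ) :
    FiniteDimensional F (homogeneousSubmodule σ F n) :=
  Module.Finite.iff_fg.2 (homogeneousSubmodule_fg σ F n)

lemma finrank_map_mulLeft {f : MvPolynomial σ F} (hf : f ≠ 0)
    (V : Submodule F (MvPolynomial σ F)) :
    Module.finrank F (V.map (LinearMap.mulLeft F f)) = Module.finrank F V :=
  (V.equivMapOfInjective _ (mul_right_injective₀ hf)).symm.finrank_eq

lemma map_mulLeft_inf_map_mulLeft_le {f h : MvPolynomial σ F} {d : ℕ} (hf : f.IsHomogeneous d)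
    (hfp : Prime f) (hfh : ¬ f ∣ h) (k : ℕ) (V : Submodule F (MvPolynomial σ F)) :
    V.map (LinearMap.mulLeft F f) ⊓
        (homogeneousSubmodule σ F (d + k)).map (LinearMap.mulLeft F h) ≤
      (homogeneousSubmodule σ F k).map (LinearMap.mulLeft F (h * f)) := by
  rintro _ ⟨⟨a, -, rfl⟩, b, hb, hab⟩
  change h * b = f * a at hab
  obtain ⟨c, rfl⟩ := (hfp.dvd_or_dvd ⟨a, hab⟩).resolve_left hfh
  exact ⟨c, isHomogeneous_of_mul_left hf hfp.ne_zero hb, (mul_assoc _ _ _).trans hab⟩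

lemma finrank_add_finrank_le_of_prime [Finite σ] {f h : MvPolynomial σ F} {d : ℕ}
    (hf : f.IsHomogeneous d) (hfp : Prime f) (hfh : ¬ f ∣ h) {m k : ℕ}
    {K : Submodule F (MvPolynomial σ F)} [FiniteDimensional F K]
    (hKf : ∀ a : MvPolynomial σ F, a.IsHomogeneous m → f * a ∈ K)
    (hKh : ∀ b : MvPolynomial σ F, b.IsHomogeneous (d + k) → h * b ∈ K) :
    Module.finrank F (homogeneousSubmodule σ F m) +
        Module.finrank F (homogeneousSubmodule σ F (d + k)) ≤
      Module.finrank F K + Module.finrank F (homogeneousSubmodule σ F k) := by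
  have h_ne_zero : h ≠ 0 := fun h0 => hfh (h0 ▸ dvd_zero f)
  rw [← finrank_map_mulLeft hfp.ne_zero (homogeneousSubmodule σ F m),
    ← finrank_map_mulLeft h_ne_zero (homogeneousSubmodule σ F (d + k)),
    ← finrank_map_mulLeft (mul_ne_zero h_ne_zero hfp.ne_zero) (homogeneousSubmodule σ F k),
    ← Submodule.finrank_sup_add_finrank_inf_eq]
  exact add_le_add
    (Submodule.finrank_mono (sup_le (Submodule.map_le_iff_le_comap.2 hKf)
      (Submodule.map_le_iff_le_comap.2 hKh)))
    (Submodule.finrank_mono (map_mulLeft_inf_map_mulLeft_le hf hfp hfh k _))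

variable {ι : Type*} {P : ι → Fin 3 → F} {f h : MvPolynomial (Fin 3) F} {d e w : ℕ}

/-- The Taylor coefficients of order less than `w` of a form along finitely many branches. -/
def branchJet (B : ∀ i, Branch f (P i)) (w : ℕ) :
    MvPolynomial (Fin 3) F →ₗ[F] ι × Fin w → F :=
  LinearMap.pi fun j => PowerSeries.coeff (R := F) j.2 ∘ₗ (aeval (B j.1).coords).toLinearMap

lemma branchJet_eq_zero_iff {B : ∀ i, Branch f (P i)} {g : MvPolynomial (Fin 3) F} :
    branchJet B w g = 0 ↔ ∀ i, PowerSeries.X ^ w ∣ aeval (B i).coords g := by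
  simp [branchJet, funext_iff, PowerSeries.X_pow_dvd_iff, Fin.forall_iff]

variable [Fintype ι]

lemma branchJet_domRestrict_surjective (B : ∀ i, Branch f (P i))
    (hP : Pairwise fun i j => LinearIndependent F ![P i, P j]) {n : ℕ}
    (hn : Fintype.card ι * w ≤ n) : Function.Surjective
      ((branchJet B w).domRestrict (homogeneousSubmodule (Fin 3) F n)) := by
  intro v
  obtain ⟨g, g_hom, hg⟩ := exists_isHomogeneous_forall_X_pow_dvd_aeval_sub B hP
    (fun i => PowerSeries.mk fun k => if hk : k < w then v (i, ⟨k, hk⟩) else 0) hn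
  refine ⟨⟨g, g_hom⟩, ?_⟩
  ext ⟨i, k⟩
  have := PowerSeries.X_pow_dvd_iff.1 (hg i) k k.2
  rw [map_sub, sub_eq_zero] at this
  simpa [branchJet] using this

/-- Bézout's inequality. In a large degree `n` the forms vanishing to order `w` along all branches
have codimension exactly `card ι * w`, and they contain all multiples of `f` and of `h`. -/
theorem card_mul_le_mul_of_forall_X_pow_dvd (B : ∀ i, Branch f (P i))
    (hP : Pairwise fun i j => LinearIndependent F ![P i, P j]) (hf : f.IsHomogeneous d)
    (hfp : Prime f) (hh : h.IsHomogeneous e) (hfh : ¬ f ∣ h)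
    (hw : ∀ i, PowerSeries.X ^ w ∣ aeval (B i).coords h) : Fintype.card ι * w ≤ d * e := by
  set k := Fintype.card ι * w
  let V := homogeneousSubmodule (Fin 3) F (d + (e + k))
  let K := (LinearMap.ker ((branchJet B w).domRestrict V)).map V.subtype
  have mem_K {g : MvPolynomial (Fin 3) F} (hg : g.IsHomogeneous (d + (e + k)))
      (hgB : ∀ i, PowerSeries.X ^ w ∣ aeval (B i).coords g) : g ∈ K :=
    ⟨⟨g, hg⟩, branchJet_eq_zero_iff.2 hgB, rfl⟩
  have finrank_K : k + Module.finrank F K = Module.finrank F V := by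
    have rank_nullity := ((branchJet B w).domRestrict V).finrank_range_add_finrank_ker
    rw [LinearMap.range_eq_top.2 (branchJet_domRestrict_surjective B hP (by omega)), finrank_top,
      Module.finrank_fintype_fun_eq_card, Fintype.card_prod, Fintype.card_fin] at rank_nullity
    rw [← rank_nullity, Submodule.finrank_map_subtype_eq]
  have finrank_le := finrank_add_finrank_le_of_prime hf hfp hfh (m := e + k) (k := k) (K := K)
    (fun a ha => mem_K (hf.mul ha) fun i => by simp [(B i).aeval_coords])
    (fun b hb => mem_K (by simpa [add_left_comm] using hh.mul hb) fun i => by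
      rw [map_mul]
      exact (hw i).mul_right _)
  have rank_V := two_mul_finrank_homogeneousSubmodule_fin_three (F := F) (d + (e + k))
  have rank_e := two_mul_finrank_homogeneousSubmodule_fin_three (F := F) (e + k)
  have rank_d := two_mul_finrank_homogeneousSubmodule_fin_three (F := F) (d + k)
  have rank_k := two_mul_finrank_homogeneousSubmodule_fin_three (F := F) k
  nlinarith

end Bezout

section SmoothPoints

variable {σ F : Type*} [Field F] {f : MvPolynomial σ F} {p n : σ → F} {d : ℕ}

lemma eval_smul_of_isHomogeneous (hf : f.IsHomogeneous d) (a : F) (p : σ → F) :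
    eval (a • p) f = a ^ d * eval p f := by
  have := polar_smul_smul hf a 0 p 0 (zero_add d)
  rwa [polar_zero, polar_zero, pow_zero, mul_one] at this

lemma linearIndependent_of_eval_ne_zero (hf : f.IsHomogeneous d) (hp0 : p ≠ 0)
    (hp : eval p f = 0) (hn : eval n f ≠ 0) : LinearIndependent F ![p, n] := by
  rw [LinearIndependent.pair_iff' hp0]
  rintro a rfl
  rw [eval_smul_of_isHomogeneous hf, hp, mul_zero] at hn
  exact hn rfl

lemma exists_eval_ne_zero_and_ne_zero [Finite σ] [Fintype F] (hf : f.IsHomogeneous d) (hf0 : f ≠ 0)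
    (hd : d < Fintype.card F) {φ : Module.Dual F (σ → F)} (hφ : φ ≠ 0) :
    ∃ n, eval n f ≠ 0 ∧ φ n ≠ 0 := by
  classical
  have := Fintype.ofFinite σ
  have linearForm_ne_zero : linearForm φ ≠ 0 := by
    contrapose! hφ
    ext1 i
    ext
    simp [← eval_linearForm, hφ]
  by_contra! h
  refine mul_ne_zero hf0 linearForm_ne_zero
    ((hf.mul (isHomogeneous_linearForm φ)).eq_zero_of_forall_eval_eq_zero_of_le_card
      (fun n => ?_) ?_)
  · rw [map_mul, eval_linearForm, mul_eq_zero]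
    exact or_iff_not_imp_left.2 (h n)
  · rw [Cardinal.mk_fintype]
    exact_mod_cast hd

variable [Fintype σ] [DecidableEq σ]

lemma Branch.uniformizer_slope (B : Branch f p) :
    B.uniformizer (constCoeff F ∘ B.slope) = 1 := by
  have aeval_slope : PowerSeries.X * aeval B.slope (linearForm B.uniformizer) = PowerSeries.X := by
    have additive : aeval B.coords (linearForm B.uniformizer) =
        PowerSeries.X * aeval B.slope (linearForm B.uniformizer) +
          algebraMap F _ (eval p (linearForm B.uniformizer)) := by
      rw [B.coords_eq]
      simp only [linearForm, map_sum, map_mul, eval_X, eval_C, aeval_X, algHom_C, Pi.add_apply,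
        Pi.smul_apply, smul_eq_mul, Function.comp_apply, mul_add, Finset.sum_add_distrib,
        Finset.mul_sum, mul_left_comm]
    rwa [B.aeval_uniformizer, eval_linearForm, B.uniformizer_apply, map_zero, add_zero,
      eq_comm] at additive
  rw [← eval_linearForm, ← constCoeff_aeval, mul_left_cancel₀ PowerSeries.X_ne_zero
    (aeval_slope.trans (mul_one _).symm), map_one]

lemma Branch.linearIndependent_slope (B : Branch f p) :
    LinearIndependent F ![constCoeff F ∘ B.slope, p] := by
  rw [LinearIndependent.pair_iff]
  intro s t h
  have hs : s = 0 := by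
    simpa [B.uniformizer_slope, B.uniformizer_apply] using congr_arg B.uniformizer h
  subst hs
  simpa [B.unit_apply] using congr_arg B.unit h

open scoped LinearAlgebra.Projectivization in
lemma linearIndependent_rep {K V : Type*} [Field K] [AddCommGroup V] [Module K V] {p p' : ℙ K V}
    (h : p ≠ p') : LinearIndependent K ![p.rep, p'.rep] := by
  have := Projectivization.independent_iff.1 ((Projectivization.independent_pair_iff_ne p p').2 h)
  rwa [← FinVec.map_eq] at this

end SmoothPoints

section SmoothBound

variable {F : Type*} [Field F] [Fintype F] {f : MvPolynomial (Fin 3) F} {p : Fin 3 → F} {d : ℕ}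

lemma nonempty_branch (hf : f.IsHomogeneous d) (hf0 : f ≠ 0) (hd : d < Fintype.card F)
    (hp0 : p ≠ 0) (hp : eval p f = 0) (hps : differential f p ≠ 0) : Nonempty (Branch f p) := by
  obtain ⟨n, hn, hpn⟩ := exists_eval_ne_zero_and_ne_zero hf hf0 hd hps
  exact nonempty_branch_of_differential_ne_zero hf hp hn hpn
    (linearIndependent_of_eval_ne_zero hf hp0 hp hn)

lemma Branch.exists_not_dvd_frobeniusPolar (B : Branch f p) (hf : f.IsHomogeneous d)
    (hl : HasNoLinearFactor f) (hd : d < Fintype.card F) (hp : eval p f = 0) :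
    ∃ k < d, ¬ f ∣ frobeniusPolar f k := by
  by_contra! h
  refine hl.pencil_ne_zero hf B.linearIndependent_slope
    (pencil_constCoeff_eq_zero hf hd B.coords_eq hp fun k hk => ?_)
  obtain ⟨g, hg⟩ := h k hk
  rw [hg, map_mul, B.aeval_coords, zero_mul]

/-- The Frobenius polars of `f` of orders `k < r` are multiples of `f`, so the one of order `r`
has contact of order `r + 1` with every smooth branch, and Bézout's inequality applies. -/
theorem card_smooth_le_of_prime (hf : f.IsHomogeneous d) (hfp : Prime f)
    (hl : HasNoLinearFactor f) (hd : d < Fintype.card F)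
    {S : Finset (Projectivization F (Fin 3 → F))}
    (hS : ∀ p ∈ S, eval p.rep f = 0 ∧ differential f p.rep ≠ 0) :
    S.card ≤ (d - 1) * Fintype.card F + 1 := by
  classical
  obtain rfl | ⟨p₀, hp₀⟩ := S.eq_empty_or_nonempty
  · simp
  have branch (p : S) : Nonempty (Branch f p.1.rep) :=
    nonempty_branch hf hfp.ne_zero hd p.1.rep_nonzero (hS p p.2).1 (hS p p.2).2
  let B (p : S) := (branch p).some
  have hP : Pairwise fun p p' : S => LinearIndependent F ![p.1.rep, p'.1.rep] :=
    fun p p' hpp' => linearIndependent_rep (Subtype.coe_ne_coe.2 hpp')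
  have exists_not_dvd := (B ⟨p₀, hp₀⟩).exists_not_dvd_frobeniusPolar hf hl hd (hS p₀ hp₀).1
  obtain ⟨r, ⟨hr, r_not_dvd⟩, r_min⟩ := Nat.findX exists_not_dvd
  have r_pos : 0 < r := by
    refine Nat.pos_of_ne_zero ?_
    rintro rfl
    exact r_not_dvd (frobeniusPolar_zero f).symm.dvd
  have contact (p : S) : PowerSeries.X ^ (r + 1) ∣ aeval (B p).coords (frobeniusPolar f r) := by
    refine X_pow_dvd_aeval_frobeniusPolar hf hr.le (hr.trans hd) (B p).coords_eq (hS p p.2).1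
      (fun k hk => ?_) r
    obtain ⟨g, hg⟩ : f ∣ frobeniusPolar f k := by
      by_contra hfk
      exact r_min k hk ⟨hk.trans hr, hfk⟩
    rw [hg, map_mul, (B p).aeval_coords, zero_mul]
  have bezout := card_mul_le_mul_of_forall_X_pow_dvd B hP hf hfp
    (isHomogeneous_frobeniusPolar hf (Nat.add_sub_of_le hr.le)) r_not_dvd contact
  rw [Fintype.card_coe] at bezout
  obtain ⟨m, rfl⟩ := Nat.exists_eq_add_of_lt hr
  rw [show r + m + 1 - r = m + 1 by omega] at bezout
  rw [Nat.add_sub_cancel]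
  by_contra! card_gt
  nlinarith [r_pos]

end SmoothBound

section ProjectivePlane

open Configuration
open scoped Finset

variable {P L : Type*} [Membership P L] [ProjectivePlane P L]

open Classical in
lemma card_lines_through [Finite P] [Fintype L] (p : P) :
    #{l : L | p ∈ l} = ProjectivePlane.order P L + 1 := by
  rw [← ProjectivePlane.lineCount_eq L p, lineCount, Nat.card_eq_fintype_card,
    Fintype.card_subtype]

open Classical in
lemma card_points_on_line [Fintype P] [Finite L] (l : L) :
    #{p : P | p ∈ l} = ProjectivePlane.order P L + 1 := by
  rw [← ProjectivePlane.pointCount_eq P l, pointCount, Nat.card_eq_fintype_card,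
    Fintype.card_subtype]

lemma exists_mem_and_mem [Finite P] [Finite L] (l l' : L) : ∃ p : P, p ∈ l ∧ p ∈ l' := by
  obtain rfl | h := eq_or_ne l l'
  · obtain ⟨p, hp⟩ : Nonempty {p : P // p ∈ l} :=
      (Nat.card_pos_iff.1 (two_pos.trans (ProjectivePlane.two_lt_pointCount P l))).1
    exact ⟨p, hp, hp⟩
  · exact (HasPoints.existsUnique_point P L l l' h).exists

open Classical in
lemma card_union_line_le [Fintype P] [Finite L] {S : Finset P} {n : ℕ}
    (hS : #S ≤ n + 1 ∨ #S ≤ n + 2 ∧ ∀ l : L, ∃ p ∈ S, p ∈ l) (l : L) :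
    #(S ∪ ({p | p ∈ l} : Finset P)) ≤ n + ProjectivePlane.order P L + 2 := by
  have inclusion_exclusion := Finset.card_union_add_card_inter S ({p | p ∈ l} : Finset P)
  rw [card_points_on_line] at inclusion_exclusion
  obtain h | ⟨h, hmeet⟩ := hS
  · omega
  · obtain ⟨p, hpS, hpl⟩ := hmeet l
    have common_point : 0 < #(S ∩ ({p | p ∈ l} : Finset P)) :=
      Finset.card_pos.2 ⟨p, by simp [hpS, hpl]⟩
    omega

open Classical in
lemma card_erase_le_sum_lines_through [Fintype L] (S : Finset P) (p : P) :
    #(S.erase p) ≤ ∑ l : L with p ∈ l, #{p' ∈ S.erase p | p' ∈ l} := by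
  refine (Finset.card_le_card fun p' hp' => ?_).trans Finset.card_biUnion_le
  obtain ⟨l, ⟨hpl, hpl'⟩, -⟩ :=
    HasLines.existsUnique_line P L p p' (Finset.ne_of_mem_erase hp').symm
  exact Finset.mem_biUnion.2 ⟨l, by simpa using hpl, by simpa using ⟨by simpa using hp', hpl'⟩⟩

variable [Fintype P] {S : Finset P} {c : L → P → ℕ} {d : ℕ}

open Classical in
lemma card_add_le_of_forall_two_le [Finite L] (hS : ∀ l, ∀ p ∈ S, 1 ≤ c l p)
    (hc : ∀ l, ∑ p with p ∈ l, c l p ≤ d) {p : P} (hpS : p ∈ S) (hp : ∀ l, p ∈ l → 2 ≤ c l p) :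
    #S + 2 * ProjectivePlane.order P L + 1 ≤ (ProjectivePlane.order P L + 1) * d := by
  have := Fintype.ofFinite L
  have line_bound (l : L) (hl : p ∈ l) : #{p' ∈ S.erase p | p' ∈ l} + 2 ≤ d := by
    refine le_trans ?_ (hc l)
    rw [← Finset.sum_erase_add _ _ (Finset.mem_filter.2 ⟨Finset.mem_univ p, hl⟩)]
    refine add_le_add ?_ (hp l hl)
    rw [Finset.card_eq_sum_ones]
    exact (Finset.sum_le_sum fun p' hp' => hS l p' (by grind)).trans
      (Finset.sum_le_sum_of_subset (by grind))
  have erase_bound := card_erase_le_sum_lines_through (L := L) S p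
  have sum_bound := Finset.sum_le_card_nsmul ({l : L | p ∈ l} : Finset L) _ d
    fun l hl => line_bound l (Finset.mem_filter.1 hl).2
  rw [Finset.sum_add_distrib, Finset.sum_const, card_lines_through, smul_eq_mul,
    smul_eq_mul] at sum_bound
  rw [Finset.card_erase_of_mem hpS] at erase_bound
  omega

open Classical in
lemma card_mul_add_le_of_exists_two_le [Fintype L] (hS : ∀ l, ∀ p ∈ S, 1 ≤ c l p)
    (hc : ∀ l, ∑ p with p ∈ l, c l p ≤ d) (hT : ∀ p ∈ S, ∃ l, p ∈ l ∧ 2 ≤ c l p) :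
    #S * (ProjectivePlane.order P L + 2) + d * #{l : L | ∀ p ∈ S, p ∉ l} ≤
      d * Fintype.card L := by
  have point_bound (p : P) (hp : p ∈ S) :
      ProjectivePlane.order P L + 2 ≤ ∑ l with p ∈ l, c l p := by
    obtain ⟨t, hpt, ht⟩ := hT p hp
    rw [← Finset.sum_erase_add _ _ (Finset.mem_filter.2 ⟨Finset.mem_univ t, hpt⟩)]
    have := Finset.card_nsmul_le_sum (({l : L | p ∈ l} : Finset L).erase t) (fun l => c l p) 1
      fun l _ => hS l p hp
    rw [Finset.card_erase_of_mem (by simpa using hpt), card_lines_through, smul_eq_mul] at this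
    omega
  have double_count : ∑ p ∈ S, ∑ l with p ∈ l, c l p =
      ∑ l with ∃ p ∈ S, p ∈ l, ∑ p ∈ S with p ∈ l, c l p :=
    Finset.sum_comm' (by grind)
  have line_bound (l : L) : ∑ p ∈ S with p ∈ l, c l p ≤ d :=
    (Finset.sum_le_sum_of_subset (by grind)).trans (hc l)
  have split := Finset.card_filter_add_card_filter_not (s := Finset.univ)
    fun l : L => ∃ p ∈ S, p ∈ l
  have lower := Finset.card_nsmul_le_sum _ _ _ point_bound
  have upper := Finset.sum_le_card_nsmul ({l : L | ∃ p ∈ S, p ∈ l} : Finset L) _ _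
    fun l _ => line_bound l
  simp only [not_exists, not_and, Finset.card_univ] at split
  rw [double_count] at lower
  rw [← split, mul_add d, add_le_add_iff_right, mul_comm d]
  exact lower.trans upper

end ProjectivePlane

section PencilMultiplicity

variable {σ F : Type*} [Field F] {f : MvPolynomial σ F} {d : ℕ}

lemma X_sub_C_pow_dvd_pencil_iff {u v : σ → F} {a : F} {w : ℕ} :
    (Polynomial.X - Polynomial.C a) ^ w ∣ pencil u v f ↔
      ∀ k < w, polar f (u + a • v) v k = 0 := by
  rw [Polynomial.X_sub_C_pow_dvd_iff, pencil_comp_X_add_C, Polynomial.X_pow_dvd_iff]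
  rfl

lemma polar_eq_zero_of_polar_smul_eq_zero (hf : f.IsHomogeneous d) {s : F} (hs : s ≠ 0)
    {x y : σ → F} {k : ℕ} (h : polar f (s • x) y k = 0) : polar f x y k = 0 := by
  obtain hk | hk := le_or_gt k d
  · have := polar_smul_smul hf s 1 x y (Nat.add_sub_of_le hk)
    rw [one_smul, h, one_pow, mul_one, eq_comm] at this
    exact (mul_eq_zero_iff_left (pow_ne_zero _ hs)).1 (by rwa [mul_comm] at this)
  · exact Polynomial.coeff_eq_zero_of_natDegree_lt ((natDegree_pencil_le hf x y).trans_lt hk)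

lemma natDegree_pencil_add_le (hf : f.IsHomogeneous d) {u v : σ → F} (hne : pencil u v f ≠ 0)
    {w : ℕ} (h : ∀ k < w, polar f v u k = 0) : (pencil u v f).natDegree + w ≤ d := by
  have natDegree_le := natDegree_pencil_le hf u v
  by_contra! hlt
  refine hne (Polynomial.leadingCoeff_eq_zero.1 ?_)
  rw [← h (d - (pencil u v f).natDegree) (by omega)]
  exact (polar_swap hf v u (Nat.sub_add_cancel natDegree_le))

end PencilMultiplicity

section LineContact

open Configuration Matrix
open scoped LinearAlgebra.Projectivization

variable {F : Type*} [Field F] {f : MvPolynomial (Fin 3) F} {d : ℕ} {l p : ℙ F (Fin 3 → F)}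

lemma eq_of_rep_eq_smul {K V : Type*} [Field K] [AddCommGroup V] [Module K V] {p p' : ℙ K V}
    {s s' : K} {v : V} (h : p.rep = s • v) (h' : p'.rep = s' • v) : p = p' := by
  have hs' : s' ≠ 0 := by
    rintro rfl
    exact p'.rep_nonzero (h'.trans (zero_smul K v))
  by_contra hne
  refine hs' ((LinearIndependent.pair_iff.1 (linearIndependent_rep hne)) s' (-s) ?_).1
  rw [h, h', neg_smul, smul_comm, add_neg_cancel]

lemma mem_iff_dotProduct_rep : p ∈ l ↔ p.rep ⬝ᵥ l.rep = 0 := by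
  rw [ofField.mem_iff]
  conv_lhs => rw [← p.mk_rep, ← l.mk_rep]
  rw [Projectivization.orthogonal_mk]

lemma exists_eq_smul_add_smul {u v w x : Fin 3 → F} (huv : LinearIndependent F ![u, v])
    (hw : w ≠ 0) (hu : u ⬝ᵥ w = 0) (hv : v ⬝ᵥ w = 0) (hx : x ⬝ᵥ w = 0) :
    ∃ s t : F, x = s • u + t • v := by
  obtain ⟨b, hbu, hbv⟩ := exists_basis_of_linearIndependent huv
  have expand (y : Fin 3 → F) : y = b.repr y 0 • u + b.repr y 1 • v + b.repr y 2 • b 2 := by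
    conv_lhs => rw [← b.sum_repr y, Fin.sum_univ_three, hbu, hbv]
  have dotProduct_eq (y : Fin 3 → F) : y ⬝ᵥ w = b.repr y 2 * (b 2 ⬝ᵥ w) := by
    conv_lhs => rw [expand y]
    simp [hu, hv]
  have b_dotProduct_ne_zero : b 2 ⬝ᵥ w ≠ 0 := fun h =>
    hw (dotProduct_eq_zero _ fun y => by rw [dotProduct_comm, dotProduct_eq, h, mul_zero])
  have repr_eq_zero : b.repr x 2 = 0 := by
    rw [dotProduct_eq] at hx
    exact (mul_eq_zero_iff_right b_dotProduct_ne_zero).1 hx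
  refine ⟨b.repr x 0, b.repr x 1, (expand x).trans ?_⟩
  rw [repr_eq_zero, zero_smul, add_zero]

lemma exists_rep_eq_smul_add_smul {p₀ p₁ : ℙ F (Fin 3 → F)} (h₀ : p₀ ∈ l) (h₁ : p₁ ∈ l)
    (h : p₁ ≠ p₀) (hp : p ∈ l) (hpp₀ : p ≠ p₀) :
    ∃ a s : F, s ≠ 0 ∧ p.rep = s • (p₁.rep + a • p₀.rep) := by
  have independent : LinearIndependent F ![p₁.rep, p₀.rep] := linearIndependent_rep h
  obtain ⟨s, t, hst⟩ := exists_eq_smul_add_smul independent l.rep_nonzero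
    (mem_iff_dotProduct_rep.1 h₁) (mem_iff_dotProduct_rep.1 h₀) (mem_iff_dotProduct_rep.1 hp)
  have hs : s ≠ 0 := by
    rintro rfl
    have := (LinearIndependent.pair_iff.1 (linearIndependent_rep hpp₀)) 1 (-t)
    simp [hst] at this
  refine ⟨s⁻¹ * t, s, hs, ?_⟩
  rw [hst, smul_add, smul_smul, mul_inv_cancel_left₀ hs]

open Classical in
/-- The intersection multiplicity of the line `l` and the curve `f = 0` at a point `p` of `l`,
truncated at `2`. -/
def contact (f : MvPolynomial (Fin 3) F) (l p : ℙ F (Fin 3 → F)) : ℕ :=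
  if eval p.rep f = 0 then
    if ∀ v, v ⬝ᵥ l.rep = 0 → differential f p.rep v = 0 then 2 else 1
  else 0

lemma polar_eq_zero_of_lt_contact {v : Fin 3 → F} (hv : v ⬝ᵥ l.rep = 0) {k : ℕ}
    (hk : k < contact f l p) : polar f p.rep v k = 0 := by
  rw [contact] at hk
  split_ifs at hk with hp hl
  · obtain rfl | rfl : k = 0 ∨ k = 1 := by omega
    · rwa [polar_zero]
    · rw [polar_one, hl v hv]
  · obtain rfl : k = 0 := by omega
    rwa [polar_zero]
  · exact absurd hk k.not_lt_zero

instance fintypeProjectivization {V : Type*} [AddCommGroup V] [Module F V] [Finite V] :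
    Fintype (ℙ F V) :=
  Fintype.ofFinite _

variable [Finite F]

open Classical in
/-- The restriction of `f` to the line is a nonzero binary form of degree `d`; the points of the
line other than `p₀` are roots of its dehomogenization, and `p₀` accounts for the drop in degree. -/
lemma sum_contact_le (hf : f.IsHomogeneous d) (hl : HasNoLinearFactor f) (l : ℙ F (Fin 3 → F)) :
    ∑ p with p ∈ l, contact f l p ≤ d := by
  obtain ⟨⟨p₀, h₀⟩, ⟨p₁, h₁⟩, h⟩ : Nontrivial {p : ℙ F (Fin 3 → F) // p ∈ l} := by
    rw [← Finite.one_lt_card_iff_nontrivial]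
    exact one_lt_two.trans (ProjectivePlane.two_lt_pointCount (ℙ F (Fin 3 → F)) l)
  replace h : p₁ ≠ p₀ := fun h' => h (Subtype.ext h'.symm)
  have pencil_ne_zero := hl.pencil_ne_zero hf (linearIndependent_rep h)
  choose! a s hs rep_eq using fun p hp hpp₀ =>
    exists_rep_eq_smul_add_smul (p := p) h₀ h₁ h hp hpp₀
  have dvd_pencil : ∏ p ∈ ({p | p ∈ l} : Finset (ℙ F (Fin 3 → F))).erase p₀,
      (Polynomial.X - Polynomial.C (a p)) ^ contact f l p ∣ pencil p₁.rep p₀.rep f := by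
    refine Finset.prod_dvd_of_coprime ?_ ?_
    · intro p hp p' hp' hpp'
      simp only [Finset.coe_erase, Finset.coe_filter, Finset.mem_univ, true_and, Set.mem_sdiff,
        Set.mem_ofPred_eq, Set.mem_singleton_iff] at hp hp'
      refine (Polynomial.isCoprime_X_sub_C_of_isUnit_sub ?_).pow
      exact (sub_ne_zero.2 fun ha => hpp' (eq_of_rep_eq_smul (rep_eq p hp.1 hp.2)
        (ha ▸ rep_eq p' hp'.1 hp'.2))).isUnit
    · intro p hp
      simp only [Finset.mem_erase, Finset.mem_filter, Finset.mem_univ, true_and] at hp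
      refine X_sub_C_pow_dvd_pencil_iff.2 fun k hk =>
        polar_eq_zero_of_polar_smul_eq_zero hf (hs p hp.2 hp.1) ?_
      rw [← rep_eq p hp.2 hp.1]
      exact polar_eq_zero_of_lt_contact (mem_iff_dotProduct_rep.1 h₀) hk
  have natDegree_prod := Polynomial.natDegree_le_of_dvd dvd_pencil pencil_ne_zero
  have natDegree_le := natDegree_pencil_add_le hf pencil_ne_zero
    fun k hk => polar_eq_zero_of_lt_contact (mem_iff_dotProduct_rep.1 h₁) hk
  rw [Polynomial.natDegree_prod_of_monic _ _ fun p _ => (Polynomial.monic_X_sub_C _).pow _]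
    at natDegree_prod
  simp only [Polynomial.natDegree_pow, Polynomial.natDegree_X_sub_C, mul_one] at natDegree_prod
  rw [← Finset.sum_erase_add _ _ (Finset.mem_filter.2 ⟨Finset.mem_univ p₀, h₀⟩)]
  exact (Nat.add_le_add_right natDegree_prod _).trans natDegree_le

end LineContact

section LineCounting

open Configuration Matrix
open scoped LinearAlgebra.Projectivization Finset

variable {F : Type*} [Field F]

lemma exists_dotProduct_rep_eq_zero_iff {φ : Module.Dual F (Fin 3 → F)} (hφ : φ ≠ 0) :
    ∃ l : ℙ F (Fin 3 → F), ∀ v, v ⬝ᵥ l.rep = 0 ↔ φ v = 0 := by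
  have apply_eq (v : Fin 3 → F) : φ v = v ⬝ᵥ fun i => φ (Pi.single i 1) := by
    conv_lhs => rw [pi_eq_sum_univ' v]
    simp [dotProduct]
  have gradient_ne_zero : (fun i => φ (Pi.single i 1)) ≠ 0 := by
    contrapose! hφ
    refine LinearMap.ext fun v => ?_
    rw [apply_eq, hφ, dotProduct_zero, LinearMap.zero_apply]
  obtain ⟨a, ha⟩ := Projectivization.exists_smul_eq_mk_rep F _ gradient_ne_zero
  refine ⟨Projectivization.mk F _ gradient_ne_zero, fun v => ?_⟩
  rw [← ha, dotProduct_smul, apply_eq, smul_eq_zero_iff_eq]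

lemma differential_self {σ : Type*} [Fintype σ] {f : MvPolynomial σ F} {d : ℕ}
    (hf : f.IsHomogeneous d) (p : σ → F) : differential f p p = d * eval p f := by
  have := congr_arg (eval p) hf.sum_X_mul_pderiv
  simpa [differential, mul_comm] using this

variable [Fintype F] {f : MvPolynomial (Fin 3) F} {d : ℕ}

lemma card_points : Fintype.card (ℙ F (Fin 3 → F)) = Fintype.card F ^ 2 + Fintype.card F + 1 := by
  rw [← Nat.card_eq_fintype_card,
    Projectivization.card_of_finrank F (Fin 3 → F) (n := 3) (by simp), Nat.card_eq_fintype_card]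
  simp only [Finset.sum_range_succ, Finset.sum_range_zero]
  ring

open Classical in
lemma order_eq_card :
    ProjectivePlane.order (ℙ F (Fin 3 → F)) (ℙ F (Fin 3 → F)) = Fintype.card F := by
  have := ProjectivePlane.card_points (ℙ F (Fin 3 → F)) (ℙ F (Fin 3 → F))
  rw [card_points] at this
  nlinarith

open Classical in
/-- The rational points of the curve `f = 0`. -/
def zeros (f : MvPolynomial (Fin 3) F) : Finset (ℙ F (Fin 3 → F)) :=
  {p | eval p.rep f = 0}

lemma mem_zeros {p : ℙ F (Fin 3 → F)} : p ∈ zeros f ↔ eval p.rep f = 0 := by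
  simp [zeros]

lemma one_le_contact (l : ℙ F (Fin 3 → F)) {p : ℙ F (Fin 3 → F)} (hp : p ∈ zeros f) :
    1 ≤ contact f l p := by
  rw [contact, if_pos (mem_zeros.1 hp)]
  split_ifs <;> norm_num

lemma contact_eq_two {l p : ℙ F (Fin 3 → F)} (hp : p ∈ zeros f)
    (h : ∀ v, v ⬝ᵥ l.rep = 0 → differential f p.rep v = 0) : contact f l p = 2 := by
  rw [contact, if_pos (mem_zeros.1 hp), if_pos h]

lemma card_zeros_add_le_of_differential_eq_zero (hf : f.IsHomogeneous d)
    (hl : HasNoLinearFactor f) {p : ℙ F (Fin 3 → F)} (hp : p ∈ zeros f)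
    (h : differential f p.rep = 0) :
    #(zeros f) + 2 * Fintype.card F + 1 ≤ (Fintype.card F + 1) * d := by
  classical
  rw [← order_eq_card]
  exact card_add_le_of_forall_two_le (fun l p hp => one_le_contact l hp) (sum_contact_le hf hl) hp
    fun l _ => (contact_eq_two hp (by simp [h])).ge

open Classical in
lemma card_zeros_mul_add_le (hf : f.IsHomogeneous d) (hl : HasNoLinearFactor f)
    (h : ∀ p ∈ zeros f, differential f p.rep ≠ 0) :
    #(zeros f) * (Fintype.card F + 2) +
        d * #{l : ℙ F (Fin 3 → F) | ∀ p ∈ zeros f, p ∉ l} ≤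
      d * (Fintype.card F ^ 2 + Fintype.card F + 1) := by
  rw [← card_points, ← order_eq_card]
  refine card_mul_add_le_of_exists_two_le (fun l p hp => one_le_contact l hp)
    (sum_contact_le hf hl) fun p hp => ?_
  obtain ⟨l, hpl⟩ := exists_dotProduct_rep_eq_zero_iff (h p hp)
  refine ⟨l, ?_, (contact_eq_two hp fun v => (hpl v).1).ge⟩
  rw [mem_iff_dotProduct_rep, hpl, differential_self hf, mem_zeros.1 hp, mul_zero]

end LineCounting

section NoLinearFactor

open Configuration
open scoped LinearAlgebra.Projectivization Finset

lemma isUnit_iff_of_isHomogeneous {σ F : Type*} [Field F] {f : MvPolynomial σ F} {d : ℕ}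
    (hf : f.IsHomogeneous d) (hf0 : f ≠ 0) : IsUnit f ↔ d = 0 := by
  classical
  rw [isUnit_iff_totalDegree_of_isReduced, hf.totalDegree hf0, and_iff_right_iff_imp]
  rintro rfl
  obtain ⟨a, rfl⟩ : ∃ a, f = C a := ⟨_, totalDegree_eq_zero_iff_eq_C.1 (hf.totalDegree hf0)⟩
  rw [coeff_C, if_pos rfl, isUnit_iff_ne_zero]
  exact fun ha => hf0 (by rw [ha, C_0])

variable {F : Type*} [Field F]

lemma HasNoLinearFactor.ne_zero {σ : Type*} [Nonempty σ] {f : MvPolynomial σ F}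
    (hl : HasNoLinearFactor f) : f ≠ 0 := by
  rintro rfl
  exact hl _ (isHomogeneous_X F (Classical.arbitrary σ)) (dvd_zero _)

lemma HasNoLinearFactor.of_dvd {σ : Type*} {f g : MvPolynomial σ F} (hl : HasNoLinearFactor f)
    (hgf : g ∣ f) : HasNoLinearFactor g :=
  fun l hl1 hlg => hl l hl1 (hlg.trans hgf)

variable [Fintype F] {f : MvPolynomial (Fin 3) F} {d : ℕ}

open Classical in
lemma zeros_mul (f g : MvPolynomial (Fin 3) F) : zeros (f * g) = zeros f ∪ zeros g := by
  ext p
  rw [Finset.mem_union, mem_zeros, mem_zeros, mem_zeros, map_mul, mul_eq_zero]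

lemma card_zeros_le_of_prime (hf : f.IsHomogeneous (d + 1)) (hfp : Prime f)
    (hl : HasNoLinearFactor f) (hd : d + 1 < Fintype.card F) :
    #(zeros f) ≤ d * Fintype.card F + 1 := by
  by_cases! h : ∃ p ∈ zeros f, differential f p.rep = 0
  · obtain ⟨p, hp, hps⟩ := h
    have := card_zeros_add_le_of_differential_eq_zero hf hl hp hps
    linarith
  · exact card_smooth_le_of_prime hf hfp hl hd fun p hp => ⟨mem_zeros.1 hp, h p hp⟩

lemma card_zeros_le_of_lt_card (hf : f.IsHomogeneous (d + 1)) (hl : HasNoLinearFactor f)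
    (hd : d + 1 < Fintype.card F) : #(zeros f) ≤ d * Fintype.card F + 1 := by
  induction d using Nat.strong_induction_on generalizing f with | h d ih =>
  have not_unit : ¬ IsUnit f := by simp [isUnit_iff_of_isHomogeneous hf hl.ne_zero]
  obtain hirr | ⟨g, h, g_not_unit, h_not_unit, rfl⟩ := irreducible_or_factor not_unit
  · exact card_zeros_le_of_prime hf hirr.prime hl hd
  classical
  obtain ⟨m, n, hmn, hg, hh⟩ := exists_isHomogeneous_of_mul hf hl.ne_zero
  have hlg := hl.of_dvd (Dvd.intro h rfl)
  have hlh := hl.of_dvd (Dvd.intro_left g rfl)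
  rw [isUnit_iff_of_isHomogeneous hg hlg.ne_zero] at g_not_unit
  rw [isUnit_iff_of_isHomogeneous hh hlh.ne_zero] at h_not_unit
  obtain ⟨m, rfl⟩ := Nat.exists_eq_succ_of_ne_zero g_not_unit
  obtain ⟨n, rfl⟩ := Nat.exists_eq_succ_of_ne_zero h_not_unit
  obtain rfl : d = m + n + 1 := by omega
  calc #(zeros (g * h)) ≤ #(zeros g) + #(zeros h) := zeros_mul g h ▸ Finset.card_union_le _ _
    _ ≤ (m * Fintype.card F + 1) + (n * Fintype.card F + 1) :=
        add_le_add (ih m (by omega) hg hlg (by omega)) (ih n (by omega) hh hlh (by omega))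
    _ ≤ (m + n + 1) * Fintype.card F + 1 := by linarith

lemma card_zeros_le_of_hasNoLinearFactor (hf : f.IsHomogeneous (d + 1))
    (hl : HasNoLinearFactor f) :
    #(zeros f) ≤ d * Fintype.card F + 1 ∨
      #(zeros f) ≤ d * Fintype.card F + 2 ∧ ∀ l : ℙ F (Fin 3 → F), ∃ p ∈ zeros f, p ∈ l := by
  classical
  obtain hlt | hle := lt_or_ge (d + 1) (Fintype.card F)
  · exact .inl (card_zeros_le_of_lt_card hf hl hlt)
  obtain hgt | hle' := lt_or_ge (Fintype.card F) d
  · have := (zeros f).card_le_univ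
    rw [card_points] at this
    left
    nlinarith
  by_cases! h : ∃ p ∈ zeros f, differential f p.rep = 0
  · obtain ⟨p, hp, hps⟩ := h
    have := card_zeros_add_le_of_differential_eq_zero hf hl hp hps
    left
    linarith
  have smooth_bound := card_zeros_mul_add_le hf hl h
  obtain hq | rfl : Fintype.card F = d + 1 ∨ Fintype.card F = d := by omega
  · rw [hq] at smooth_bound ⊢
    by_cases! hlines : ∀ l : ℙ F (Fin 3 → F), ∃ p ∈ zeros f, p ∈ l
    · refine .inr ⟨?_, hlines⟩
      by_contra! hlarge
      nlinarith [Nat.mul_le_mul_right (d + 1 + 2) hlarge]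
    · obtain ⟨l, hmiss⟩ := hlines
      have missed : 0 < #{l : ℙ F (Fin 3 → F) | ∀ p ∈ zeros f, p ∉ l} :=
        Finset.card_pos.2 ⟨l, by simpa using hmiss⟩
      left
      by_contra! hlarge
      nlinarith [Nat.mul_le_mul_right (d + 1 + 2) hlarge, Nat.mul_le_mul_left (d + 1) missed]
  · left
    by_contra! hlarge
    nlinarith [Nat.mul_le_mul_right (Fintype.card F + 2) hlarge]

end NoLinearFactor

section UnionsWithLines

open Configuration
open scoped LinearAlgebra.Projectivization Finset

/-- The form `f` is a product of `d` linear forms, so that the curve `f = 0` is a union of `d`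
rational lines. -/
def IsProductOfLinearForms {σ F : Type*} [CommRing F] (f : MvPolynomial σ F) (d : ℕ) : Prop :=
  ∃ g : Fin d → MvPolynomial σ F, (∀ i, (g i).IsHomogeneous 1) ∧ f = ∏ i, g i

lemma IsProductOfLinearForms.mul {σ F : Type*} [CommRing F] {f l : MvPolynomial σ F} {d : ℕ}
    (hl : l.IsHomogeneous 1) (hf : IsProductOfLinearForms f d) :
    IsProductOfLinearForms (l * f) (d + 1) := by
  obtain ⟨g, hg, rfl⟩ := hf
  exact ⟨Fin.cons l g, Fin.cases hl hg, (Fin.prod_cons l g).symm⟩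

variable {F : Type*} [Field F] [Fintype F] {f : MvPolynomial (Fin 3) F} {d : ℕ}

lemma exists_zeros_eq_line (hf : f.IsHomogeneous 1) (hf0 : f ≠ 0) :
    ∃ l : ℙ F (Fin 3 → F), ∀ p, p ∈ zeros f ↔ p ∈ l := by
  classical
  obtain ⟨φ, rfl⟩ := exists_eq_linearForm hf
  have hφ : φ ≠ 0 := by
    rintro rfl
    exact hf0 (by simp [linearForm])
  obtain ⟨l, hl⟩ := exists_dotProduct_rep_eq_zero_iff hφ
  exact ⟨l, fun p => by rw [mem_zeros, eval_linearForm, mem_iff_dotProduct_rep, hl]⟩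

theorem card_zeros_le_of_not_isProductOfLinearForms (hf : f.IsHomogeneous (d + 1)) (hf0 : f ≠ 0)
    (h : ¬ IsProductOfLinearForms f (d + 1)) :
    #(zeros f) ≤ d * Fintype.card F + 1 ∨
      #(zeros f) ≤ d * Fintype.card F + 2 ∧ ∀ l : ℙ F (Fin 3 → F), ∃ p ∈ zeros f, p ∈ l := by
  classical
  induction d generalizing f with
  | zero => exact (h ⟨fun _ => f, fun _ => hf, by simp⟩).elim
  | succ d ih =>
    by_cases hl : HasNoLinearFactor f
    · exact card_zeros_le_of_hasNoLinearFactor hf hl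
    simp only [HasNoLinearFactor, not_forall, not_not] at hl
    obtain ⟨l, hl, f, rfl⟩ := hl
    obtain ⟨hl0, hf0⟩ := mul_ne_zero_iff.1 hf0
    have hf : f.IsHomogeneous (d + 1) :=
      isHomogeneous_of_mul_left hl hl0 (by rwa [add_comm 1 (d + 1)])
    obtain ⟨l', hl'⟩ := exists_zeros_eq_line hl hl0
    have zeros_eq : zeros (l * f) = zeros f ∪ ({p | p ∈ l'} : Finset _) := by
      ext p
      simp [zeros_mul, hl', or_comm]
    rw [zeros_eq]
    refine .inr ⟨?_, fun m => ?_⟩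
    · refine (card_union_line_le (ih hf hf0 fun h' => h (h'.mul hl)) l').trans_eq ?_
      rw [order_eq_card]
      ring
    · obtain ⟨p, hpl, hpm⟩ := exists_mem_and_mem l' m
      exact ⟨p, by simp [hpl], hpm⟩

end UnionsWithLines

end PlaneCurve

/-- A plane curve of degree `d` which is not a union of `d` `F_q`-rational lines has at most
`(d-1)q + 2` rational points. -/
theorem stmt_1 (q : ℕ) (hq : IsPrimePow q)
    (F : Type) [Field F] [Fintype F] (hF : Fintype.card F = q)
    (d : ℕ) (hd : 0 < d)
    (f : MvPolynomial (Fin 3) F) (hf0 : f ≠ 0) (hfd : f.IsHomogeneous d)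
    (hnotlines : ¬ ∃ g : Fin d → MvPolynomial (Fin 3) F,
        (∀ i, (g i).IsHomogeneous 1) ∧ f = ∏ i, g i) :
    {x : Projectivization F (Fin 3 → F) | MvPolynomial.eval x.rep f = 0}.ncard
      ≤ (d - 1) * q + 2 := by
  obtain ⟨d, rfl⟩ := Nat.exists_eq_succ_of_ne_zero hd.ne'
  subst hF
  have ncard_eq : {x : Projectivization F (Fin 3 → F) | eval x.rep f = 0}.ncard =
      (PlaneCurve.zeros f).card := by
    rw [← Set.ncard_coe_finset]
    exact congr_arg Set.ncard (Set.ext fun _ => PlaneCurve.mem_zeros.symm)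
  rw [ncard_eq, Nat.succ_sub_one]
  obtain h | ⟨h, -⟩ :=
    PlaneCurve.card_zeros_le_of_not_isProductOfLinearForms hfd hf0 hnotlines
  · exact h.trans (Nat.le_succ _)
  · exact h
end
end

section
/- Let q be a prime power, X ⊂ P³ an elliptic quadric over F_q with equation F = 0, and s an integer with s ≥ 2. Let G ∈ F_q[x,y,z,t] be a homogeneous polynomial of degree s not divisible by F, and assume the curve D = X ∩ V(G) is F_q-irreducible (so D is an F_q-irreducible curve linearly equivalent to sH on X). Then the number of F_q-rational points of D is at most q(2s - 2). -/
open MvPolynomial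

noncomputable section

attribute [local instance] MvPolynomial.gradedAlgebra

/-- `Fp` defines an elliptic quadric in `P³` over the finite field `F`: it is a nonzero
quadratic form, the quadric it defines is smooth (over the algebraic closure the gradient
vanishes at no nonzero point of the quadric), and the quadric contains no `F`-rational
projective line. -/
def IsEllipticQuadric (F : Type) [Field F] (Fp : MvPolynomial (Fin 4) F) : Prop :=
  Fp ≠ 0 ∧ Fp.IsHomogeneous 2 ∧
  (∀ v : Fin 4 → AlgebraicClosure F, v ≠ 0 → MvPolynomial.aeval v Fp = 0 →
      ∃ i, MvPolynomial.aeval v (MvPolynomial.pderiv i Fp) ≠ 0) ∧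
  ¬ ∃ u w : Fin 4 → F, LinearIndependent F ![u, w] ∧
      ∀ a b : F, MvPolynomial.eval (a • u + b • w) Fp = 0

/-!
A curve `D = X ∩ V(G)` of degree `s` on the quadric `X` is counted by stereographic projection from
one of its rational points `P`. The planes through a tangent line `ℓ` of `X` at `P`, other than the
tangent plane, cut `X` in `q` conics, which cover all its rational points and meet at `P`. Away from
`P` such a conic is an affine line, on which `G` restricts to a polynomial of degree at most
`2s - 2` as soon as `ℓ` is tangent to `G = 0` as well. If none of the restrictions vanishes, this
bounds the number of rational points of `D` by `1 + q(2s - 2)`. To save the last point, one more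
root has to be missing:
* if `D` is nonsingular at `P`, the coefficients of degree `2s - 2` depend on the conic through a
  nonconstant affine function of a parameter in `F_q`, and so one of them is zero;
* if all rational points of `D` are singular, a second one is a double root on its conic.

If some restriction vanishes, `D` contains a conic `X ∩ V(L)`, so `G ≡ B L` modulo the equation of
`X` with `B` of degree `s - 1`. Since `D` is irreducible, its points all lie on `V(L)`, or `D`
equals `X ∩ V(B)` as a set and induction on `s` applies.
-/

namespace EllipticQuadric

section Homogeneous

variable {σ R : Type*} [CommRing R]

theorem aeval_smul_of_isHomogeneous {A : Type*} [CommRing A] [Algebra R A] {G : MvPolynomial σ R}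
    {n : ℕ} (hG : G.IsHomogeneous n) (r : A) (f : σ → A) :
    aeval (r • f) G = r ^ n * aeval f G := by
  rw [aeval_def, aeval_def, eval₂_eq, eval₂_eq, Finset.mul_sum]
  refine Finset.sum_congr rfl fun d hd ↦ ?_
  have hdeg : ∑ i ∈ d.support, d i = n := by
    rw [← hG (mem_support_iff.1 hd), Finsupp.weight_apply, Finsupp.sum]
    simp
  simp only [Pi.smul_apply, smul_eq_mul, mul_pow, Finset.prod_mul_distrib,
    Finset.prod_pow_eq_pow_sum, hdeg]
  ring

theorem eval_smul_of_isHomogeneous {G : MvPolynomial σ R} {n : ℕ} (hG : G.IsHomogeneous n)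
    (r : R) (v : σ → R) : eval (r • v) G = r ^ n * eval v G := by
  simpa only [aeval_eq_eval] using aeval_smul_of_isHomogeneous hG r v

theorem homogeneousComponent_add_mul {L : MvPolynomial σ R} {n : ℕ} (hL : L.IsHomogeneous n)
    (m : ℕ) (A : MvPolynomial σ R) :
    homogeneousComponent (m + n) (A * L) = homogeneousComponent m A * L := by
  have hdecompose (φ : MvPolynomial σ R) (i : ℕ) :
      (DirectSum.decompose (homogeneousSubmodule σ R) φ i : MvPolynomial σ R) =
        homogeneousComponent i φ := decomposition.decompose'_apply φ i
  simpa only [hdecompose] using DirectSum.coe_decompose_mul_add_of_right_mem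
    (homogeneousSubmodule σ R) (a := A) (i := m) hL

theorem exists_isHomogeneous_dvd_sub_mul {Q L G : MvPolynomial σ R} {d l n : ℕ}
    (hQ : Q.IsHomogeneous d) (hL : L.IsHomogeneous l) (hG : G.IsHomogeneous (n + l))
    (hd : d ≤ n + l) (h : G ∈ Ideal.span {Q, L}) :
    ∃ B : MvPolynomial σ R, B.IsHomogeneous n ∧ Q ∣ G - B * L := by
  obtain ⟨A, B, hAB⟩ := Ideal.mem_span_pair.1 h
  refine ⟨homogeneousComponent n B, homogeneousComponent_isHomogeneous _ _,
    homogeneousComponent (n + l - d) A, ?_⟩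
  have hsplit := congrArg (homogeneousComponent (n + l)) hAB
  rw [map_add, homogeneousComponent_add_mul hL, homogeneousComponent_eq_self hG] at hsplit
  nth_rw 1 [← Nat.sub_add_cancel hd] at hsplit
  rw [homogeneousComponent_add_mul hQ] at hsplit
  linear_combination -hsplit

theorem aeval_add_smul_of_isHomogeneous_one {A : Type*} [CommRing A] [Algebra R A]
    {L : MvPolynomial σ R} (hL : L.IsHomogeneous 1) (u v : σ → A) (r : A) :
    aeval (u + r • v) L = aeval u L + r * aeval v L := by
  rw [← mem_homogeneousSubmodule, homogeneousSubmodule_one_eq_span_X] at hL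
  induction hL using Submodule.span_induction with
  | mem L hL =>
    obtain ⟨i, rfl⟩ := hL
    simp
  | zero => simp
  | add L M _ _ hL hM =>
    simp only [map_add, hL, hM]
    ring
  | smul a L _ hL => simp only [map_smul, hL, smul_add, mul_smul_comm]

theorem exists_eq_sum_smul_X [Fintype σ] {L : MvPolynomial σ R} (hL : L.IsHomogeneous 1) :
    ∃ a : σ → R, L = ∑ i, a i • X i := by
  rw [← mem_homogeneousSubmodule, homogeneousSubmodule_one_eq_span_X,
    Submodule.mem_span_range_iff_exists_fun] at hL
  exact hL.imp fun _ h ↦ h.symm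

theorem eval_single_one_of_isHomogeneous [DecidableEq σ] {G : MvPolynomial σ R} {n : ℕ}
    (hG : G.IsHomogeneous n) (j : σ) :
    eval (Pi.single j 1) G = coeff (Finsupp.single j n) G := by
  rw [eval_eq, Finset.sum_eq_single (Finsupp.single j n)]
  · rcases eq_or_ne n 0 with rfl | hn
    · simp
    · simp [Finsupp.support_single _ hn]
  · intro d hd hne
    obtain ⟨i, hi, hij⟩ : ∃ i ∈ d.support, i ≠ j := by
      by_contra! hsupp
      have hd_single : d = Finsupp.single j (d j) :=
        Finsupp.eq_single_iff.2 ⟨fun i hi ↦ Finset.mem_singleton.2 (hsupp i hi), rfl⟩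
      have hdeg := hG (mem_support_iff.1 hd)
      rw [hd_single, Finsupp.weight_single, Pi.one_apply, smul_eq_mul, mul_one] at hdeg
      exact hne (hdeg ▸ hd_single)
    rw [Finset.prod_eq_zero hi, mul_zero]
    rw [Pi.single_eq_of_ne hij, zero_pow (Finsupp.mem_support_iff.1 hi)]
  · intro h
    rw [notMem_support_iff.1 h, zero_mul]

theorem eval_single_one_pderiv_of_isHomogeneous [DecidableEq σ] {G : MvPolynomial σ R} {n : ℕ}
    (hG : G.IsHomogeneous (n + 1)) {i j : σ} (hij : i ≠ j) :
    eval (Pi.single j 1) (pderiv i G) = coeff (Finsupp.single j n + Finsupp.single i 1) G := by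
  rw [eval_single_one_of_isHomogeneous hG.pderiv, Nat.add_sub_cancel, coeff_pderiv]
  simp [Finsupp.single_eq_of_ne hij]

end Homogeneous

theorem derivation_aeval {σ R A M : Type*} [Fintype σ] [CommRing R] [CommRing A] [Algebra R A]
    [AddCommGroup M] [Module A M] [Module R M] (D : Derivation R A M)
    (f : σ → A) (G : MvPolynomial σ R) :
    D (aeval f G) = ∑ i, aeval f (pderiv i G) • D (f i) := by
  classical
  induction G using MvPolynomial.induction_on with
  | C a => simp
  | add p q hp hq => simp only [map_add, hp, hq, add_smul, Finset.sum_add_distrib]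
  | mul_X p n hp =>
    simp [hp, pderiv_X, Pi.single_apply, add_smul, Finset.sum_add_distrib, Finset.smul_sum,
      mul_smul, ite_smul, apply_ite]

section WeightedDegree

variable {R : Type*} [CommRing R]

theorem coeff_prod_sum_of_natDegree_le {ι : Type*} (s : Finset ι) (g : ι → Polynomial R)
    (b : ι → ℕ) (h : ∀ i ∈ s, (g i).natDegree ≤ b i) :
    (∏ i ∈ s, g i).coeff (∑ i ∈ s, b i) = ∏ i ∈ s, (g i).coeff (b i) := by
  classical
  induction s using Finset.induction_on with
  | empty => simp
  | insert i s hi ih =>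
    have hs : ∀ j ∈ s, (g j).natDegree ≤ b j := fun j hj ↦ h j (Finset.mem_insert_of_mem hj)
    rw [Finset.prod_insert hi, Finset.sum_insert hi, Finset.prod_insert hi,
      Polynomial.coeff_mul_add_eq_of_natDegree_le (h i (Finset.mem_insert_self i s))
        ((Polynomial.natDegree_prod_le _ _).trans (Finset.sum_le_sum hs)), ih hs]

variable {σ : Type*} {w : σ → ℕ} {f : σ → Polynomial R}

theorem natDegree_prod_pow_le_weight (hf : ∀ i, (f i).natDegree ≤ w i) (d : σ →₀ ℕ) :
    (∏ i ∈ d.support, f i ^ d i).natDegree ≤ Finsupp.weight w d := by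
  rw [Finsupp.weight_apply]
  refine (Polynomial.natDegree_prod_le _ _).trans (Finset.sum_le_sum fun i _ ↦ ?_)
  exact Polynomial.natDegree_pow_le.trans (Nat.mul_le_mul_left _ (hf i))

theorem coeff_prod_pow_weight (hf : ∀ i, (f i).natDegree ≤ w i) (d : σ →₀ ℕ) :
    (∏ i ∈ d.support, f i ^ d i).coeff (Finsupp.weight w d) =
      ∏ i ∈ d.support, (f i).coeff (w i) ^ d i := by
  rw [Finsupp.weight_apply, Finsupp.sum, coeff_prod_sum_of_natDegree_le]
  · exact Finset.prod_congr rfl fun i _ ↦ Polynomial.coeff_pow_of_natDegree_le (hf i)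
  · exact fun i _ ↦ Polynomial.natDegree_pow_le.trans (Nat.mul_le_mul_left _ (hf i))

theorem natDegree_aeval_le_weightedTotalDegree (hf : ∀ i, (f i).natDegree ≤ w i)
    (G : MvPolynomial σ R) : (aeval f G).natDegree ≤ weightedTotalDegree w G := by
  rw [aeval_def, eval₂_eq]
  refine Polynomial.natDegree_sum_le_of_forall_le _ _ fun d hd ↦ ?_
  exact (Polynomial.natDegree_C_mul_le _ _).trans
    ((natDegree_prod_pow_le_weight hf d).trans (le_weightedTotalDegree w hd))

theorem coeff_aeval_of_weightedTotalDegree_le (hf : ∀ i, (f i).natDegree ≤ w i)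
    {G : MvPolynomial σ R} {n : ℕ} (hG : weightedTotalDegree w G ≤ n) :
    (aeval f G).coeff n =
      eval (fun i ↦ (f i).coeff (w i)) (weightedHomogeneousComponent w n G) := by
  classical
  rw [aeval_def, eval₂_eq, Polynomial.finsetSum_coeff, weightedHomogeneousComponent_apply,
    map_sum, Finset.sum_filter]
  refine Finset.sum_congr rfl fun d hd ↦ ?_
  rw [Polynomial.algebraMap_eq, Polynomial.coeff_C_mul]
  split_ifs with hweight
  · rw [← hweight, coeff_prod_pow_weight hf, eval_monomial]
    rfl
  · have hlt := ((le_weightedTotalDegree w hd).trans hG).lt_of_ne hweight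
    rw [Polynomial.coeff_eq_zero_of_natDegree_lt
      ((natDegree_prod_pow_le_weight hf d).trans_lt hlt), mul_zero]

end WeightedDegree

theorem eval_aeval_polynomial {σ R : Type*} [CommRing R] (f : σ → Polynomial R)
    (G : MvPolynomial σ R) (y : R) :
    (aeval f G).eval y = eval (fun i ↦ (f i).eval y) G := by
  simp only [← Polynomial.coe_aeval_eq_eval, ← aeval_eq_eval]
  exact comp_aeval_apply f (Polynomial.aeval y) G

section DirectionalDerivative

variable {σ R : Type*} [Fintype σ] [CommRing R]

theorem sum_aeval_pderiv_mul {A : Type*} [CommRing A] [Algebra R A] {L : MvPolynomial σ R}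
    (hL : L.IsHomogeneous 1) (u v : σ → A) : ∑ i, aeval v (pderiv i L) * u i = aeval u L := by
  classical
  obtain ⟨a, rfl⟩ := exists_eq_sum_smul_X hL
  simp [pderiv_X, Pi.single_apply, Algebra.smul_def]

theorem aeval_add_smul_of_isHomogeneous_two {A : Type*} [CommRing A] [Algebra R A]
    {Q : MvPolynomial σ R} (hQ : Q.IsHomogeneous 2) (u v : σ → A) (r : A) :
    aeval (u + r • v) Q =
      aeval u Q + r * ∑ i, aeval v (pderiv i Q) * u i + r ^ 2 * aeval v Q := by
  rw [← mem_homogeneousSubmodule, ← homogeneousSubmodule_one_pow, pow_two] at hQ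
  induction hQ using Submodule.mul_induction_on' with
  | mem_mul_mem L hL M hM =>
    have hgrad : ∑ i, aeval v (pderiv i (L * M)) * u i =
        aeval u L * aeval v M + aeval v L * aeval u M := by
      simp only [← sum_aeval_pderiv_mul hL u v, ← sum_aeval_pderiv_mul hM u v, Finset.sum_mul,
        Finset.mul_sum, ← Finset.sum_add_distrib, pderiv_mul, map_add, map_mul]
      exact Finset.sum_congr rfl fun i _ ↦ by ring
    rw [hgrad, map_mul, aeval_add_smul_of_isHomogeneous_one hL,
      aeval_add_smul_of_isHomogeneous_one hM, map_mul, map_mul]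
    ring
  | add p _ q _ hp hq =>
    simp only [map_add, hp, hq, add_mul, Finset.sum_add_distrib]
    ring

/-- The differential of `G` at `P`, as the linear form `v ↦ ∑ i, (∂G/∂xᵢ)(P) vᵢ` on the space of
directions. Its kernel is the tangent space at `P` of the hypersurface `G = 0`. -/
def dirDeriv (G : MvPolynomial σ R) (P : σ → R) : (σ → R) →ₗ[R] R :=
  ∑ i, eval P (pderiv i G) • LinearMap.proj i

theorem dirDeriv_apply (G : MvPolynomial σ R) (P v : σ → R) :
    dirDeriv G P v = ∑ i, eval P (pderiv i G) * v i := by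
  simp [dirDeriv]

theorem dirDeriv_single [DecidableEq σ] (G : MvPolynomial σ R) (P : σ → R) (i : σ) :
    dirDeriv G P (Pi.single i 1) = eval P (pderiv i G) := by
  simp [dirDeriv_apply, Pi.single_apply]

theorem dirDeriv_self {G : MvPolynomial σ R} {n : ℕ} (hG : G.IsHomogeneous n) (P : σ → R) :
    dirDeriv G P P = n * eval P G := by
  have heuler := congrArg (eval P) hG.sum_X_mul_pderiv
  simpa [dirDeriv_apply, mul_comm] using heuler

theorem dirDeriv_of_isHomogeneous_one {L : MvPolynomial σ R} (hL : L.IsHomogeneous 1)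
    (P v : σ → R) : dirDeriv L P v = eval v L := by
  rw [dirDeriv_apply]
  exact sum_aeval_pderiv_mul hL v P

theorem eval_add_smul_of_isHomogeneous_two {Q : MvPolynomial σ R} (hQ : Q.IsHomogeneous 2)
    (u v : σ → R) (r : R) :
    eval (u + r • v) Q = eval u Q + r * dirDeriv Q v u + r ^ 2 * eval v Q := by
  rw [dirDeriv_apply]
  exact aeval_add_smul_of_isHomogeneous_two hQ u v r

theorem aeval_C_add_X_smul_of_isHomogeneous_two {Q : MvPolynomial σ R} (hQ : Q.IsHomogeneous 2)
    (u v : σ → R) :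
    aeval (Polynomial.C ∘ u + (Polynomial.X : Polynomial R) • Polynomial.C ∘ v) Q =
      Polynomial.C (eval v Q) * Polynomial.X ^ 2 + Polynomial.C (dirDeriv Q v u) * Polynomial.X +
        Polynomial.C (eval u Q) := by
  have hC (w : σ → R) (P : MvPolynomial σ R) :
      aeval (Polynomial.C ∘ w) P = Polynomial.C (eval w P) :=
    aeval_algebraMap_apply (Polynomial R) w P
  simp only [aeval_add_smul_of_isHomogeneous_two hQ, hC, dirDeriv_apply, map_sum, map_mul,
    Function.comp_apply]
  ring

theorem eval_derivative_aeval (f : σ → Polynomial R) (G : MvPolynomial σ R) (y : R) :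
    (Polynomial.derivative (aeval f G)).eval y =
      dirDeriv G (fun i ↦ (f i).eval y) (fun i ↦ (Polynomial.derivative (f i)).eval y) := by
  have hchain := derivation_aeval Polynomial.derivative' f G
  simp only [Polynomial.derivative'_apply, smul_eq_mul] at hchain
  simp [hchain, Polynomial.eval_finsetSum, eval_aeval_polynomial, dirDeriv_apply]

end DirectionalDerivative

section Pullback

variable {σ τ R : Type*} [CommRing R] [Fintype τ] [DecidableEq τ]

/-- The polynomial `G ∘ φ` obtained from `G` by the linear substitution `φ`. -/
def pullback (φ : (τ → R) →ₗ[R] (σ → R)) : MvPolynomial σ R →ₐ[R] MvPolynomial τ R :=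
  bind₁ φ.toMatrix'.toMvPolynomial

theorem eval_pullback (φ : (τ → R) →ₗ[R] (σ → R)) (v : τ → R) (G : MvPolynomial σ R) :
    eval v (pullback φ G) = eval (φ v) G := by
  rw [← LinearMap.toMatrix'_mulVec φ v]
  simp only [pullback, ← aeval_eq_eval, aeval_bind₁]
  simp only [aeval_eq_eval, Matrix.toMvPolynomial_eval_eq_apply]

theorem isHomogeneous_pullback (φ : (τ → R) →ₗ[R] (σ → R)) {G : MvPolynomial σ R} {n : ℕ}
    (hG : G.IsHomogeneous n) : (pullback φ G).IsHomogeneous n := by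
  rw [← one_mul n]
  exact hG.aeval _ fun i ↦ φ.toMatrix'.toMvPolynomial_isHomogeneous i

theorem pullback_symm_pullback [Fintype σ] [DecidableEq σ] (e : (τ → R) ≃ₗ[R] (σ → R))
    (G : MvPolynomial σ R) :
    pullback e.symm.toLinearMap (pullback e.toLinearMap G) = G := by
  have hinv : e.toLinearMap.toMatrix' * e.symm.toLinearMap.toMatrix' = 1 := by
    rw [← LinearMap.toMatrix'_comp, LinearEquiv.comp_symm, LinearMap.toMatrix'_id]
  simp only [pullback, bind₁_bind₁, ← Matrix.toMvPolynomial_mul, hinv, Matrix.toMvPolynomial_one,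
    bind₁_X_left, AlgHom.id_apply]

theorem dirDeriv_pullback [Fintype σ] (φ : (τ → R) →ₗ[R] (σ → R)) (G : MvPolynomial σ R)
    (v u : τ → R) : dirDeriv (pullback φ G) v u = dirDeriv G (φ v) (φ u) := by
  have hchain (j : τ) : eval v (pderiv j (pullback φ G)) =
      ∑ i, eval (φ v) (pderiv i G) * eval v (pderiv j (φ.toMatrix'.toMvPolynomial i)) := by
    rw [pullback, bind₁, derivation_aeval, map_sum]
    simp only [smul_eq_mul, map_mul, ← eval_pullback]
    rfl
  have hcoord (i : σ) : ∑ j, eval v (pderiv j (φ.toMatrix'.toMvPolynomial i)) * u j = φ u i := by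
    rw [← dirDeriv_apply, dirDeriv_of_isHomogeneous_one (Matrix.toMvPolynomial_isHomogeneous _ _),
      Matrix.toMvPolynomial_eval_eq_apply, LinearMap.toMatrix'_mulVec]
  simp only [dirDeriv_apply, hchain, ← hcoord, Finset.sum_mul, Finset.mul_sum, mul_assoc]
  exact Finset.sum_comm

/-- The vector `P` represents a singular point of the intersection of the hypersurfaces `F = 0` and
`G = 0`, provided it lies on both and `F = 0` is smooth there: the tangent space of the first
hypersurface is contained in that of the second. -/
def IsSingularAt [Fintype σ] (F G : MvPolynomial σ R) (P : σ → R) : Prop :=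
  LinearMap.ker (dirDeriv F P) ≤ LinearMap.ker (dirDeriv G P)

theorem isSingularAt_pullback_iff [Fintype σ] (e : (τ → R) ≃ₗ[R] (σ → R)) {F G : MvPolynomial σ R}
    (P : τ → R) :
    IsSingularAt (pullback e.toLinearMap F) (pullback e.toLinearMap G) P ↔
      IsSingularAt F G (e P) := by
  simp only [IsSingularAt, SetLike.le_def, LinearMap.mem_ker, dirDeriv_pullback,
    LinearEquiv.coe_coe]
  exact (e.surjective.forall (p := fun v ↦ dirDeriv F (e P) v = 0 → dirDeriv G (e P) v = 0)).symm

/-- The intersection of the hypersurfaces `Q = 0` and `G = 0` contains, as a scheme, the section of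
`Q = 0` by a hyperplane. -/
def ContainsPlaneSection (Q G : MvPolynomial σ R) : Prop :=
  ∃ L : MvPolynomial σ R, L.IsHomogeneous 1 ∧ L ≠ 0 ∧ G ∈ Ideal.span {Q, L}

theorem ContainsPlaneSection.of_pullback [Finite σ] (e : (τ → R) ≃ₗ[R] (σ → R))
    {Q G : MvPolynomial σ R}
    (h : ContainsPlaneSection (pullback e.toLinearMap Q) (pullback e.toLinearMap G)) :
    ContainsPlaneSection Q G := by
  classical
  have := Fintype.ofFinite σ
  obtain ⟨L, hL, hL0, hmem⟩ := h
  refine ⟨pullback e.symm.toLinearMap L, isHomogeneous_pullback _ hL, fun h ↦ hL0 ?_, ?_⟩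
  · rw [← pullback_symm_pullback e.symm L, h, map_zero]
  · obtain ⟨A, B, hAB⟩ := Ideal.mem_span_pair.1 hmem
    refine Ideal.mem_span_pair.2 ⟨pullback e.symm.toLinearMap A, pullback e.symm.toLinearMap B, ?_⟩
    rw [← pullback_symm_pullback e G, ← hAB, map_add, map_mul, map_mul, pullback_symm_pullback]

end Pullback

section Ovoidal

variable {K : Type*} [Field K]

/-- A quadratic form whose projective quadric is nonsingular at its rational points and meets
each of its rational tangent hyperplanes in the point of tangency only. Over a finite field these
are, in four variables, the elliptic quadrics; this is the form in which smoothness and the absence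
of rational lines enter the argument. -/
structure IsOvoidal {σ : Type*} [Fintype σ] (Q : MvPolynomial σ K) : Prop where
  isHomogeneous : Q.IsHomogeneous 2
  dirDeriv_ne_zero : ∀ P ≠ 0, eval P Q = 0 → dirDeriv Q P ≠ 0
  mem_span_of_tangent : ∀ P ≠ 0, eval P Q = 0 → ∀ w, dirDeriv Q P w = 0 → eval w Q = 0 →
    w ∈ Submodule.span K {P}

theorem isOvoidal_of_isEllipticQuadric {F : Type} [Field F] {Q : MvPolynomial (Fin 4) F}
    (hQ : IsEllipticQuadric F Q) : IsOvoidal Q := by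
  obtain ⟨-, hhom, hsmooth, hline⟩ := hQ
  refine ⟨hhom, fun P hP hPQ hd ↦ ?_, fun P hP hPQ w hdw hwQ ↦ ?_⟩
  · obtain ⟨i, hi⟩ := hsmooth (algebraMap F (AlgebraicClosure F) ∘ P)
      (fun h ↦ hP (funext fun j ↦ by simpa using congrFun h j))
      (by rw [aeval_algebraMap_apply, aeval_eq_eval, hPQ, map_zero])
    rw [aeval_algebraMap_apply, aeval_eq_eval, ← dirDeriv_single, hd] at hi
    simp at hi
  · by_contra hw
    refine hline ⟨P, w, (LinearIndependent.pair_iff' hP).2 fun a ha ↦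
      hw (Submodule.mem_span_singleton.2 ⟨a, ha⟩), fun a b ↦ ?_⟩
    rw [add_comm, eval_add_smul_of_isHomogeneous_two hhom, eval_smul_of_isHomogeneous hhom,
      map_smul, hdw, hwQ, hPQ]
    simp

end Ovoidal

section Frame

variable {K V : Type*} [Field K] [AddCommGroup V] [Module K V]

theorem exists_mem_notMem_of_finrank_lt {S T : Submodule K V} [FiniteDimensional K T]
    (h : Module.finrank K T < Module.finrank K S) : ∃ v ∈ S, v ∉ T := by
  by_contra! hST
  exact h.not_ge (Submodule.finrank_mono hST)

theorem exists_frame (hV : Module.finrank K V = 4) {φ γ : Module.Dual K V} {P : V} (hφ : φ ≠ 0)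
    (hP : P ≠ 0) (hφP : φ P = 0) :
    ∃ e : (Fin 4 → K) ≃ₗ[K] V, e (Pi.single 3 1) = P ∧ (∀ v, φ (e v) = v 0) ∧
      γ (e (Pi.single 2 1)) = 0 := by
  have : FiniteDimensional K V := .of_finrank_pos (by omega)
  obtain ⟨e₀, he₀⟩ : ∃ e₀, φ e₀ = 1 := LinearMap.surjective hφ 1
  have hker : Module.finrank K (LinearMap.ker φ) = 3 := by
    have := Module.Dual.finrank_ker_add_one_of_ne_zero hφ
    omega
  have hinter : 2 ≤ Module.finrank K ↥(LinearMap.ker φ ⊓ LinearMap.ker γ) := by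
    have hrank := (φ.prod γ).finrank_range_add_finrank_ker
    have hrange := (LinearMap.range (φ.prod γ)).finrank_le
    rw [LinearMap.ker_prod] at hrank
    simp only [Module.finrank_prod, Module.finrank_self] at hrange
    omega
  obtain ⟨e₂, ⟨hφ₂, hγ₂⟩, he₂⟩ : ∃ e₂ ∈ LinearMap.ker φ ⊓ LinearMap.ker γ,
      e₂ ∉ Submodule.span K {P} :=
    exists_mem_notMem_of_finrank_lt (by rw [finrank_span_singleton hP]; omega)
  obtain ⟨e₁, hφ₁, he₁⟩ : ∃ e₁ ∈ LinearMap.ker φ, e₁ ∉ Submodule.span K (Set.range ![e₂, P]) :=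
    exists_mem_notMem_of_finrank_lt (by
      have := finrank_range_le_card (R := K) ![e₂, P]
      simp only [Set.finrank, Fintype.card_fin] at this
      omega)
  have hspan : Submodule.span K (Set.range ![e₁, e₂, P]) ≤ LinearMap.ker φ := by
    rw [Submodule.span_le, Set.range_subset_iff]
    intro i
    fin_cases i
    exacts [hφ₁, hφ₂, hφP]
  have hli : LinearIndependent K ![e₀, e₁, e₂, P] := by
    refine linearIndependent_finCons.2 ⟨linearIndependent_finCons.2 ⟨linearIndependent_finCons.2
      ⟨.of_subsingleton 0 hP, by simpa using he₂⟩, he₁⟩, fun h ↦ ?_⟩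
    exact one_ne_zero (he₀.symm.trans (hspan h))
  let b := basisOfLinearIndependentOfCardEqFinrank hli (by simp [hV])
  have hb : ⇑b = ![e₀, e₁, e₂, P] := coe_basisOfLinearIndependentOfCardEqFinrank _ _
  refine ⟨b.equivFun.symm, ?_, fun v ↦ ?_, ?_⟩
  · simp [hb]
  · simp only [SetLike.mem_coe, LinearMap.mem_ker] at hφ₁ hφ₂
    simp [Module.Basis.equivFun_symm_apply, hb, Fin.sum_univ_four, he₀, hφ₁, hφ₂, hφP]
  · simpa [hb] using hγ₂

end Frame

section NormalForm

variable {K : Type*} [Field K]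

/-- A quadratic form in the coordinates of a tangent frame: its quadric contains the point
`(0 : 0 : 0 : 1)`, and is met there by its tangent plane `x₀ = 0` in no other rational point. -/
structure IsTangentNormalForm (Q : MvPolynomial (Fin 4) K) : Prop where
  isHomogeneous : Q.IsHomogeneous 2
  eval_single_three : eval (Pi.single 3 1) Q = 0
  dirDeriv_single_three : dirDeriv Q (Pi.single 3 1) = LinearMap.proj 0
  anisotropic : ∀ a b, eval ![0, a, b, 0] Q = 0 → a = 0 ∧ b = 0

theorem IsOvoidal.exists_isTangentNormalForm {Q : MvPolynomial (Fin 4) K} (hQ : IsOvoidal Q)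
    {P : Fin 4 → K} (hP : P ≠ 0) (hPQ : eval P Q = 0) (γ : Module.Dual K (Fin 4 → K)) :
    ∃ e : (Fin 4 → K) ≃ₗ[K] (Fin 4 → K), IsTangentNormalForm (pullback e.toLinearMap Q) ∧
      e (Pi.single 3 1) = P ∧ γ (e (Pi.single 2 1)) = 0 := by
  have hφP : dirDeriv Q P P = 0 := by rw [dirDeriv_self hQ.isHomogeneous, hPQ, mul_zero]
  obtain ⟨e, he₃, he, he₂⟩ := exists_frame (γ := γ) (by simp) (hQ.dirDeriv_ne_zero P hP hPQ) hP
    hφP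
  refine ⟨e, ⟨isHomogeneous_pullback _ hQ.isHomogeneous, ?_, ?_, fun a b hab ↦ ?_⟩, he₃, he₂⟩
  · rw [eval_pullback, LinearEquiv.coe_coe, he₃, hPQ]
  · refine LinearMap.ext fun v ↦ ?_
    rw [dirDeriv_pullback, LinearEquiv.coe_coe, he₃, he, LinearMap.proj_apply]
  · rw [eval_pullback] at hab
    obtain ⟨r, hr⟩ := Submodule.mem_span_singleton.1
      (hQ.mem_span_of_tangent P hP hPQ _ ((he _).trans (by simp)) hab)
    rw [← he₃, ← map_smul, e.injective.eq_iff] at hr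
    exact ⟨by simpa using (congrFun hr 1).symm, by simpa using (congrFun hr 2).symm⟩

namespace IsTangentNormalForm

variable {Q : MvPolynomial (Fin 4) K} (hQ : IsTangentNormalForm Q)
include hQ

theorem aeval_eq {A : Type*} [CommRing A] [Algebra K A] (f : Fin 4 → A) :
    aeval f Q = f 0 * f 3 + aeval ![f 0, f 1, f 2, 0] Q := by
  have hf : f = ![f 0, f 1, f 2, 0] + f 3 • (algebraMap K A ∘ Pi.single 3 1) := by
    ext1 i
    fin_cases i <;> simp
  have hgrad (i : Fin 4) : aeval (algebraMap K A ∘ Pi.single 3 1) (pderiv i Q) =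
      algebraMap K A (Pi.single (M := fun _ ↦ K) i 1 0) := by
    rw [aeval_algebraMap_apply, aeval_eq_eval, ← dirDeriv_single, hQ.dirDeriv_single_three]
    rfl
  have hpairing : ∑ i, aeval (algebraMap K A ∘ Pi.single 3 1) (pderiv i Q) *
      ![f 0, f 1, f 2, 0] i = f 0 := by
    simp [hgrad, Fin.sum_univ_four]
  conv_lhs => rw [hf]
  rw [aeval_add_smul_of_isHomogeneous_two hQ.isHomogeneous, aeval_algebraMap_apply, aeval_eq_eval,
    hQ.eval_single_three, hpairing, map_zero]
  ring

theorem eval_single_two_ne_zero : eval (Pi.single 2 1) Q ≠ 0 := by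
  intro h
  refine one_ne_zero (hQ.anisotropic 0 1 ?_).2
  have hvec : ![0, 0, 1, 0] = (Pi.single 2 1 : Fin 4 → K) := by
    ext1 i
    fin_cases i <;> simp
  rw [hvec, h]

end IsTangentNormalForm

/-- The affine parametrization of the conic cut out on the quadric `Q = 0` by the plane
`x₁ = c x₀`, when `Q` is in tangent normal form: the stereographic projection from `(0 : 0 : 0 : 1)`
maps the conic minus that point to the affine line. -/
def conicParam (Q : MvPolynomial (Fin 4) K) (c : K) : Fin 4 → Polynomial K :=
  ![1, Polynomial.C c, Polynomial.X, -aeval ![1, Polynomial.C c, Polynomial.X, 0] Q]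

namespace IsTangentNormalForm

variable {Q : MvPolynomial (Fin 4) K} (hQ : IsTangentNormalForm Q)
include hQ

theorem aeval_conicParam (c : K) : aeval (conicParam Q c) Q = 0 := by
  rw [hQ.aeval_eq]
  simp [conicParam]

theorem eq_smul_conicParam {A : Type*} [CommRing A] [Algebra K A] {f : Fin 4 → A}
    (hf : aeval f Q = 0) {c : K} (hc : f 1 = algebraMap K A c * f 0) {u : A} (hu : f 0 * u = 1) :
    f = f 0 • fun i ↦ Polynomial.aeval (f 2 * u) (conicParam Q c i) := by
  have hscale₂ : f 0 * (f 2 * u) = f 2 := by rw [mul_left_comm, hu, mul_one]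
  have hlast : Polynomial.aeval (f 2 * u) (conicParam Q c 3) =
      -aeval ![1, algebraMap K A c, f 2 * u, 0] Q := by
    have hcomp : ![1, algebraMap K A c, f 2 * u, 0] =
        fun i ↦ Polynomial.aeval (f 2 * u) (![1, Polynomial.C c, Polynomial.X, 0] i) := by
      ext1 i
      fin_cases i <;> simp
    rw [hcomp, ← comp_aeval_apply]
    exact map_neg (Polynomial.aeval (f 2 * u)) _
  have hscale : ![f 0, f 1, f 2, 0] = f 0 • ![1, algebraMap K A c, f 2 * u, 0] := by
    ext1 i
    fin_cases i
    · simp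
    · simp [hc, mul_comm]
    · simp [hscale₂]
    · simp
  rw [hQ.aeval_eq, hscale, aeval_smul_of_isHomogeneous hQ.isHomogeneous] at hf
  ext1 i
  rw [Pi.smul_apply, smul_eq_mul]
  fin_cases i
  · simp [conicParam]
  · simp [conicParam, hc, mul_comm]
  · simp [conicParam, hscale₂]
  · simp only [Fin.reduceFinMk, hlast]
    linear_combination u * hf + (-f 3 - f 0 * aeval ![1, algebraMap K A c, f 2 * u, 0] Q) * hu

theorem exists_eq_smul_of_eval_eq_zero {w : Fin 4 → K} (hw : eval w Q = 0) :
    (∃ r : K, w = r • Pi.single 3 1) ∨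
      ∃ (r c y : K), w = r • fun i ↦ (conicParam Q c i).eval y := by
  rcases eq_or_ne (w 0) 0 with h0 | h0
  · left
    rw [← aeval_eq_eval, hQ.aeval_eq, h0, zero_mul, zero_add] at hw
    obtain ⟨h1, h2⟩ := hQ.anisotropic _ _ hw
    refine ⟨w 3, funext fun i ↦ ?_⟩
    fin_cases i <;> simp [h0, h1, h2]
  · exact .inr ⟨w 0, w 1 / w 0, w 2 * (w 0)⁻¹, hQ.eq_smul_conicParam hw
      (div_mul_cancel₀ _ h0).symm (mul_inv_cancel₀ h0)⟩

end IsTangentNormalForm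

/-- The degrees of the coordinates of `conicParam Q c`. -/
def conicWeight : Fin 4 → ℕ := ![0, 0, 1, 2]

theorem weight_conicWeight (d : Fin 4 →₀ ℕ) : Finsupp.weight conicWeight d = d 2 + 2 * d 3 := by
  simp [Finsupp.weight_apply, Finsupp.sum_fintype, Fin.sum_univ_four, conicWeight, mul_comm]

namespace IsTangentNormalForm

variable {Q : MvPolynomial (Fin 4) K} (hQ : IsTangentNormalForm Q)
include hQ

theorem conicParam_three (c : K) :
    conicParam Q c 3 = Polynomial.C (-eval (Pi.single 2 1) Q) * Polynomial.X ^ 2 +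
      Polynomial.C (-dirDeriv Q (Pi.single 2 1) ![1, c, 0, 0]) * Polynomial.X +
        Polynomial.C (-eval ![1, c, 0, 0] Q) := by
  have hline : ![1, Polynomial.C c, Polynomial.X, 0] =
      Polynomial.C ∘ ![1, c, 0, 0] +
        (Polynomial.X : Polynomial K) • Polynomial.C ∘ (Pi.single 2 1 : Fin 4 → K) := by
    ext1 i
    fin_cases i <;> simp
  simp only [conicParam, Matrix.cons_val, hline,
    aeval_C_add_X_smul_of_isHomogeneous_two hQ.isHomogeneous, map_neg]
  ring

theorem natDegree_conicParam_le (c : K) (i : Fin 4) :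
    (conicParam Q c i).natDegree ≤ conicWeight i := by
  fin_cases i
  · simp [conicParam]
  · simp [conicParam]
  · simp [conicParam, conicWeight]
  · simpa only [Fin.reduceFinMk, hQ.conicParam_three] using! Polynomial.natDegree_quadratic_le

theorem coeff_conicParam_conicWeight (c : K) :
    (fun i ↦ (conicParam Q c i).coeff (conicWeight i)) = ![1, c, 1, -eval (Pi.single 2 1) Q] := by
  ext1 i
  fin_cases i
  · simp [conicParam, conicWeight]
  · simp [conicParam, conicWeight]
  · simp [conicParam, conicWeight]
  · simp [hQ.conicParam_three, conicWeight]

end IsTangentNormalForm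

section LeadingCoefficient

variable {G : MvPolynomial (Fin 4) K} {k : ℕ} (hG : G.IsHomogeneous (k + 2))
include hG

theorem sum_eq_of_coeff_ne_zero {d : Fin 4 →₀ ℕ} (hd : coeff d G ≠ 0) :
    d 0 + d 1 + d 2 + d 3 = k + 2 := by
  rw [← hG hd]
  simp [Finsupp.weight_apply, Finsupp.sum_fintype, Fin.sum_univ_four]

theorem weightedTotalDegree_conicWeight_le (hG₃ : eval (Pi.single 3 1) G = 0)
    (hG₂ : dirDeriv G (Pi.single 3 1) (Pi.single 2 1) = 0) :
    weightedTotalDegree conicWeight G ≤ 2 * (k + 1) := by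
  rw [eval_single_one_of_isHomogeneous hG] at hG₃
  rw [dirDeriv_single, eval_single_one_pderiv_of_isHomogeneous hG (by decide)] at hG₂
  refine Finset.sup_le fun d hd ↦ ?_
  have hd' := mem_support_iff.1 hd
  have hsum := sum_eq_of_coeff_ne_zero hG hd'
  have hd₃ : d 3 ≠ k + 2 := by
    intro h
    have hdeq : d = Finsupp.single 3 (k + 2) := by
      ext i
      fin_cases i <;> simp <;> omega
    exact hd' (hdeq ▸ hG₃)
  have hd₂ : ¬ (d 3 = k + 1 ∧ d 2 = 1) := by
    intro h
    have hdeq : d = Finsupp.single 3 (k + 1) + Finsupp.single 2 1 := by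
      ext i
      fin_cases i <;> simp <;> omega
    exact hd' (hdeq ▸ hG₂)
  rw [weight_conicWeight]
  omega

theorem eval_weightedHomogeneousComponent_conicWeight (c b : K) :
    eval ![1, c, 1, b] (weightedHomogeneousComponent conicWeight (2 * (k + 1)) G) =
      eval ![1, 0, 1, b] (weightedHomogeneousComponent conicWeight (2 * (k + 1)) G) +
        c * (dirDeriv G (Pi.single 3 1) (Pi.single 1 1) * b ^ (k + 1)) := by
  classical
  let d₁ : Fin 4 →₀ ℕ := Finsupp.single 3 (k + 1) + Finsupp.single 1 1
  have hd₁ : Finsupp.weight conicWeight d₁ = 2 * (k + 1) := by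
    simp [weight_conicWeight, d₁]
  have hcoeff : dirDeriv G (Pi.single 3 1) (Pi.single 1 1) = coeff d₁ G := by
    rw [dirDeriv_single, eval_single_one_pderiv_of_isHomogeneous hG (by decide)]
  rw [← sub_eq_iff_eq_add', hcoeff, eval_eq', eval_eq', ← Finset.sum_sub_distrib,
    Finset.sum_eq_single d₁]
  · rw [coeff_weightedHomogeneousComponent, if_pos hd₁]
    simp [Fin.prod_univ_four, d₁, mul_left_comm]
  · intro d hd hne
    rw [mem_support_iff, coeff_weightedHomogeneousComponent, ite_ne_right_iff,
      weight_conicWeight] at hd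
    have hsum := sum_eq_of_coeff_ne_zero hG hd.2
    have hzero : d 1 = 0 := by
      by_contra h
      refine hne ?_
      ext i
      fin_cases i <;> simp [d₁] <;> omega
    simp [Fin.prod_univ_four, hzero]
  · intro h
    simp [notMem_support_iff.1 h]

end LeadingCoefficient

namespace IsTangentNormalForm

variable {Q : MvPolynomial (Fin 4) K} (hQ : IsTangentNormalForm Q) {G : MvPolynomial (Fin 4) K}
  {k : ℕ} (hG : G.IsHomogeneous (k + 2)) (hG₃ : eval (Pi.single 3 1) G = 0)
  (hG₂ : dirDeriv G (Pi.single 3 1) (Pi.single 2 1) = 0)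
include hQ hG hG₃ hG₂

theorem natDegree_aeval_conicParam_le (c : K) :
    (aeval (conicParam Q c) G).natDegree ≤ 2 * (k + 1) :=
  (natDegree_aeval_le_weightedTotalDegree (hQ.natDegree_conicParam_le c) G).trans
    (weightedTotalDegree_conicWeight_le hG hG₃ hG₂)

theorem exists_coeff_aeval_conicParam_eq_zero
    (hG₁ : dirDeriv G (Pi.single 3 1) (Pi.single 1 1) ≠ 0) :
    ∃ c, (aeval (conicParam Q c) G).coeff (2 * (k + 1)) = 0 := by
  have hslope := mul_ne_zero hG₁ (pow_ne_zero (k + 1) (neg_ne_zero.2 hQ.eval_single_two_ne_zero))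
  refine ⟨-eval ![1, 0, 1, -eval (Pi.single 2 1) Q]
    (weightedHomogeneousComponent conicWeight (2 * (k + 1)) G) /
      (dirDeriv G (Pi.single 3 1) (Pi.single 1 1) * (-eval (Pi.single 2 1) Q) ^ (k + 1)), ?_⟩
  rw [coeff_aeval_of_weightedTotalDegree_le (hQ.natDegree_conicParam_le _)
    (weightedTotalDegree_conicWeight_le hG hG₃ hG₂), hQ.coeff_conicParam_conicWeight,
    eval_weightedHomogeneousComponent_conicWeight hG, div_mul_cancel₀ _ hslope, add_neg_cancel]

end IsTangentNormalForm

end NormalForm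

section PlaneSection

theorem isPrime_span_image_X {σ R : Type*} [CommRing R] [IsDomain R] (s : Set σ) :
    (Ideal.span (X '' s : Set (MvPolynomial σ R))).IsPrime := by
  classical
  let I : Ideal (MvPolynomial σ R) := Ideal.span (X '' s)
  let ψ : MvPolynomial σ R →ₐ[R] MvPolynomial σ R := aeval fun i ↦ if i ∈ s then 0 else X i
  have hmk : (Ideal.Quotient.mkₐ R I).comp ψ = Ideal.Quotient.mkₐ R I := by
    refine algHom_ext fun i ↦ ?_
    by_cases hi : i ∈ s
    · have hX : X i ∈ I := Ideal.subset_span (Set.mem_image_of_mem X hi)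
      simpa [ψ, hi] using (Ideal.Quotient.eq_zero_iff_mem.2 hX).symm
    · simp [ψ, hi]
  suffices hker : I = RingHom.ker ψ by
    change I.IsPrime
    exact hker ▸ RingHom.ker_isPrime ψ
  refine le_antisymm (Ideal.span_le.2 ?_) fun G hG ↦ ?_
  · rintro _ ⟨i, hi, rfl⟩
    simp [ψ, hi]
  · rw [← Ideal.Quotient.eq_zero_iff_mem, ← Ideal.Quotient.mkₐ_eq_mk R, ← hmk, AlgHom.comp_apply,
      hG, map_zero]

theorem mem_span_pair_of_mul_mem {R : Type*} [CommRing R] [IsDomain R] {p Q L G : R}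
    (hp : Prime p) (hpL : ¬ p ∣ L) (hprime : (Ideal.span {p, L}).IsPrime)
    (hQ : Q ∉ Ideal.span {p, L}) (h : p * G ∈ Ideal.span {Q, L}) : G ∈ Ideal.span {Q, L} := by
  obtain ⟨A, B, hAB⟩ := Ideal.mem_span_pair.1 h
  have hAQ : A * Q ∈ Ideal.span {p, L} :=
    Ideal.mem_span_pair.2 ⟨G, -B, by linear_combination -hAB⟩
  obtain ⟨a, b, rfl⟩ := Ideal.mem_span_pair.1 ((hprime.mem_or_mem hAQ).resolve_right hQ)
  have hdvd : p ∣ L * (B + b * Q) := ⟨G - a * Q, by linear_combination hAB⟩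
  obtain ⟨B', hB'⟩ := (hp.dvd_or_dvd hdvd).resolve_left hpL
  exact Ideal.mem_span_pair.2 ⟨a, B', mul_left_cancel₀ hp.ne_zero (by
    linear_combination hAB - L * hB')⟩

theorem isHomogeneous_X_sub_C_mul_X {σ R : Type*} [CommRing R] (i j : σ) (c : R) :
    (X i - C c * X j : MvPolynomial σ R).IsHomogeneous 1 :=
  (isHomogeneous_X _ _).sub ((isHomogeneous_X _ _).C_mul _)

variable {K : Type*} [Field K] {Q : MvPolynomial (Fin 4) K}

theorem IsTangentNormalForm.mem_span_of_X_zero_mul_mem (hQ : IsTangentNormalForm Q) (c : K)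
    {G : MvPolynomial (Fin 4) K} (h : X 0 * G ∈ Ideal.span {Q, X 1 - C c * X 0}) :
    G ∈ Ideal.span {Q, X 1 - C c * X 0} := by
  have hspan : Ideal.span {X 0, X 1 - C c * X 0} =
      Ideal.span (X '' {0, 1} : Set (MvPolynomial (Fin 4) K)) := by
    rw [Ideal.span_pair_sub_mul_left, Set.image_pair]
  refine mem_span_pair_of_mul_mem X_prime ?_ (hspan ▸ isPrime_span_image_X {0, 1}) ?_ h
  · rintro ⟨B, hB⟩
    have := congrArg (eval (Pi.single 1 1)) hB
    simp at this
  · intro hmem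
    obtain ⟨A, B, hAB⟩ := Ideal.mem_span_pair.1 hmem
    refine hQ.eval_single_two_ne_zero ?_
    rw [← hAB]
    simp

theorem IsTangentNormalForm.mem_span_of_aeval_conicParam_eq_zero (hQ : IsTangentNormalForm Q)
    (c : K) {G : MvPolynomial (Fin 4) K} {n : ℕ} (hG : G.IsHomogeneous n)
    (h : aeval (conicParam Q c) G = 0) : G ∈ Ideal.span {Q, X 1 - C c * X 0} := by
  -- Once `x₀` is inverted, the generic point of the conic is a multiple of a point of `conicParam`.
  let I : Ideal (MvPolynomial (Fin 4) K) := Ideal.span {Q, X 1 - C c * X 0}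
  let x₀ : MvPolynomial (Fin 4) K ⧸ I := Ideal.Quotient.mk I (X 0)
  have hx₀ : Submonoid.powers x₀ ≤ nonZeroDivisors _ := by
    refine Submonoid.powers_le.2 (mem_nonZeroDivisors_iff_left.2 fun a ha ↦ ?_)
    obtain ⟨A, rfl⟩ := Ideal.Quotient.mk_surjective a
    rw [← map_mul, Ideal.Quotient.eq_zero_iff_mem] at ha
    exact Ideal.Quotient.eq_zero_iff_mem.2 (hQ.mem_span_of_X_zero_mul_mem c ha)
  let S := Localization.Away x₀
  let θ : MvPolynomial (Fin 4) K →ₐ[K] S :=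
    (IsScalarTower.toAlgHom K _ S).comp (Ideal.Quotient.mkₐ K I)
  have hθ (A : MvPolynomial (Fin 4) K) : θ A = 0 ↔ A ∈ I := by
    rw [← Ideal.Quotient.eq_zero_iff_mem]
    exact map_eq_zero_iff _ (IsLocalization.injective S hx₀)
  obtain ⟨u, hu⟩ := (IsLocalization.Away.algebraMap_isUnit (S := S) x₀).exists_right_inv
  have hθX (A : MvPolynomial (Fin 4) K) : θ A = aeval (fun i ↦ θ (X i)) A := by
    rw [← comp_aeval_apply, aeval_X_left_apply]
  have hcurve : (fun i ↦ θ (X i)) =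
      θ (X 0) • fun i ↦ Polynomial.aeval (θ (X 2) * u) (conicParam Q c i) := by
    refine hQ.eq_smul_conicParam ?_ ?_ hu
    · rw [← hθX, hθ]
      exact Ideal.subset_span (by simp)
    · have hL : θ (X 1 - C c * X 0) = 0 := (hθ _).2 (Ideal.subset_span (by simp))
      rwa [map_sub, sub_eq_zero, map_mul, ← algebraMap_eq, AlgHom.commutes] at hL
  rw [← hθ, hθX, hcurve, aeval_smul_of_isHomogeneous hG, ← comp_aeval_apply, h, map_zero, mul_zero]

end PlaneSection

open scoped LinearAlgebra.Projectivization

section RationalZeros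

variable {σ K : Type*} [Field K]

/-- The rational points of the intersection of the hypersurfaces `F = 0` and `G = 0` in the
projective space with coordinates indexed by `σ`. The condition does not depend on the
representatives when `F` and `G` are homogeneous. -/
def rationalZeros (F G : MvPolynomial σ K) : Set (ℙ K (σ → K)) :=
  {x | eval x.rep F = 0 ∧ eval x.rep G = 0}

variable {F G : MvPolynomial σ K} {m n : ℕ}

theorem eval_smul_eq_zero_iff (hG : G.IsHomogeneous n) {r : K} (hr : r ≠ 0) (v : σ → K) :
    eval (r • v) G = 0 ↔ eval v G = 0 := by
  rw [eval_smul_of_isHomogeneous hG, mul_eq_zero_iff_left (pow_ne_zero n hr)]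

theorem mk_mem_rationalZeros_iff (hF : F.IsHomogeneous m) (hG : G.IsHomogeneous n) {v : σ → K}
    (hv : v ≠ 0) :
    Projectivization.mk K v hv ∈ rationalZeros F G ↔ eval v F = 0 ∧ eval v G = 0 := by
  obtain ⟨a, ha⟩ := Projectivization.exists_smul_eq_mk_rep K v hv
  rw [rationalZeros, Set.mem_ofPred_eq, ← ha, Units.smul_def, eval_smul_eq_zero_iff hF a.ne_zero,
    eval_smul_eq_zero_iff hG a.ne_zero]

theorem ncard_rationalZeros_pullback [Fintype σ] [DecidableEq σ] (hF : F.IsHomogeneous m)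
    (hG : G.IsHomogeneous n) (e : (σ → K) ≃ₗ[K] (σ → K)) :
    (rationalZeros (pullback e.toLinearMap F) (pullback e.toLinearMap G)).ncard =
      (rationalZeros F G).ncard := by
  have hpreimage : rationalZeros (pullback e.toLinearMap F) (pullback e.toLinearMap G) =
      Projectivization.map e.toLinearMap e.injective ⁻¹' rationalZeros F G := by
    ext x
    induction x using Projectivization.ind with | h v hv => ?_
    rw [Set.mem_preimage, Projectivization.map_mk, mk_mem_rationalZeros_iff hF hG,
      mk_mem_rationalZeros_iff (isHomogeneous_pullback _ hF) (isHomogeneous_pullback _ hG),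
      eval_pullback, eval_pullback]
  rw [hpreimage]
  refine Set.ncard_preimage_of_injective_subset_range (Projectivization.map_injective _ _)
    fun x _ ↦ ?_
  induction x using Projectivization.ind with | h v hv => ?_
  exact ⟨.mk K (e.symm v) (by simpa using hv), by simp [Projectivization.map_mk]⟩

end RationalZeros

section Counting

theorem one_add_sum_le_card_mul {ι : Type*} [Fintype ι] {f : ι → ℕ} {n : ℕ} (hf : ∀ i, f i ≤ n)
    {j : ι} (hj : f j < n) : 1 + ∑ i, f i ≤ Fintype.card ι * n := by
  have hlt : ∑ i, f i < ∑ _i : ι, n :=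
    Finset.sum_lt_sum (fun i _ ↦ hf i) ⟨j, Finset.mem_univ j, hj⟩
  rw [Finset.sum_const, Finset.card_univ, smul_eq_mul] at hlt
  omega

variable {K : Type*} [Field K]

theorem ncard_isRoot_eq [DecidableEq K] {f : Polynomial K} (hf : f ≠ 0) :
    {y | f.IsRoot y}.ncard = f.roots.toFinset.card := by
  rw [← Set.ncard_coe_finset]
  congr 1
  ext y
  simp [hf]

theorem ncard_isRoot_le {f : Polynomial K} (hf : f ≠ 0) :
    {y | f.IsRoot y}.ncard ≤ f.natDegree := by
  classical
  rw [ncard_isRoot_eq hf]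
  exact (Multiset.toFinset_card_le _).trans f.card_roots'

theorem ncard_isRoot_lt_of_isRoot_derivative {f : Polynomial K} (hf : f ≠ 0) {y : K}
    (hy : f.IsRoot y) (hy' : f.derivative.IsRoot y) : {y | f.IsRoot y}.ncard < f.natDegree := by
  classical
  have hmult : 1 < f.roots.count y := by
    rw [Polynomial.count_roots]
    exact (Polynomial.one_lt_rootMultiplicity_iff_isRoot hf).2 ⟨hy, hy'⟩
  rw [ncard_isRoot_eq hf]
  refine lt_of_lt_of_le (lt_of_le_of_ne (Multiset.toFinset_card_le _) fun h ↦ ?_) f.card_roots'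
  exact hmult.not_ge
    (Multiset.nodup_iff_count_le_one.1 (Multiset.toFinset_card_eq_card_iff_nodup.1 h) y)

namespace IsTangentNormalForm

variable [Fintype K] {Q G : MvPolynomial (Fin 4) K} (hQ : IsTangentNormalForm Q)
include hQ

theorem ncard_rationalZeros_le_one_add_sum {n : ℕ} (hG : G.IsHomogeneous n) :
    (rationalZeros Q G).ncard ≤
      1 + ∑ c, {y | (aeval (conicParam Q c) G).IsRoot y}.ncard := by
  have hne (c y : K) : (fun i ↦ (conicParam Q c i).eval y) ≠ 0 := fun h ↦ by
    simpa [conicParam] using congrFun h 0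
  let P : ℙ K (Fin 4 → K) := .mk K (Pi.single 3 1) (by simp)
  let φ (c y : K) : ℙ K (Fin 4 → K) := .mk K _ (hne c y)
  have hcover : rationalZeros Q G ⊆
      insert P (⋃ c, φ c '' {y | (aeval (conicParam Q c) G).IsRoot y}) := by
    intro x hx
    rcases hQ.exists_eq_smul_of_eval_eq_zero hx.1 with ⟨r, hr⟩ | ⟨r, c, y, hr⟩
    · left
      rw [← x.mk_rep, Projectivization.mk_eq_mk_iff']
      exact ⟨r, hr.symm⟩
    · have hr0 : r ≠ 0 := fun h ↦ x.rep_nonzero (by rw [hr, h, zero_smul])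
      refine .inr (Set.mem_iUnion.2 ⟨c, y, ?_, ?_⟩)
      · have hx₂ := hx.2
        rw [hr, eval_smul_eq_zero_iff hG hr0] at hx₂
        rwa [Set.mem_ofPred_eq, Polynomial.IsRoot, eval_aeval_polynomial]
      · rw [← x.mk_rep, eq_comm, Projectivization.mk_eq_mk_iff']
        exact ⟨r, hr.symm⟩
  calc (rationalZeros Q G).ncard
      ≤ (⋃ c, φ c '' {y | (aeval (conicParam Q c) G).IsRoot y}).ncard + 1 :=
        (Set.ncard_le_ncard hcover (Set.toFinite _)).trans (Set.ncard_insert_le _ _)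
    _ ≤ ∑ c, {y | (aeval (conicParam Q c) G).IsRoot y}.ncard + 1 := by
        gcongr
        exact (Set.ncard_iUnion_le_of_fintype _).trans
          (Finset.sum_le_sum fun c _ ↦ Set.ncard_image_le (Set.toFinite _))
    _ = _ := add_comm _ _

end IsTangentNormalForm

namespace IsTangentNormalForm

variable [Fintype K] {Q G : MvPolynomial (Fin 4) K} (hQ : IsTangentNormalForm Q)
include hQ

theorem ncard_rationalZeros_le_of_isHomogeneous_one {L : MvPolynomial (Fin 4) K}
    (hL : L.IsHomogeneous 1) (hL0 : L ≠ 0) (hL₃ : eval (Pi.single 3 1) L = 0)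
    (hL₂ : eval (Pi.single 2 1) L = 0) : (rationalZeros Q L).ncard ≤ Fintype.card K + 1 := by
  classical
  obtain ⟨a, rfl⟩ := exists_eq_sum_smul_X hL
  have ha₃ : a 3 = 0 := by simpa [Pi.single_apply] using hL₃
  have ha₂ : a 2 = 0 := by simpa [Pi.single_apply] using hL₂
  set L : MvPolynomial (Fin 4) K := ∑ i, a i • X i with hLdef
  have heval (c y : K) : (aeval (conicParam Q c) L).IsRoot y ↔ a 0 + a 1 * c = 0 := by
    simp [hLdef, Polynomial.IsRoot, Fin.sum_univ_four, conicParam, ha₂, ha₃]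
  have hroots (c : K) : {y | (aeval (conicParam Q c) L).IsRoot y}.ncard =
      if a 0 + a 1 * c = 0 then Fintype.card K else 0 := by
    simp only [heval]
    split_ifs with h <;> simp [h]
  have hunique : (Finset.univ.filter fun c ↦ a 0 + a 1 * c = 0).card ≤ 1 := by
    refine Finset.card_le_one.2 fun c hc c' hc' ↦ ?_
    simp only [Finset.mem_filter_univ] at hc hc'
    have ha₁ : a 1 ≠ 0 := fun h ↦ hL0 (by
      have ha₀ : a 0 = 0 := by simpa [h] using hc
      simp [hLdef, Fin.sum_univ_four, ha₀, h, ha₂, ha₃])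
    exact mul_left_cancel₀ ha₁ (by linear_combination hc - hc')
  have hcount := hQ.ncard_rationalZeros_le_one_add_sum hL
  simp only [hroots, ← Finset.sum_filter, Finset.sum_const, smul_eq_mul] at hcount
  nlinarith

variable {k : ℕ} (hG : G.IsHomogeneous (k + 2)) (hG₃ : eval (Pi.single 3 1) G = 0)
  (hG₂ : dirDeriv G (Pi.single 3 1) (Pi.single 2 1) = 0)
  (hconic : ∀ c, aeval (conicParam Q c) G ≠ 0)
include hG hG₃ hG₂ hconic

theorem ncard_rationalZeros_le_of_ncard_isRoot_lt {c : K}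
    (hc : {y | (aeval (conicParam Q c) G).IsRoot y}.ncard < 2 * (k + 1)) :
    (rationalZeros Q G).ncard ≤ Fintype.card K * (2 * (k + 1)) :=
  (hQ.ncard_rationalZeros_le_one_add_sum hG).trans <| one_add_sum_le_card_mul
    (fun c ↦ (ncard_isRoot_le (hconic c)).trans (hQ.natDegree_aeval_conicParam_le hG hG₃ hG₂ c)) hc

theorem ncard_rationalZeros_le_of_dirDeriv_ne_zero
    (hG₁ : dirDeriv G (Pi.single 3 1) (Pi.single 1 1) ≠ 0) :
    (rationalZeros Q G).ncard ≤ Fintype.card K * (2 * (k + 1)) := by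
  obtain ⟨c, hc⟩ := hQ.exists_coeff_aeval_conicParam_eq_zero hG hG₃ hG₂ hG₁
  refine hQ.ncard_rationalZeros_le_of_ncard_isRoot_lt hG hG₃ hG₂ hconic
    (lt_of_le_of_lt (ncard_isRoot_le (hconic c)) (lt_of_le_of_ne
      (hQ.natDegree_aeval_conicParam_le hG hG₃ hG₂ c) fun hdeg ↦ hconic c ?_))
  rwa [← Polynomial.leadingCoeff_eq_zero, Polynomial.leadingCoeff, hdeg]

theorem ncard_rationalZeros_le_of_isSingularAt_conicParam {c y : K}
    (hy : (aeval (conicParam Q c) G).IsRoot y)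
    (hsing : IsSingularAt Q G fun i ↦ (conicParam Q c i).eval y) :
    (rationalZeros Q G).ncard ≤ Fintype.card K * (2 * (k + 1)) := by
  have htangent : (aeval (conicParam Q c) G).derivative.IsRoot y := by
    rw [Polynomial.IsRoot, eval_derivative_aeval]
    refine hsing ?_
    rw [LinearMap.mem_ker, ← eval_derivative_aeval, hQ.aeval_conicParam, Polynomial.derivative_zero,
      Polynomial.eval_zero]
  exact hQ.ncard_rationalZeros_le_of_ncard_isRoot_lt hG hG₃ hG₂ hconic
    ((ncard_isRoot_lt_of_isRoot_derivative (hconic c) hy htangent).trans_le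
      (hQ.natDegree_aeval_conicParam_le hG hG₃ hG₂ c))

end IsTangentNormalForm

namespace IsOvoidal

variable {Q G : MvPolynomial (Fin 4) K} (hQ : IsOvoidal Q)
include hQ

theorem exists_isTangentNormalForm_of_not_containsPlaneSection {n : ℕ}
    (hG : G.IsHomogeneous n) (hplane : ¬ ContainsPlaneSection Q G) {P : Fin 4 → K} (hP : P ≠ 0)
    (hPQ : eval P Q = 0) :
    ∃ e : (Fin 4 → K) ≃ₗ[K] (Fin 4 → K), IsTangentNormalForm (pullback e.toLinearMap Q) ∧
      e (Pi.single 3 1) = P ∧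
      dirDeriv (pullback e.toLinearMap G) (Pi.single 3 1) (Pi.single 2 1) = 0 ∧
      ∀ c, aeval (conicParam (pullback e.toLinearMap Q) c) (pullback e.toLinearMap G) ≠ 0 := by
  obtain ⟨e, he, he₃, he₂⟩ := hQ.exists_isTangentNormalForm hP hPQ (dirDeriv G P)
  refine ⟨e, he, he₃, by rw [dirDeriv_pullback, LinearEquiv.coe_coe, he₃, he₂], fun c hc ↦ ?_⟩
  refine hplane (.of_pullback e ⟨_, isHomogeneous_X_sub_C_mul_X 1 0 c,
    fun h ↦ ?_, he.mem_span_of_aeval_conicParam_eq_zero c (isHomogeneous_pullback _ hG) hc⟩)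
  simpa using congrArg (eval (Pi.single 1 1)) h

variable [Fintype K]

theorem ncard_rationalZeros_le_of_isHomogeneous_one {L : MvPolynomial (Fin 4) K}
    (hL : L.IsHomogeneous 1) (hL0 : L ≠ 0) : (rationalZeros Q L).ncard ≤ Fintype.card K + 1 := by
  rcases (rationalZeros Q L).eq_empty_or_nonempty with h | ⟨x, hxQ, hxL⟩
  · rw [h, Set.ncard_empty]
    exact Nat.zero_le _
  obtain ⟨e, he, he₃, he₂⟩ := hQ.exists_isTangentNormalForm x.rep_nonzero hxQ (dirDeriv L x.rep)
  rw [← ncard_rationalZeros_pullback hQ.isHomogeneous hL e]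
  refine he.ncard_rationalZeros_le_of_isHomogeneous_one (isHomogeneous_pullback _ hL) ?_ ?_ ?_
  · intro h
    rw [← pullback_symm_pullback e L, h, map_zero] at hL0
    exact hL0 rfl
  · rw [eval_pullback, LinearEquiv.coe_coe, he₃, hxL]
  · rw [eval_pullback, LinearEquiv.coe_coe, ← dirDeriv_of_isHomogeneous_one hL x.rep, he₂]

variable {k : ℕ} (hG : G.IsHomogeneous (k + 2)) (hplane : ¬ ContainsPlaneSection Q G)
include hG hplane

theorem ncard_rationalZeros_le_of_not_isSingularAt {P : Fin 4 → K} (hP : P ≠ 0)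
    (hPQ : eval P Q = 0) (hPG : eval P G = 0) (hns : ¬ IsSingularAt Q G P) :
    (rationalZeros Q G).ncard ≤ Fintype.card K * (2 * (k + 1)) := by
  obtain ⟨e, he, he₃, hG₂, hconic⟩ :=
    hQ.exists_isTangentNormalForm_of_not_containsPlaneSection hG hplane hP hPQ
  have hG' := isHomogeneous_pullback e.toLinearMap hG
  have hG₃ : eval (Pi.single 3 1) (pullback e.toLinearMap G) = 0 := by
    rw [eval_pullback, LinearEquiv.coe_coe, he₃, hPG]
  rw [← ncard_rationalZeros_pullback hQ.isHomogeneous hG e]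
  refine he.ncard_rationalZeros_le_of_dirDeriv_ne_zero hG' hG₃ hG₂ hconic fun hG₁ ↦ hns ?_
  rw [← he₃, ← isSingularAt_pullback_iff]
  intro v hv
  rw [LinearMap.mem_ker, he.dirDeriv_single_three, LinearMap.proj_apply] at hv
  have hself : dirDeriv (pullback e.toLinearMap G) (Pi.single 3 1) (Pi.single 3 1) = 0 := by
    rw [dirDeriv_self hG', hG₃, mul_zero]
  rw [dirDeriv_single] at hG₁ hG₂ hself
  simp [dirDeriv_apply, Fin.sum_univ_four, hv, hG₁, hG₂, hself]

theorem ncard_rationalZeros_le_of_forall_isSingularAt (hcard : 1 < (rationalZeros Q G).ncard)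
    (hsing : ∀ P ≠ 0, eval P Q = 0 → eval P G = 0 → IsSingularAt Q G P) :
    (rationalZeros Q G).ncard ≤ Fintype.card K * (2 * (k + 1)) := by
  obtain ⟨x, ⟨hxQ, hxG⟩, y, ⟨hyQ, hyG⟩, hxy⟩ := Set.one_lt_ncard_iff_nontrivial.1 hcard
  obtain ⟨e, he, he₃, hG₂, hconic⟩ :=
    hQ.exists_isTangentNormalForm_of_not_containsPlaneSection hG hplane x.rep_nonzero hxQ
  have hG' := isHomogeneous_pullback e.toLinearMap hG
  have hG₃ : eval (Pi.single 3 1) (pullback e.toLinearMap G) = 0 := by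
    rw [eval_pullback, LinearEquiv.coe_coe, he₃, hxG]
  have hyQ' : eval (e.symm y.rep) (pullback e.toLinearMap Q) = 0 := by
    rw [eval_pullback, LinearEquiv.coe_coe, e.apply_symm_apply, hyQ]
  rw [← ncard_rationalZeros_pullback hQ.isHomogeneous hG e]
  rcases he.exists_eq_smul_of_eval_eq_zero hyQ' with ⟨r, hr⟩ | ⟨r, c, t, hr⟩
  · refine absurd ?_ hxy.symm
    rw [e.symm_apply_eq, map_smul, he₃] at hr
    rw [← x.mk_rep, ← y.mk_rep, Projectivization.mk_eq_mk_iff']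
    exact ⟨r, hr.symm⟩
  · set P : Fin 4 → K := fun i ↦
      (conicParam (pullback e.toLinearMap Q) c i).eval t with hP
    rw [e.symm_apply_eq, map_smul] at hr
    have hr0 : r ≠ 0 := fun h ↦ y.rep_nonzero (by rw [hr, h, zero_smul])
    have heP : e P ≠ 0 := fun h ↦ y.rep_nonzero (by rw [hr, h, smul_zero])
    rw [hr, eval_smul_eq_zero_iff hQ.isHomogeneous hr0] at hyQ
    rw [hr, eval_smul_eq_zero_iff hG hr0] at hyG
    refine he.ncard_rationalZeros_le_of_isSingularAt_conicParam hG' hG₃ hG₂ hconic (y := t) (c := c)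
      ?_ ((isSingularAt_pullback_iff e P).2 (hsing _ heP hyQ hyG))
    rw [Polynomial.IsRoot, eval_aeval_polynomial, eval_pullback]
    exact hyG

theorem ncard_rationalZeros_le :
    (rationalZeros Q G).ncard ≤ Fintype.card K * (2 * (k + 1)) := by
  rcases le_or_gt (rationalZeros Q G).ncard 1 with hcard | hcard
  · exact hcard.trans (Nat.mul_pos Fintype.card_pos (by omega))
  by_cases hsing : ∀ P ≠ 0, eval P Q = 0 → eval P G = 0 → IsSingularAt Q G P
  · exact hQ.ncard_rationalZeros_le_of_forall_isSingularAt hG hplane hcard hsing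
  · push Not at hsing
    obtain ⟨P, hP, hPQ, hPG, hns⟩ := hsing
    exact hQ.ncard_rationalZeros_le_of_not_isSingularAt hG hplane hP hPQ hPG hns

end IsOvoidal

end Counting

section ZeroLocus

open ProjectiveSpectrum

section GradedRing

variable {A S : Type*} [CommRing A] [SetLike S A] [AddSubmonoidClass S A] (𝒜 : ℕ → S)
  [GradedRing 𝒜] {Q G B L : A}

theorem zeroLocus_pair_subset_union (h : Q ∣ G - B * L) :
    zeroLocus 𝒜 {Q, G} ⊆ zeroLocus 𝒜 {B} ∪ zeroLocus 𝒜 {L} := by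
  intro x hx
  obtain ⟨hxQ, hxG⟩ := Set.pair_subset_iff.1 hx
  rw [← zeroLocus_singleton_mul, mem_zeroLocus, Set.singleton_subset_iff]
  exact (Submodule.sub_mem_iff_right _ hxG).1 (Ideal.mem_of_dvd _ h hxQ)

theorem zeroLocus_pair_eq_of_subset (h : Q ∣ G - B * L)
    (hB : zeroLocus 𝒜 {Q, G} ⊆ zeroLocus 𝒜 {B}) : zeroLocus 𝒜 {Q, G} = zeroLocus 𝒜 {Q, B} := by
  refine Set.Subset.antisymm (fun x hx ↦ ?_) fun x hx ↦ ?_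
  · exact Set.pair_subset_iff.2
      ⟨(Set.pair_subset_iff.1 hx).1, Set.singleton_subset_iff.1 (hB hx)⟩
  · obtain ⟨hxQ, hxB⟩ := Set.pair_subset_iff.1 hx
    refine Set.pair_subset_iff.2 ⟨hxQ, ?_⟩
    exact (Submodule.sub_mem_iff_left _ (Ideal.mul_mem_right _ _ hxB)).1
      (Ideal.mem_of_dvd _ h hxQ)

end GradedRing

theorem eval_eq_zero_of_zeroLocus_subset {σ R : Type*} [CommRing R] [IsDomain R]
    {s : Set (MvPolynomial σ R)} {L : MvPolynomial σ R}
    (hs : ∀ f ∈ s, SetLike.IsHomogeneousElem (homogeneousSubmodule σ R) f)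
    (hL : zeroLocus (homogeneousSubmodule σ R) s ⊆ zeroLocus (homogeneousSubmodule σ R) {L})
    {v : σ → R} (hv : v ≠ 0) (hvs : ∀ f ∈ s, eval v f = 0) : eval v L = 0 := by
  have hprime : (RingHom.ker (eval v)).IsPrime := RingHom.ker_isPrime _
  let x : ProjectiveSpectrum (homogeneousSubmodule σ R) :=
    { asHomogeneousIdeal := (RingHom.ker (eval v)).homogeneousCore _
      isPrime := hprime.homogeneousCore
      not_irrelevant_le := fun hle ↦ by
        obtain ⟨i, hi⟩ := Function.ne_iff.1 hv
        have hX : X i ∈ HomogeneousIdeal.irrelevant (homogeneousSubmodule σ R) :=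
          HomogeneousIdeal.mem_irrelevant_of_mem _ one_pos (isHomogeneous_X R i)
        have hker : X i ∈ RingHom.ker (eval v) := Ideal.toIdeal_homogeneousCore_le _ _ (hle hX)
        exact hi (by simpa using hker) }
  have hx : x ∈ zeroLocus (homogeneousSubmodule σ R) s := fun f hf ↦
    Ideal.mem_homogeneousCore_of_homogeneous_of_mem (hs f hf) (hvs f hf)
  exact Ideal.toIdeal_homogeneousCore_le _ _ (Set.singleton_subset_iff.1 (hL hx))

theorem rationalZeros_subset_of_zeroLocus_subset {σ K : Type*} [Field K]
    {Q G L : MvPolynomial σ K} {m n : ℕ} (hQ : Q.IsHomogeneous m) (hG : G.IsHomogeneous n)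
    (hL : zeroLocus (homogeneousSubmodule σ K) {Q, G} ⊆ zeroLocus (homogeneousSubmodule σ K) {L}) :
    rationalZeros Q G ⊆ rationalZeros Q L := by
  rintro x ⟨hxQ, hxG⟩
  refine ⟨hxQ, eval_eq_zero_of_zeroLocus_subset ?_ hL x.rep_nonzero ?_⟩
  · rintro f (rfl | rfl)
    exacts [⟨m, hQ⟩, ⟨n, hG⟩]
  · rintro f (rfl | rfl)
    exacts [hxQ, hxG]

theorem IsOvoidal.ncard_rationalZeros_le_max {K : Type*} [Field K] [Fintype K]
    {Q : MvPolynomial (Fin 4) K} (hQ : IsOvoidal Q) {k : ℕ} {G : MvPolynomial (Fin 4) K}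
    (hG : G.IsHomogeneous (k + 1)) (hQG : ¬ Q ∣ G)
    (hirr : IsIrreducible (zeroLocus (homogeneousSubmodule (Fin 4) K) {Q, G})) :
    (rationalZeros Q G).ncard ≤ max (Fintype.card K + 1) (Fintype.card K * (2 * k)) := by
  induction k generalizing G with
  | zero =>
    exact le_max_of_le_left (hQ.ncard_rationalZeros_le_of_isHomogeneous_one hG
      fun h ↦ hQG (h ▸ dvd_zero Q))
  | succ k ih =>
    by_cases hplane : ContainsPlaneSection Q G
    · obtain ⟨L, hL, hL0, hmem⟩ := hplane
      obtain ⟨B, hB, hdvd⟩ :=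
        exists_isHomogeneous_dvd_sub_mul hQ.isHomogeneous hL hG (by omega) hmem
      have hmono {H : MvPolynomial (Fin 4) K}
          (h : zeroLocus (homogeneousSubmodule (Fin 4) K) {Q, G} ⊆ zeroLocus _ {H}) :
          (rationalZeros Q G).ncard ≤ (rationalZeros Q H).ncard :=
        Set.ncard_le_ncard (rationalZeros_subset_of_zeroLocus_subset hQ.isHomogeneous hG h)
      rcases isPreirreducible_iff_isClosed_union_isClosed.1 hirr.isPreirreducible _ _
        (isClosed_zeroLocus _ _) (isClosed_zeroLocus _ _)
        (zeroLocus_pair_subset_union _ hdvd) with hGB | hGL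
      · have hQB : ¬ Q ∣ B := fun h ↦ hQG ((dvd_sub_left (h.mul_right L)).1 hdvd)
        rw [zeroLocus_pair_eq_of_subset _ hdvd hGB] at hirr
        calc (rationalZeros Q G).ncard ≤ (rationalZeros Q B).ncard := hmono hGB
          _ ≤ max (Fintype.card K + 1) (Fintype.card K * (2 * k)) := ih hB hQB hirr
          _ ≤ max (Fintype.card K + 1) (Fintype.card K * (2 * (k + 1))) := by gcongr; omega
      · exact le_max_of_le_left
          ((hmono hGL).trans (hQ.ncard_rationalZeros_le_of_isHomogeneous_one hL hL0))
    · exact le_max_of_le_right (hQ.ncard_rationalZeros_le hG hplane)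

end ZeroLocus

end EllipticQuadric

/-- An `F_q`-irreducible curve `D = X ∩ V(G)`, with `G` of degree `s ≥ 2`, on an elliptic
quadric `X` has at most `q(2s-2)` rational points. -/
theorem stmt_5 (q : ℕ) (hq : IsPrimePow q)
    (F : Type) [Field F] [Fintype F] (hF : Fintype.card F = q)
    (Fp : MvPolynomial (Fin 4) F) (hX : IsEllipticQuadric F Fp)
    (s : ℕ) (hs : 2 ≤ s)
    (G : MvPolynomial (Fin 4) F) (hG : G.IsHomogeneous s) (hGF : ¬ Fp ∣ G)
    (hirr : IsIrreducible
      (ProjectiveSpectrum.zeroLocus (homogeneousSubmodule (Fin 4) F) {Fp, G})) :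
    {x : Projectivization F (Fin 4 → F) |
      MvPolynomial.eval x.rep Fp = 0 ∧ MvPolynomial.eval x.rep G = 0}.ncard
        ≤ q * (2 * s - 2) := by
  obtain ⟨k, rfl⟩ : ∃ k, s = k + 1 := ⟨s - 1, by omega⟩
  have hcount : (EllipticQuadric.rationalZeros Fp G).ncard ≤ max (q + 1) (q * (2 * k)) :=
    hF ▸ (EllipticQuadric.isOvoidal_of_isEllipticQuadric hX).ncard_rationalZeros_le_max hG hGF hirr
  refine hcount.trans (max_le ?_ ?_)
  · calc q + 1 ≤ q * 2 := by linarith [hq.two_le]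
      _ ≤ q * (2 * (k + 1) - 2) := Nat.mul_le_mul_left q (by omega)
  · exact Nat.mul_le_mul_left q (by omega)
end
end

section
/- Let q be a prime power with q ≥ 5 and X ⊂ P³ an elliptic quadric over F_q with equation F = 0. Let G ∈ F_q[x,y,z,t] be a homogeneous polynomial of degree 3 not divisible by F (so that C = X ∩ V(G) is an effective divisor on X linearly equivalent to 3H). Then the number of points x ∈ P³(F_q) with F(x) = 0 and G(x) = 0 is at most max(3q + 3, min(4q, q + 1 + 4·⌊2√q⌋)). -/
open MvPolynomial

noncomputable section

/-!
Over the algebraic closure the quadric is `P¹ × P¹`, and Frobenius exchanges the two rulings. In the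
coordinates `u = z + ω t` and `v = z + ω ^ q t` of the rulings, a form of degree `d` which does not
vanish on the quadric becomes a nonzero polynomial `Γ(u, v)` of degree at most `d` in each variable,
and rational points satisfy `v = u ^ q`. If `d < q`, then `Γ(u, u ^ q)` is a nonzero polynomial of
degree at most `d (q + 1)`; if `d ≥ q`, the `q ^ 2 + 1` points of the quadric are few enough. The
affine chart comes from projecting the quadric from a rational point, which is chosen off the
section whenever possible, so that no point of the section is lost.
-/

open scoped LinearAlgebra.Projectivization

section ZeroLocus

lemma aeval_smul_of_isHomogeneous {σ R S : Type*} [CommSemiring R] [CommSemiring S] [Algebra R S]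
    {P : MvPolynomial σ R} {n : ℕ} (hP : P.IsHomogeneous n) (c : S) (v : σ → S) :
    aeval (c • v) P = c ^ n * aeval v P := by
  simp only [aeval_def, eval₂_eq, Finset.mul_sum]
  refine Finset.sum_congr rfl fun d hd => ?_
  simp only [Pi.smul_apply, smul_eq_mul, mul_pow, Finset.prod_mul_distrib,
    Finset.prod_pow_eq_pow_sum, ← hP.degree_eq_sum_deg_support hd]
  ring

lemma eval_smul_of_isHomogeneous {σ R : Type*} [CommSemiring R] {P : MvPolynomial σ R} {n : ℕ}
    (hP : P.IsHomogeneous n) (c : R) (v : σ → R) : eval (c • v) P = c ^ n * eval v P := by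
  simpa only [← MvPolynomial.aeval_eq_eval] using aeval_smul_of_isHomogeneous hP c v

variable {σ F : Type*} [Field F]

/-- The rational points of the projective hypersurface `P = 0`. The condition is tested on a chosen
representative, so this is meaningful only for homogeneous `P`. -/
def projZeroLocus (P : MvPolynomial σ F) : Set (ℙ F (σ → F)) := {x | eval x.rep P = 0}

lemma mk_mem_projZeroLocus {P : MvPolynomial σ F} {n : ℕ} (hP : P.IsHomogeneous n)
    {v : σ → F} (hv : v ≠ 0) : Projectivization.mk F v hv ∈ projZeroLocus P ↔ eval v P = 0 := by
  obtain ⟨c, hc⟩ := Projectivization.exists_smul_eq_mk_rep F v hv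
  rw [projZeroLocus, Set.mem_ofPred_eq, ← hc, Units.smul_def, eval_smul_of_isHomogeneous hP]
  simp

end ZeroLocus

section LinearSubstitution

variable {σ R : Type*} [Fintype σ] [DecidableEq σ] [CommRing R]

/-- The linear change of variables `P ↦ P ∘ f` on polynomials. -/
def linearSubst (f : (σ → R) →ₗ[R] (σ → R)) : MvPolynomial σ R →ₐ[R] MvPolynomial σ R :=
  bind₁ (LinearMap.toMatrix' f).toMvPolynomial

lemma eval_linearSubst (f : (σ → R) →ₗ[R] (σ → R)) (P : MvPolynomial σ R) (v : σ → R) :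
    eval v (linearSubst f P) = eval (f v) P := by
  rw [linearSubst, eval, eval₂Hom_bind₁]
  simp only [← eval.eq_def, Matrix.toMvPolynomial_eval_eq_apply]
  simp

lemma isHomogeneous_linearSubst {P : MvPolynomial σ R} {n : ℕ} (hP : P.IsHomogeneous n)
    (f : (σ → R) →ₗ[R] (σ → R)) : (linearSubst f P).IsHomogeneous n := by
  simpa only [one_mul, linearSubst] using!
    hP.aeval _ (LinearMap.toMatrix' f).toMvPolynomial_isHomogeneous

lemma linearSubst_linearSubst (f g : (σ → R) →ₗ[R] (σ → R)) (P : MvPolynomial σ R) :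
    linearSubst g (linearSubst f P) = linearSubst (f ∘ₗ g) P := by
  simp only [linearSubst, bind₁_bind₁, LinearMap.toMatrix'_comp, ← Matrix.toMvPolynomial_mul]

lemma linearSubst_symm_linearSubst (e : (σ → R) ≃ₗ[R] (σ → R)) (P : MvPolynomial σ R) :
    linearSubst e.symm.toLinearMap (linearSubst e.toLinearMap P) = P := by
  rw [linearSubst_linearSubst, LinearEquiv.comp_symm]
  simp [linearSubst]

lemma linearSubst_dvd_linearSubst_iff (e : (σ → R) ≃ₗ[R] (σ → R)) {P Q : MvPolynomial σ R} :
    linearSubst e.toLinearMap P ∣ linearSubst e.toLinearMap Q ↔ P ∣ Q := by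
  refine ⟨fun h => ?_, map_dvd _⟩
  simpa only [linearSubst_symm_linearSubst] using map_dvd (linearSubst e.symm.toLinearMap) h

open scoped Pointwise in
lemma smul_projZeroLocus_linearSubst {F : Type*} [Field F] {P : MvPolynomial σ F} {n : ℕ}
    (hP : P.IsHomogeneous n) (e : (σ → F) ≃ₗ[F] (σ → F)) :
    e • projZeroLocus (linearSubst e.toLinearMap P) = projZeroLocus P := by
  ext x
  rw [Set.mem_smul_set_iff_inv_smul_mem]
  induction x using Projectivization.ind with
  | h v hv =>
    rw [Projectivization.smul_mk, mk_mem_projZeroLocus (isHomogeneous_linearSubst hP _),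
      mk_mem_projZeroLocus hP, eval_linearSubst, LinearEquiv.coe_coe, ← LinearEquiv.smul_def,
      smul_inv_smul]

end LinearSubstitution

section BinaryForms

variable {R : Type*} [CommRing R]

/-- The binary quadratic form `a z² + b z t + c t²` with values in an algebra over the ring of
coefficients; in particular `z` and `t` may be polynomials. -/
def binaryForm {S : Type*} [CommRing S] [Algebra R S] (a b c : R) (z t : S) : S :=
  a • z ^ 2 + b • (z * t) + c • t ^ 2

/-- The binary quadratic form `a z² + b z t + c t²` has no nontrivial zero over its own ring of
coefficients. -/
def IsAnisotropicBinary (a b c : R) : Prop := ∀ z t : R, binaryForm a b c z t = 0 → z = 0 ∧ t = 0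

lemma map_binaryForm {S T : Type*} [CommRing S] [Algebra R S] [CommRing T] [Algebra R T]
    (g : S →ₐ[R] T) (a b c : R) (z t : S) :
    g (binaryForm a b c z t) = binaryForm a b c (g z) (g t) := by
  simp [binaryForm]

lemma IsAnisotropicBinary.ne_zero [Nontrivial R] {a b c : R} (h : IsAnisotropicBinary a b c) :
    a ≠ 0 := fun ha => one_ne_zero (h 1 0 (by simp [binaryForm, ha])).1

end BinaryForms

section QuadraticForms

lemma exists_quadraticForm_of_isHomogeneous {σ R : Type*} [DecidableEq σ] [CommRing R]
    {P : MvPolynomial σ R} (hP : P.IsHomogeneous 2) :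
    ∃ Q : QuadraticForm R (σ → R), (∀ v, Q v = eval v P) ∧
      ∀ v k, QuadraticMap.polar Q v (Pi.single k 1) = eval v (pderiv k P) := by
  have mem_span : P ∈ homogeneousSubmodule σ R 1 ^ 2 := by rwa [homogeneousSubmodule_one_pow]
  rw [homogeneousSubmodule_one_eq_span_X, pow_two, Submodule.span_mul_span] at mem_span
  clear hP
  induction mem_span using Submodule.span_induction with
  | mem x hx =>
    obtain ⟨_, ⟨i, rfl⟩, _, ⟨j, rfl⟩, rfl⟩ := hx
    refine ⟨QuadraticMap.proj i j, fun v => by simp, fun v k => ?_⟩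
    simp only [QuadraticMap.polar, QuadraticMap.proj_apply, Pi.add_apply, Derivation.leibniz,
      pderiv_X, smul_eq_mul, map_add, map_mul, eval_X]
    simp only [Pi.single_apply, apply_ite (eval v), map_one, map_zero, eq_comm (b := k)]
    split_ifs <;> ring
  | zero => exact ⟨0, by simp, by simp [QuadraticMap.polar]⟩
  | add P₁ P₂ _ _ h₁ h₂ =>
    obtain ⟨Q₁, eval₁, polar₁⟩ := h₁
    obtain ⟨Q₂, eval₂, polar₂⟩ := h₂
    exact ⟨Q₁ + Q₂, by simp [eval₁, eval₂], by simp [QuadraticMap.polar_add, polar₁, polar₂]⟩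
  | smul r P _ h =>
    obtain ⟨Q, eval_eq, polar_eq⟩ := h
    exact ⟨r • Q, by simp [eval_eq], by simp [QuadraticMap.polar_smul, polar_eq]⟩

variable {F V : Type*} [Field F] [AddCommGroup V] [Module F V] {Q : QuadraticForm F V}

lemma quadraticForm_map_smul_add_smul (Q : QuadraticForm F V) (u v : V) (x y : F) :
    Q (x • u + y • v) = binaryForm (Q u) (QuadraticMap.polar Q u v) (Q v) x y := by
  rw [QuadraticMap.map_add Q, QuadraticMap.map_smul, QuadraticMap.map_smul,
    QuadraticMap.polar_smul_left, QuadraticMap.polar_smul_right]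
  simp only [binaryForm, smul_eq_mul]
  ring

/-- Two isotropic vectors which together span a hyperbolic plane. -/
structure IsHyperbolicPair (Q : QuadraticForm F V) (p f : V) : Prop where
  map_left : Q p = 0
  map_right : Q f = 0
  polar_eq_one : QuadraticMap.polar Q p f = 1

lemma exists_isHyperbolicPair {p e : V} (hp : Q p = 0) (he : QuadraticMap.polar Q p e ≠ 0) :
    ∃ f, IsHyperbolicPair Q p f := by
  obtain ⟨e', he'⟩ : ∃ e', QuadraticMap.polar Q p e' = 1 :=
    ⟨(QuadraticMap.polar Q p e)⁻¹ • e, by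
      rw [QuadraticMap.polar_smul_right, smul_eq_mul, inv_mul_cancel₀ he]⟩
  refine ⟨e' + (-Q e') • p, hp, ?_, ?_⟩
  · rw [QuadraticMap.map_add Q, QuadraticMap.map_smul, QuadraticMap.polar_smul_right,
      QuadraticMap.polar_comm, he', hp]
    simp
  · rw [QuadraticMap.polar_add_right, QuadraticMap.polar_smul_right, QuadraticMap.polar_self, he',
      hp]
    simp

/-- The orthogonal complement of `p` and `f` for the polar form of `Q`. -/
def orthogonalPair (Q : QuadraticForm F V) (p f : V) : Submodule F V :=
  LinearMap.ker (Q.polarBilin p) ⊓ LinearMap.ker (Q.polarBilin f)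

lemma mem_orthogonalPair {p f w : V} :
    w ∈ orthogonalPair Q p f ↔ QuadraticMap.polar Q p w = 0 ∧ QuadraticMap.polar Q f w = 0 := by
  simp [orthogonalPair]

namespace IsHyperbolicPair

variable {p f : V} (h : IsHyperbolicPair Q p f)
include h

lemma polar_left_self : QuadraticMap.polar Q p p = 0 := by
  rw [QuadraticMap.polar_self, h.map_left, smul_zero]

lemma polar_right_self : QuadraticMap.polar Q f f = 0 := by
  rw [QuadraticMap.polar_self, h.map_right, smul_zero]

lemma polar_symm_eq_one : QuadraticMap.polar Q f p = 1 := by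
  rw [QuadraticMap.polar_comm, h.polar_eq_one]

lemma finrank_orthogonalPair_add_two [FiniteDimensional F V] :
    Module.finrank F (orthogonalPair Q p f) + 2 = Module.finrank F V := by
  have surjective : Function.Surjective ((Q.polarBilin p).prod (Q.polarBilin f)) := fun ⟨x, y⟩ =>
    ⟨x • f + y • p, by
      simp [h.polar_eq_one, h.polar_left_self, h.polar_right_self, h.polar_symm_eq_one]⟩
  have := LinearMap.finrank_range_add_finrank_ker ((Q.polarBilin p).prod (Q.polarBilin f))
  rw [LinearMap.range_eq_top.mpr surjective, finrank_top, Module.finrank_prod,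
    Module.finrank_self, LinearMap.ker_prod] at this
  rw [orthogonalPair]
  omega

lemma linearIndependent_cons_cons {n : ℕ} {w : Fin n → V} (hw : ∀ i, w i ∈ orthogonalPair Q p f)
    (hli : LinearIndependent F w) :
    LinearIndependent F (Fin.cons p (Fin.cons f w : Fin (n + 1) → V) : Fin (n + 2) → V) := by
  have hw' := fun i => mem_orthogonalPair.mp (hw i)
  refine linearIndependent_finCons.mpr ⟨linearIndependent_finCons.mpr ⟨hli, fun hf => ?_⟩,
    fun hp => ?_⟩
  · have span_le : Submodule.span F (Set.range w) ≤ LinearMap.ker (Q.polarBilin p) :=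
      Submodule.span_le.mpr (Set.range_subset_iff.mpr fun i => (hw' i).1)
    have : QuadraticMap.polar Q p f = 0 := span_le hf
    simp [h.polar_eq_one] at this
  · have span_le : Submodule.span F (Set.range (Fin.cons f w : Fin (n + 1) → V)) ≤
        LinearMap.ker (Q.polarBilin f) :=
      Submodule.span_le.mpr (Set.range_subset_iff.mpr
        (Fin.cases h.polar_right_self fun i => (hw' i).2))
    have : QuadraticMap.polar Q f p = 0 := span_le hp
    simp [h.polar_symm_eq_one] at this

lemma map_smul_add_smul_add {w : V} (hw : w ∈ orthogonalPair Q p f) (x y : F) :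
    Q (x • p + y • f + w) = x * y + Q w := by
  obtain ⟨hpw, hfw⟩ := mem_orthogonalPair.mp hw
  rw [QuadraticMap.map_add Q, quadraticForm_map_smul_add_smul, QuadraticMap.polar_add_left,
    QuadraticMap.polar_smul_left, QuadraticMap.polar_smul_left, hpw, hfw, h.map_left, h.map_right,
    h.polar_eq_one]
  simp [binaryForm]

/-- Otherwise `p` and `w` would span a line on which `Q` vanishes. -/
lemma eq_zero_of_map_eq_zero
    (hline : ¬ ∃ u w : V, LinearIndependent F ![u, w] ∧ ∀ x y : F, Q (x • u + y • w) = 0)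
    {w : V} (hw : w ∈ orthogonalPair Q p f) (hQw : Q w = 0) : w = 0 := by
  by_contra hne
  refine hline ⟨p, w, ?_, fun x y => ?_⟩
  · have hli := h.linearIndependent_cons_cons (w := ![w]) (by simpa using hw)
      (LinearIndependent.of_subsingleton (0 : Fin 1) hne)
    convert hli.comp ![0, 2] (by decide) using 1
    ext i
    fin_cases i <;> rfl
  · rw [quadraticForm_map_smul_add_smul, (mem_orthogonalPair.mp hw).1, h.map_left, hQw]
    simp [binaryForm]

lemma exists_linearEquiv_map_eq (hV : Module.finrank F V = 4)
    (hline : ¬ ∃ u w : V, LinearIndependent F ![u, w] ∧ ∀ x y : F, Q (x • u + y • w) = 0) :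
    ∃ (e : (Fin 4 → F) ≃ₗ[F] V) (a b c : F), IsAnisotropicBinary a b c ∧ e (Pi.single 0 1) = p ∧
      ∀ v, Q (e v) = v 0 * v 1 + binaryForm a b c (v 2) (v 3) := by
  have : FiniteDimensional F V := Module.finite_of_finrank_pos (by omega)
  have finrank_eq : Module.finrank F (orthogonalPair Q p f) = 2 := by
    have := h.finrank_orthogonalPair_add_two
    omega
  let w := Module.finBasisOfFinrankEq F (orthogonalPair Q p f) finrank_eq
  have hli := h.linearIndependent_cons_cons (fun i => (w i).2)
    (w.linearIndependent.map' (Submodule.subtype _) (Submodule.ker_subtype _))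
  let e := (basisOfLinearIndependentOfCardEqFinrank hli (by simp [hV])).equivFun.symm
  have e_apply (v) :
      e v = v 0 • p + v 1 • f + (v 2 • w 0 + v 3 • w 1 : orthogonalPair Q p f) := by
    rw [Module.Basis.equivFun_symm_apply, coe_basisOfLinearIndependentOfCardEqFinrank,
      Fin.sum_univ_four, add_assoc]
    rfl
  refine ⟨e, Q (w 0), QuadraticMap.polar Q (w 0) (w 1), Q (w 1), fun z t hzt => ?_, ?_,
    fun v => ?_⟩
  · have hzero : z • w 0 + t • w 1 = 0 := Subtype.ext <|
      h.eq_zero_of_map_eq_zero hline (Submodule.coe_mem _) <| by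
        simpa [quadraticForm_map_smul_add_smul] using hzt
    have := Fintype.linearIndependent_iff.mp w.linearIndependent ![z, t] (by simpa using hzero)
    exact ⟨this 0, this 1⟩
  · simp [e_apply]
  · rw [e_apply, h.map_smul_add_smul_add (Submodule.coe_mem _)]
    simp [quadraticForm_map_smul_add_smul]

end IsHyperbolicPair

end QuadraticForms

section NormalForm

variable {R S : Type*} [CommRing R] [CommRing S] [Algebra R S]

/-- The quadratic form `x y + (a z² + b z t + c t²)` to which elliptic quadrics are reduced. -/
def normalForm (a b c : R) : MvPolynomial (Fin 4) R := X 0 * X 1 + binaryForm a b c (X 2) (X 3)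

/-- The point `(-(a z² + b z t + c t²) : 1 : z : t)` of the quadric `normalForm a b c`: this is the
inverse of the projection from `(1 : 0 : 0 : 0)`. -/
def chart (a b c : R) (z t : S) : Fin 4 → S := ![-binaryForm a b c z t, 1, z, t]

lemma aeval_normalForm (a b c : R) (v : Fin 4 → S) :
    aeval v (normalForm a b c) = v 0 * v 1 + binaryForm a b c (v 2) (v 3) := by
  simp [normalForm, map_binaryForm]

lemma eval_normalForm (a b c : R) (v : Fin 4 → R) :
    eval v (normalForm a b c) = v 0 * v 1 + binaryForm a b c (v 2) (v 3) :=
  aeval_normalForm a b c v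

lemma isHomogeneous_normalForm (a b c : R) : (normalForm a b c).IsHomogeneous 2 := by
  have isHomogeneous_mul (i j : Fin 4) : (X i * X j : MvPolynomial (Fin 4) R).IsHomogeneous 2 :=
    (isHomogeneous_X R i).mul (isHomogeneous_X R j)
  simp only [normalForm, binaryForm, smul_eq_C_mul, pow_two]
  exact (isHomogeneous_mul 0 1).add
    ((((isHomogeneous_mul 2 2).C_mul a).add ((isHomogeneous_mul 2 3).C_mul b)).add
      ((isHomogeneous_mul 3 3).C_mul c))

lemma map_comp_chart {T : Type*} [CommRing T] [Algebra R T] (g : S →ₐ[R] T) (a b c : R) (z t : S) :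
    g ∘ chart a b c z t = chart a b c (g z) (g t) := by
  ext i
  fin_cases i <;> simp [chart, map_binaryForm]

lemma map_aeval_chart {T : Type*} [CommRing T] [Algebra R T] (g : S →ₐ[R] T) (a b c : R) (z t : S)
    (G : MvPolynomial (Fin 4) R) :
    g (aeval (chart a b c z t) G) = aeval (chart a b c (g z) (g t)) G := by
  rw [← map_comp_chart, ← AlgHom.comp_apply, comp_aeval]
  rfl

lemma eq_smul_chart {a b c : R} {v : Fin 4 → S} {y : S}
    (hv : aeval v (normalForm a b c) = 0) (hy : v 1 * y = 1) :
    v = v 1 • chart a b c (y * v 2) (y * v 3) := by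
  rw [aeval_normalForm] at hv
  have binaryForm_smul : binaryForm a b c (y * v 2) (y * v 3) =
      y ^ 2 * binaryForm a b c (v 2) (v 3) := by
    simp only [binaryForm, Algebra.smul_def]
    ring
  ext i
  fin_cases i
  · simp only [chart, binaryForm_smul, Fin.zero_eta, Pi.smul_apply, Matrix.cons_val_zero,
      smul_eq_mul]
    linear_combination (y ^ 2 * v 1) * hv - v 0 * (1 + v 1 * y) * hy
  · simp [chart]
  · simp [chart, ← mul_assoc, hy]
  · simp [chart, ← mul_assoc, hy]

lemma exists_pow_mul_aeval_eq_zero {a b c : R} {G : MvPolynomial (Fin 4) R} {d : ℕ}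
    (hG : G.IsHomogeneous d)
    (h : aeval (chart a b c (X 0 : MvPolynomial (Fin 2) R) (X 1)) G = 0)
    {v : Fin 4 → S} (hv : aeval v (normalForm a b c) = 0) : ∃ n, v 1 ^ n * aeval v G = 0 := by
  let toLoc := IsScalarTower.toAlgHom R S (Localization.Away (v 1))
  have aeval_toLoc (P : MvPolynomial (Fin 4) R) : aeval (toLoc ∘ v) P = toLoc (aeval v P) :=
    aeval_algebraMap_apply _ v P
  have aeval_chart_eq_zero (z t : Localization.Away (v 1)) : aeval (chart a b c z t) G = 0 := by
    have := congrArg (aeval ![z, t]) h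
    rwa [map_aeval_chart, map_zero, aeval_X, aeval_X] at this
  have toLoc_eq_zero : toLoc (aeval v G) = toLoc 0 := by
    have hv_toLoc : aeval (toLoc ∘ v) (normalForm a b c) = 0 := by rw [aeval_toLoc, hv, map_zero]
    rw [← aeval_toLoc, eq_smul_chart hv_toLoc (IsLocalization.Away.mul_invSelf (v 1)),
      aeval_smul_of_isHomogeneous hG, aeval_chart_eq_zero, mul_zero, map_zero]
  simpa only [mul_zero] using IsLocalization.Away.exists_of_eq (v 1) toLoc_eq_zero

lemma normalForm_dvd_of_aeval_chart_eq_zero {F : Type*} [Field F] {a b c : F} (ha : a ≠ 0)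
    {G : MvPolynomial (Fin 4) F} {d : ℕ} (hG : G.IsHomogeneous d)
    (h : aeval (chart a b c (X 0 : MvPolynomial (Fin 2) F) (X 1)) G = 0) :
    normalForm a b c ∣ G := by
  let mk := Ideal.Quotient.mkₐ F (Ideal.span {normalForm a b c})
  have aeval_mk (P : MvPolynomial (Fin 4) F) : aeval (mk ∘ X) P = mk P :=
    DFunLike.congr_fun (aeval_unique mk).symm P
  have mk_eq_zero_iff (P : MvPolynomial (Fin 4) F) : mk P = 0 ↔ normalForm a b c ∣ P :=
    Ideal.Quotient.eq_zero_iff_dvd _ P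
  obtain ⟨n, hn⟩ := exists_pow_mul_aeval_eq_zero hG h
    ((aeval_mk _).trans ((mk_eq_zero_iff _).mpr dvd_rfl))
  rw [aeval_mk, Function.comp_apply, ← map_pow, ← map_mul, mk_eq_zero_iff] at hn
  have not_X_dvd : ¬ X 1 ∣ normalForm a b c := by
    rintro ⟨P, hP⟩
    have := congrArg (eval ![0, 0, 1, 0]) hP
    simp [eval_normalForm, binaryForm, ha] at this
  have isRelPrime : IsRelPrime (X 1 ^ n) (normalForm a b c) :=
    (X_prime.irreducible.isRelPrime_iff_not_dvd.mpr not_X_dvd).pow_left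
  exact isRelPrime.symm.dvd_of_dvd_mul_left hn

lemma IsEllipticQuadric.exists_linearSubst_eq_normalForm {F : Type} [Field F]
    {P : MvPolynomial (Fin 4) F} (hP : IsEllipticQuadric F P) {v : Fin 4 → F} (hv : v ≠ 0)
    (hPv : eval v P = 0) :
    ∃ (e : (Fin 4 → F) ≃ₗ[F] (Fin 4 → F)) (a b c : F), IsAnisotropicBinary a b c ∧
      e (Pi.single 0 1) = v ∧ linearSubst e.toLinearMap P = normalForm a b c := by
  obtain ⟨-, homogeneous, smooth, hline⟩ := hP
  obtain ⟨Q, Q_apply, polar_eq⟩ := exists_quadraticForm_of_isHomogeneous homogeneous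
  have aeval_algebraMap (G : MvPolynomial (Fin 4) F) :
      aeval (algebraMap F (AlgebraicClosure F) ∘ v) G = algebraMap F _ (eval v G) :=
    aeval_algebraMap_apply _ v G
  obtain ⟨i, hi⟩ := smooth (algebraMap F _ ∘ v)
    (by simpa [funext_iff] using hv) (by rw [aeval_algebraMap, hPv, map_zero])
  have polar_ne_zero : QuadraticMap.polar Q v (Pi.single i 1) ≠ 0 := by
    rw [polar_eq]
    rintro hzero
    exact hi (by rw [aeval_algebraMap, hzero, map_zero])
  obtain ⟨f, hf⟩ := exists_isHyperbolicPair ((Q_apply v).trans hPv) polar_ne_zero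
  simp only [← Q_apply] at hline
  obtain ⟨e, a, b, c, anisotropic, e_single, Q_e⟩ := hf.exists_linearEquiv_map_eq (by simp) hline
  refine ⟨e, a, b, c, anisotropic, e_single,
    (isHomogeneous_linearSubst homogeneous _).funext_of_le_card (isHomogeneous_normalForm a b c)
      (fun w => ?_) (Cardinal.two_le_iff.mpr (exists_pair_ne F))⟩
  rw [eval_linearSubst, LinearEquiv.coe_coe, ← Q_apply, Q_e, eval_normalForm]

end NormalForm

section KroneckerSubstitution

variable {R : Type*} [CommSemiring R]

/-- The Kronecker substitution `P(u, v) ↦ P(u, u ^ q)`. -/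
def kroneckerSubst (q : ℕ) : MvPolynomial (Fin 2) R →ₐ[R] Polynomial R :=
  aeval ![Polynomial.X, Polynomial.X ^ q]

lemma kroneckerSubst_eq_sum (q : ℕ) (P : MvPolynomial (Fin 2) R) :
    kroneckerSubst q P = ∑ m ∈ P.support, Polynomial.monomial (m 0 + q * m 1) (coeff m P) := by
  rw [kroneckerSubst, aeval_def, eval₂_eq']
  refine Finset.sum_congr rfl fun m _ => ?_
  simp [Fin.prod_univ_two, ← Polynomial.C_mul_X_pow_eq_monomial, pow_add, pow_mul]

lemma natDegree_kroneckerSubst_le (q : ℕ) (P : MvPolynomial (Fin 2) R) :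
    (kroneckerSubst q P).natDegree ≤ P.degreeOf 0 + q * P.degreeOf 1 := by
  rw [kroneckerSubst_eq_sum]
  refine Polynomial.natDegree_sum_le_of_forall_le _ _ fun m hm =>
    (Polynomial.natDegree_monomial_le _).trans ?_
  gcongr
  exacts [monomial_le_degreeOf 0 hm, monomial_le_degreeOf 1 hm]

lemma eval_kroneckerSubst (q : ℕ) (P : MvPolynomial (Fin 2) R) (u : R) :
    (kroneckerSubst q P).eval u = eval ![u, u ^ q] P := by
  rw [← Polynomial.coe_aeval_eq_eval, kroneckerSubst, ← AlgHom.comp_apply, comp_aeval,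
    ← MvPolynomial.aeval_eq_eval]
  congr 2
  ext i
  fin_cases i <;> simp

/-- The exponents of a monomial of `P` are the base `q` digits of the exponent it is sent to. -/
lemma kroneckerSubst_ne_zero {q : ℕ} {P : MvPolynomial (Fin 2) R} (hq : P.degreeOf 0 < q)
    (hP : P ≠ 0) : kroneckerSubst q P ≠ 0 := by
  obtain ⟨m, hm⟩ := ne_zero_iff.mp hP
  have digit_lt {n : Fin 2 →₀ ℕ} (hn : n ∈ P.support) : n 0 < q :=
    (monomial_le_degreeOf 0 hn).trans_lt hq
  have injOn : ∀ n ∈ P.support, n 0 + q * n 1 = m 0 + q * m 1 → n = m := fun n hn heq => by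
    have mod_eq := congrArg (· % q) heq
    have div_eq := congrArg (· / q) heq
    simp only [Nat.add_mul_mod_self_left, Nat.mod_eq_of_lt (digit_lt hn),
      Nat.mod_eq_of_lt (digit_lt (mem_support_iff.mpr hm))] at mod_eq
    simp only [mod_eq, Nat.add_right_inj, Nat.add_mul_div_left _ _ (Nat.zero_lt_of_lt hq)] at div_eq
    ext i
    fin_cases i
    exacts [mod_eq, div_eq]
  have coeff_eq : (kroneckerSubst q P).coeff (m 0 + q * m 1) = coeff m P := by
    rw [kroneckerSubst_eq_sum, Polynomial.finsetSum_coeff, Finset.sum_eq_single_of_mem m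
      (mem_support_iff.mpr hm) fun n hn hne => Polynomial.coeff_monomial_of_ne _ fun heq =>
        hne (injOn n hn heq.symm), Polynomial.coeff_monomial_same]
  exact fun hzero => hm (by rw [← coeff_eq, hzero, Polynomial.coeff_zero])

end KroneckerSubstitution

section Rulings

lemma degreeOf_aeval_le_of_isHomogeneous {σ τ R S : Type*} [CommSemiring R] [CommSemiring S]
    [Algebra R S] {G : MvPolynomial σ R} {d : ℕ} (hG : G.IsHomogeneous d)
    {f : σ → MvPolynomial τ S} {i : τ} {k : ℕ} (hf : ∀ j, (f j).degreeOf i ≤ k) :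
    (aeval f G).degreeOf i ≤ d * k := by
  rw [aeval_def, eval₂_eq]
  refine (degreeOf_sum_le _ _ _).trans (Finset.sup_le fun m hm => ?_)
  rw [IsScalarTower.algebraMap_apply R S (MvPolynomial τ S), algebraMap_eq,
    hG.degree_eq_sum_deg_support hm, Finset.sum_mul]
  exact (degreeOf_C_mul_le _ _ _).trans <| (degreeOf_prod_le _ _ _).trans <|
    Finset.sum_le_sum fun j _ => (degreeOf_pow_le _ _ _).trans (Nat.mul_le_mul_left _ (hf j))

variable {F K : Type*} [Field F] [Field K] [Algebra F K]

/-- The form `a z² + b z t + c t²` is `a (z + ω t) (z + ω' t)` with `ω ≠ ω'`. -/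
structure IsSplitBy (a b c : F) (ω ω' : K) : Prop where
  ne : ω ≠ ω'
  smul_add : a • (ω + ω') = algebraMap F K b
  smul_mul : a • (ω * ω') = algebraMap F K c

/-- The polynomials in `u` and `v` which express `z` and `t` when `u = z + ω t` and `v = z + ω' t`.
On the quadric `normalForm a b c` the functions `u` and `v` parametrise the two rulings. -/
def rulingCoord (ω ω' : K) : Fin 2 → MvPolynomial (Fin 2) K :=
  ![C (ω - ω')⁻¹ * (C ω * X 1 - C ω' * X 0), C (ω - ω')⁻¹ * (X 0 - X 1)]

/-- The form `G` on the affine chart of the quadric, in the coordinates of the two rulings. -/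
def rulingPullback (a b c : F) (ω ω' : K) (G : MvPolynomial (Fin 4) F) : MvPolynomial (Fin 2) K :=
  aeval (chart a b c (rulingCoord ω ω' 0) (rulingCoord ω ω' 1)) G

namespace IsSplitBy

variable {a b c : F} {ω ω' : K} (h : IsSplitBy a b c ω ω')
include h

lemma binaryForm_eq {S : Type*} [CommRing S] [Algebra F S] [Algebra K S] [IsScalarTower F K S]
    (z t : S) : binaryForm a b c z t = a • ((z + ω • t) * (z + ω' • t)) := by
  have smul_add := congrArg (algebraMap K S) h.smul_add
  have smul_mul := congrArg (algebraMap K S) h.smul_mul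
  simp only [Algebra.smul_def, map_mul, map_add, ← IsScalarTower.algebraMap_apply]
    at smul_add smul_mul
  simp only [binaryForm, Algebra.smul_def]
  linear_combination (-(z * t)) * smul_add - t ^ 2 * smul_mul

lemma C_inv_sub_mul : (C (ω - ω')⁻¹ * (C ω - C ω') : MvPolynomial (Fin 2) K) = 1 := by
  rw [← C_sub, ← C_mul, inv_mul_cancel₀ (sub_ne_zero.mpr h.ne), C_1]

lemma rulingCoord_add_smul_left : rulingCoord ω ω' 0 + ω • rulingCoord ω ω' 1 = X 0 := by
  simp only [rulingCoord, smul_eq_C_mul, Matrix.cons_val_zero, Matrix.cons_val_one]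
  linear_combination X 0 * h.C_inv_sub_mul

lemma rulingCoord_add_smul_right : rulingCoord ω ω' 0 + ω' • rulingCoord ω ω' 1 = X 1 := by
  simp only [rulingCoord, smul_eq_C_mul, Matrix.cons_val_zero, Matrix.cons_val_one]
  linear_combination X 1 * h.C_inv_sub_mul

lemma degreeOf_rulingPullback_le {G : MvPolynomial (Fin 4) F} {d : ℕ} (hG : G.IsHomogeneous d)
    (i : Fin 2) : (rulingPullback a b c ω ω' G).degreeOf i ≤ d := by
  have degreeOf_X_le (k : Fin 2) : (X k : MvPolynomial (Fin 2) K).degreeOf i ≤ 1 := by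
    rw [degreeOf_X]
    split_ifs <;> simp
  have degreeOf_X_mul_X_le : (X 0 * X 1 : MvPolynomial (Fin 2) K).degreeOf i ≤ 1 := by
    refine (degreeOf_mul_le _ _ _).trans ?_
    fin_cases i <;> simp [degreeOf_X]
  rw [rulingPullback, ← mul_one d]
  refine degreeOf_aeval_le_of_isHomogeneous hG fun j => ?_
  fin_cases j
  · simp only [chart, h.binaryForm_eq, h.rulingCoord_add_smul_left, h.rulingCoord_add_smul_right]
    rw [← algebraMap_smul K, smul_eq_C_mul]
    exact (degreeOf_neg _ _).trans_le ((degreeOf_C_mul_le _ _ _).trans degreeOf_X_mul_X_le)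
  · simp [chart, degreeOf_one]
  · exact (degreeOf_C_mul_le _ _ _).trans <| (degreeOf_sub_le _ _ _).trans <|
      max_le ((degreeOf_C_mul_le _ _ _).trans (degreeOf_X_le 1))
        ((degreeOf_C_mul_le _ _ _).trans (degreeOf_X_le 0))
  · exact (degreeOf_C_mul_le _ _ _).trans <| (degreeOf_sub_le _ _ _).trans <|
      max_le (degreeOf_X_le 0) (degreeOf_X_le 1)

lemma aeval_rulingCoord {S : Type*} [CommRing S] [Algebra K S] (z t : S) :
    aeval ![z + ω • t, z + ω' • t] (rulingCoord ω ω' 0) = z ∧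
      aeval ![z + ω • t, z + ω' • t] (rulingCoord ω ω' 1) = t := by
  have inv_sub_mul := congrArg (algebraMap K S) (inv_mul_cancel₀ (sub_ne_zero.mpr h.ne))
  simp only [map_mul, map_sub, map_one] at inv_sub_mul
  constructor
  · simp only [rulingCoord, Algebra.smul_def, Matrix.cons_val_zero, Matrix.cons_val_one, map_mul,
      map_sub, algHom_C, aeval_X]
    linear_combination z * inv_sub_mul
  · simp only [rulingCoord, Algebra.smul_def, Matrix.cons_val_zero, Matrix.cons_val_one, map_mul,
      map_sub, algHom_C, aeval_X]
    linear_combination t * inv_sub_mul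

lemma aeval_rulingPullback {S : Type*} [CommRing S] [Algebra F S] [Algebra K S]
    [IsScalarTower F K S] (G : MvPolynomial (Fin 4) F) (z t : S) :
    aeval ![z + ω • t, z + ω' • t] (rulingPullback a b c ω ω' G) = aeval (chart a b c z t) G := by
  have := map_aeval_chart ((aeval ![z + ω • t, z + ω' • t]).restrictScalars F) a b c
    (rulingCoord ω ω' 0) (rulingCoord ω ω' 1) G
  simp only [AlgHom.restrictScalars_apply, h.aeval_rulingCoord] at this
  exact this

lemma rulingPullback_ne_zero (ha : a ≠ 0) {G : MvPolynomial (Fin 4) F} {d : ℕ}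
    (hG : G.IsHomogeneous d) (hdvd : ¬ normalForm a b c ∣ G) :
    rulingPullback a b c ω ω' G ≠ 0 := fun hzero => by
  have aeval_chart_eq_zero : aeval (chart a b c (X 0 : MvPolynomial (Fin 2) K) (X 1)) G = 0 := by
    rw [← h.aeval_rulingPullback, hzero, map_zero]
  refine hdvd (normalForm_dvd_of_aeval_chart_eq_zero ha hG ?_)
  refine map_injective (algebraMap F K) (algebraMap F K).injective ?_
  have := map_aeval_chart (mapAlgHom (Algebra.ofId F K)) a b c (X 0 : MvPolynomial (Fin 2) F)
    (X 1) G
  simpa [aeval_chart_eq_zero] using this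

end IsSplitBy

end Rulings

section FiniteField

variable {F K : Type*} [Field F] [Fintype F] [Field K] [Algebra F K]

lemma mem_range_algebraMap_of_pow_card_eq {x : K} (hx : x ^ Fintype.card F = x) :
    x ∈ Set.range (algebraMap F K) := by
  have splits : (Polynomial.X ^ Fintype.card F - Polynomial.X : Polynomial F).Splits := by
    rw [Polynomial.splits_iff_card_roots, FiniteField.roots_X_pow_card_sub_X, ← Finset.card_def,
      Finset.card_univ, FiniteField.X_pow_card_sub_X_natDegree_eq _ Fintype.one_lt_card]
  have mem_roots :
      x ∈ ((Polynomial.X ^ Fintype.card F - Polynomial.X : Polynomial F).map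
        (algebraMap F K)).roots := by
    simp [Polynomial.mem_roots', hx, FiniteField.X_pow_card_sub_X_ne_zero K Fintype.one_lt_card]
  rw [splits.roots_map, FiniteField.roots_X_pow_card_sub_X, Multiset.mem_map] at mem_roots
  obtain ⟨y, -, hy⟩ := mem_roots
  exact ⟨y, hy⟩

lemma IsAnisotropicBinary.exists_isSplitBy_pow_card [IsAlgClosed K] {a b c : F}
    (h : IsAnisotropicBinary a b c) :
    ∃ ω : K, IsSplitBy a b c ω (ω ^ Fintype.card F) := by
  obtain ⟨ω, hω⟩ : ∃ ω : K, a • ω ^ 2 + algebraMap F K c = b • ω := by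
    obtain ⟨ω, hω⟩ := IsAlgClosed.exists_root (k := K)
      (.C (algebraMap F K a) * .X ^ 2 + .C (algebraMap F K (-b)) * .X + .C (algebraMap F K c))
      (by rw [Polynomial.degree_quadratic (by simpa using h.ne_zero)]; simp)
    have eval_eq_zero :
        algebraMap F K a * ω ^ 2 - algebraMap F K b * ω + algebraMap F K c = 0 := by
      simpa [sub_eq_add_neg] using hω
    refine ⟨ω, ?_⟩
    simp only [Algebra.smul_def]
    linear_combination eval_eq_zero
  have ω_ne : ω ≠ ω ^ Fintype.card F := fun heq => by
    obtain ⟨x, rfl⟩ := mem_range_algebraMap_of_pow_card_eq (F := F) heq.symm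
    have isotropic : binaryForm a b c (-x) 1 = 0 := (algebraMap F K).injective <| by
      simp only [Algebra.smul_def] at hω
      simp only [binaryForm, smul_eq_mul, map_add, map_mul, map_pow, map_neg, map_one, map_zero]
      linear_combination hω
    exact one_ne_zero (h _ _ isotropic).2
  have hω' : a • (ω ^ Fintype.card F) ^ 2 + algebraMap F K c = b • ω ^ Fintype.card F := by
    have := congrArg (FiniteField.frobeniusAlgHom F K) hω
    simp only [map_add, map_smul, map_pow, AlgHom.commutes] at this
    exact this
  have smul_add : a • (ω + ω ^ Fintype.card F) = algebraMap F K b := by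
    refine mul_left_cancel₀ (sub_ne_zero.mpr ω_ne) ?_
    simp only [Algebra.smul_def] at hω hω' ⊢
    linear_combination hω - hω'
  refine ⟨ω, ω_ne, smul_add, ?_⟩
  simp only [Algebra.smul_def] at hω smul_add ⊢
  linear_combination ω * smul_add - hω

lemma algebraMap_add_smul_pow_card (ω : K) (z t : F) :
    (algebraMap F K z + ω • algebraMap F K t) ^ Fintype.card F =
      algebraMap F K z + ω ^ Fintype.card F • algebraMap F K t := by
  have := map_add (FiniteField.frobeniusAlgHom F K) (algebraMap F K z) (ω • algebraMap F K t)
  simp only [smul_eq_mul, map_mul, AlgHom.commutes] at this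
  exact this

lemma injective_algebraMap_add_smul {ω : K} (hω : ω ≠ ω ^ Fintype.card F) :
    Function.Injective fun w : F × F => algebraMap F K w.1 + ω • algebraMap F K w.2 := by
  rintro ⟨z, t⟩ ⟨z', t'⟩ heq
  have heq_pow := congrArg (· ^ Fintype.card F) heq
  simp only [algebraMap_add_smul_pow_card] at heq_pow
  simp only [smul_eq_mul] at heq heq_pow
  have ht : algebraMap F K t = algebraMap F K t' :=
    mul_left_cancel₀ (sub_ne_zero.mpr hω) (by linear_combination heq - heq_pow)
  rw [ht, add_left_inj] at heq
  exact Prod.ext ((algebraMap F K).injective heq) ((algebraMap F K).injective ht)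

end FiniteField

section PointCount

variable {F : Type*} [Field F]

/-- The point of the quadric `normalForm a b c` with affine coordinates `w` in the chart. -/
def chartPoint (a b c : F) (w : F × F) : ℙ F (Fin 4 → F) :=
  Projectivization.mk F (chart a b c w.1 w.2) fun h => one_ne_zero (congrFun h 1)

/-- The centre `(1 : 0 : 0 : 0)` of the projection which `chartPoint` inverts. -/
def chartCenter (F : Type*) [Field F] : ℙ F (Fin 4 → F) :=
  Projectivization.mk F (Pi.single 0 1) (by simp)

lemma chartPoint_mem_projZeroLocus {a b c : F} {G : MvPolynomial (Fin 4) F} {d : ℕ}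
    (hG : G.IsHomogeneous d) (w : F × F) :
    chartPoint a b c w ∈ projZeroLocus G ↔ eval (chart a b c w.1 w.2) G = 0 :=
  mk_mem_projZeroLocus hG _

lemma chartPoint_mem_projZeroLocus_normalForm (a b c : F) (w : F × F) :
    chartPoint a b c w ∈ projZeroLocus (normalForm a b c) := by
  rw [chartPoint_mem_projZeroLocus (isHomogeneous_normalForm a b c), eval_normalForm]
  simp [chart]

namespace IsAnisotropicBinary

variable {a b c : F} (h : IsAnisotropicBinary a b c)
include h

lemma projZeroLocus_normalForm_subset :
    projZeroLocus (normalForm a b c) ⊆ insert (chartCenter F) (Set.range (chartPoint a b c)) := by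
  intro x hx
  induction x using Projectivization.ind with
  | h v hv =>
    rw [mk_mem_projZeroLocus (isHomogeneous_normalForm a b c)] at hx
    rcases eq_or_ne (v 1) 0 with hv1 | hv1
    · left
      rw [eval_normalForm, hv1, mul_zero, zero_add] at hx
      obtain ⟨hv2, hv3⟩ := h _ _ hx
      refine (Projectivization.mk_eq_mk_iff' F _ _ _ _).mpr ⟨v 0, ?_⟩
      ext i
      fin_cases i <;> simp [hv1, hv2, hv3]
    · right
      refine ⟨((v 1)⁻¹ * v 2, (v 1)⁻¹ * v 3), Eq.symm ?_⟩
      exact (Projectivization.mk_eq_mk_iff' F _ _ _ _).mpr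
        ⟨v 1, (eq_smul_chart hx (mul_inv_cancel₀ hv1)).symm⟩

variable [Fintype F] {G : MvPolynomial (Fin 4) F} {d : ℕ} (hG : G.IsHomogeneous d)

lemma ncard_projZeroLocus_normalForm_le :
    (projZeroLocus (normalForm a b c)).ncard ≤ Fintype.card F ^ 2 + 1 := by
  refine (Set.ncard_le_ncard h.projZeroLocus_normalForm_subset (Set.toFinite _)).trans <|
    (Set.ncard_insert_le _ _).trans <| Nat.add_le_add_right ?_ 1
  rw [← Set.image_univ]
  refine (Set.ncard_image_le (Set.toFinite _)).trans ?_
  rw [Set.ncard_univ, Nat.card_eq_fintype_card, Fintype.card_prod, pow_two]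

include hG

/-- Rational points satisfy `v = u ^ q` in the coordinates of the rulings, so they are roots of the
Kronecker substitution. -/
lemma ncard_setOf_eval_chart_le_of_lt (hdvd : ¬ normalForm a b c ∣ G) (hd : d < Fintype.card F) :
    {w : F × F | eval (chart a b c w.1 w.2) G = 0}.ncard ≤ d * (Fintype.card F + 1) := by
  obtain ⟨ω, hω⟩ := h.exists_isSplitBy_pow_card (K := AlgebraicClosure F)
  let Γ := rulingPullback a b c ω (ω ^ Fintype.card F) G
  have degreeOf_le (i) : Γ.degreeOf i ≤ d := hω.degreeOf_rulingPullback_le hG i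
  have g_ne_zero : kroneckerSubst (Fintype.card F) Γ ≠ 0 :=
    kroneckerSubst_ne_zero ((degreeOf_le 0).trans_lt hd)
      (hω.rulingPullback_ne_zero h.ne_zero hG hdvd)
  have eval_g (w : F × F) : (kroneckerSubst (Fintype.card F) Γ).eval
      (algebraMap F _ w.1 + ω • algebraMap F _ w.2) =
        algebraMap F _ (eval (chart a b c w.1 w.2) G) := by
    rw [eval_kroneckerSubst, algebraMap_add_smul_pow_card, ← MvPolynomial.aeval_eq_eval,
      hω.aeval_rulingPullback]
    exact (map_aeval_chart (Algebra.ofId F (AlgebraicClosure F)) a b c w.1 w.2 G).symm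
  calc {w : F × F | eval (chart a b c w.1 w.2) G = 0}.ncard
      ≤ ((kroneckerSubst (Fintype.card F) Γ).rootSet (AlgebraicClosure F)).ncard := by
        refine Set.ncard_le_ncard_of_injOn _ (fun w hw => ?_)
          (injective_algebraMap_add_smul hω.ne).injOn (Set.toFinite _)
        rw [Polynomial.mem_rootSet_of_ne g_ne_zero, Polynomial.coe_aeval_eq_eval, eval_g,
          Set.mem_ofPred_eq.mp hw, map_zero]
    _ ≤ (kroneckerSubst (Fintype.card F) Γ).natDegree := Polynomial.ncard_rootSet_le _ _
    _ ≤ Γ.degreeOf 0 + Fintype.card F * Γ.degreeOf 1 := natDegree_kroneckerSubst_le _ _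
    _ ≤ d + Fintype.card F * d := by gcongr <;> apply degreeOf_le
    _ = d * (Fintype.card F + 1) := by ring

lemma ncard_setOf_eval_chart_le (hdvd : ¬ normalForm a b c ∣ G) :
    {w : F × F | eval (chart a b c w.1 w.2) G = 0}.ncard ≤ d * (Fintype.card F + 1) := by
  rcases lt_or_ge d (Fintype.card F) with hd | hd
  · exact h.ncard_setOf_eval_chart_le_of_lt hG hdvd hd
  · calc {w : F × F | eval (chart a b c w.1 w.2) G = 0}.ncard
        ≤ Fintype.card F * Fintype.card F := by
          simpa using Set.ncard_le_card {w : F × F | eval (chart a b c w.1 w.2) G = 0}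
      _ ≤ d * (Fintype.card F + 1) := by gcongr; omega

lemma ncard_projZeroLocus_normalForm_inter_le (hdvd : ¬ normalForm a b c ∣ G)
    (hcenter : chartCenter F ∈ projZeroLocus G →
      projZeroLocus (normalForm a b c) ⊆ projZeroLocus G) :
    (projZeroLocus (normalForm a b c) ∩ projZeroLocus G).ncard ≤ d * (Fintype.card F + 1) := by
  have chart_le := h.ncard_setOf_eval_chart_le hG hdvd
  by_cases hmem : chartCenter F ∈ projZeroLocus G
  · have eval_eq_zero (w : F × F) : eval (chart a b c w.1 w.2) G = 0 :=
      (chartPoint_mem_projZeroLocus hG w).mp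
        (hcenter hmem (chartPoint_mem_projZeroLocus_normalForm a b c w))
    simp only [eval_eq_zero, Set.ofPred_true, Set.ncard_univ, Nat.card_eq_fintype_card,
      Fintype.card_prod] at chart_le
    have card_pos := Fintype.card_pos (α := F)
    have card_le : Fintype.card F ≤ d := by
      by_contra! hlt
      nlinarith
    calc _ ≤ (projZeroLocus (normalForm a b c)).ncard :=
          Set.ncard_le_ncard Set.inter_subset_left (Set.toFinite _)
      _ ≤ Fintype.card F ^ 2 + 1 := h.ncard_projZeroLocus_normalForm_le
      _ ≤ d * (Fintype.card F + 1) := by nlinarith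
  · refine le_trans (Set.ncard_le_ncard ?_ (Set.toFinite _)) <|
      (Set.ncard_image_le (f := chartPoint a b c) (Set.toFinite _)).trans chart_le
    rintro x ⟨hx, hxG⟩
    rcases h.projZeroLocus_normalForm_subset hx with rfl | ⟨w, rfl⟩
    · exact absurd hxG hmem
    · exact ⟨w, (chartPoint_mem_projZeroLocus hG w).mp hxG, rfl⟩

end IsAnisotropicBinary

end PointCount

open scoped Pointwise in
theorem stmt_6_general {F : Type} [Field F] [Fintype F] {P : MvPolynomial (Fin 4) F}
    (hP : IsEllipticQuadric F P) {G : MvPolynomial (Fin 4) F} {d : ℕ} (hG : G.IsHomogeneous d)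
    (hdvd : ¬ P ∣ G) :
    {x : ℙ F (Fin 4 → F) | eval x.rep P = 0 ∧ eval x.rep G = 0}.ncard
      ≤ d * (Fintype.card F + 1) := by
  change (projZeroLocus P ∩ projZeroLocus G).ncard ≤ _
  rcases Set.eq_empty_or_nonempty (projZeroLocus P ∩ projZeroLocus G) with hempty | hnonempty
  · simp [hempty]
  obtain ⟨x, hxP, hxG⟩ :
      ∃ x ∈ projZeroLocus P, x ∈ projZeroLocus G → projZeroLocus P ⊆ projZeroLocus G := by
    by_cases hsub : projZeroLocus P ⊆ projZeroLocus G
    · exact ⟨_, hnonempty.some_mem.1, fun _ => hsub⟩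
    · obtain ⟨x, hxP, hxG⟩ := Set.not_subset.mp hsub
      exact ⟨x, hxP, fun hmem => absurd hmem hxG⟩
  obtain ⟨e, a, b, c, anisotropic, e_single, linearSubst_eq⟩ :=
    hP.exists_linearSubst_eq_normalForm x.rep_nonzero hxP
  have smul_P := smul_projZeroLocus_linearSubst hP.2.1 e
  have smul_G := smul_projZeroLocus_linearSubst hG e
  have smul_center : e • chartCenter F = x := by
    rw [chartCenter, Projectivization.smul_mk]
    simp only [LinearEquiv.smul_def, e_single, Projectivization.mk_rep]
  rw [linearSubst_eq] at smul_P
  rw [← linearSubst_dvd_linearSubst_iff e, linearSubst_eq] at hdvd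
  rw [← smul_P, ← smul_G, ← Set.smul_set_inter, Set.ncard_smul_set]
  refine anisotropic.ncard_projZeroLocus_normalForm_inter_le
    (isHomogeneous_linearSubst hG _) hdvd fun hcenter => ?_
  rw [← Set.smul_set_subset_smul_set_iff (a := e), smul_P, smul_G]
  exact hxG (by rwa [← smul_center, ← smul_G, Set.smul_mem_smul_set_iff])

/-- For `q ≥ 5`, a cubic section of an elliptic quadric has at most
`max(3q + 3, min(4q, q + 1 + 4⌊2√q⌋))` rational points.  Here `⌊2√q⌋ = Nat.sqrt (4q)`. -/
theorem stmt_6 (q : ℕ) (hq : IsPrimePow q) (hq5 : 5 ≤ q)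
    (F : Type) [Field F] [Fintype F] (hF : Fintype.card F = q)
    (Fp : MvPolynomial (Fin 4) F) (hX : IsEllipticQuadric F Fp)
    (G : MvPolynomial (Fin 4) F) (hG : G.IsHomogeneous 3) (hGF : ¬ Fp ∣ G) :
    {x : Projectivization F (Fin 4 → F) |
      MvPolynomial.eval x.rep Fp = 0 ∧ MvPolynomial.eval x.rep G = 0}.ncard
        ≤ max (3 * q + 3) (min (4 * q) (q + 1 + 4 * Nat.sqrt (4 * q))) := by
  subst hF
  exact le_max_of_le_left (stmt_6_general hX hG hGF)
end
end
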